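/- Let $1<\alpha,\beta<\infty$ and $0<p\leqslant q<\infty$ with $q\geqslant 2$ and $\beta p\leqslant \alpha q$. Let $0\leqslant r<1$ satisfy $r^2\leqslant \beta p/(\alpha q)$. Then for every function $f$ analytic on the open unit disk $\mathbb{D}$, $\left((\beta-1)\int_{\mathbb{D}}|f(rz)|^q(1-|z|^2)^{\beta-2}\,dA(z)\right)^{1/q}\leqslant\left((\alpha-1)\int_{\mathbb{D}}|f(z)|^p(1-|z|^2)^{\alpha-2}\,dA(z)\right)^{1/p}$, i.e. $\|T_r f\|_{A_\beta^q(\mathbb{D})}\leqslant\|f\|_{A_\alpha^p(\mathbb{D})}$. -/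

import Mathlib

open MeasureTheory Metric

/-- The weighted Bergman measure `dA_α(z) = (α-1)(1-|z|²)^(α-2) dA(z)` on the unit disk,
where `dA = dx dy / π` is the normalized area measure. -/
noncomputable def bergmanMeasure (α : ℝ) : Measure ℂ :=
  ((volume : Measure ℂ).restrict (ball (0 : ℂ) 1)).withDensity
    fun z => ENNReal.ofReal ((α - 1) * (1 - ‖z‖ ^ 2) ^ (α - 2) / Real.pi)

/-- The Cauchy–Riemann operator `∂̄ = (∂ₓ + i ∂_y) / 2`. -/
noncomputable def dbar (F : ℂ → ℂ) (z : ℂ) : ℂ :=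
  (fderiv ℝ F z 1 + Complex.I * fderiv ℝ F z Complex.I) / 2

lemma HasFDerivAt.dbar_eq {F : ℂ → ℂ} {L : ℂ →L[ℝ] ℂ} {z : ℂ} (h : HasFDerivAt F L z) :
    dbar F z = (L 1 + Complex.I * L Complex.I) / 2 := by
  rw [dbar, h.fderiv]

lemma dbar_mul {F G : ℂ → ℂ} {z : ℂ} (hF : DifferentiableAt ℝ F z) (hG : DifferentiableAt ℝ G z) :
    dbar (fun w => F w * G w) z = dbar F z * G z + F z * dbar G z := by
  have h : HasFDerivAt (fun w => F w * G w) _ z := hF.hasFDerivAt.mul hG.hasFDerivAt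
  rw [h.dbar_eq]
  simp [dbar]
  ring

lemma DifferentiableAt.dbar_eq_zero {F : ℂ → ℂ} {z : ℂ} (h : DifferentiableAt ℂ F z) :
    dbar F z = 0 := by
  rw [(h.hasFDerivAt.restrictScalars ℝ).dbar_eq]
  have : fderiv ℂ F z Complex.I = Complex.I * fderiv ℂ F z 1 := by
    simp
  simp only [ContinuousLinearMap.coe_restrictScalars', this, ← mul_assoc, Complex.I_mul_I]
  ring

lemma HasDerivAt.dbar_conj {F : ℂ → ℂ} {F' z : ℂ} (h : HasDerivAt F F' z) :
    dbar (fun w => starRingEnd ℂ (F w)) z = starRingEnd ℂ F' := by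
  have h' : HasFDerivAt (fun w => starRingEnd ℂ (F w)) _ z :=
    Complex.conjCLE.toContinuousLinearMap.hasFDerivAt.comp z (h.hasFDerivAt.restrictScalars ℝ)
  rw [h'.dbar_eq]
  simp [← mul_assoc, mul_comm]

lemma dbar_inv {F : ℂ → ℂ} {z : ℂ} (hF : DifferentiableAt ℝ F z) (h0 : F z ≠ 0) :
    dbar (fun w => (F w)⁻¹) z = - dbar F z / F z ^ 2 := by
  have h : HasFDerivAt (fun w => (F w)⁻¹) _ z :=
    (hasDerivAt_inv h0).hasFDerivAt.restrictScalars ℝ |>.comp z hF.hasFDerivAt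
  rw [h.dbar_eq]
  simp [dbar]
  field_simp
  ring

lemma dbar_add {F G : ℂ → ℂ} {z : ℂ} (hF : DifferentiableAt ℝ F z) (hG : DifferentiableAt ℝ G z) :
    dbar (fun w => F w + G w) z = dbar F z + dbar G z := by
  have h : HasFDerivAt (fun w => F w + G w) _ z := hF.hasFDerivAt.add hG.hasFDerivAt
  rw [h.dbar_eq]
  simp [dbar]
  ring

lemma continuous_dbar {F : ℂ → ℂ} (hF : ContDiff ℝ 1 F) : Continuous (dbar F) := by
  have := hF.continuous_fderiv one_ne_zero
  unfold dbar
  fun_prop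

lemma HasCompactSupport.dbar {F : ℂ → ℂ} (hF : HasCompactSupport F) :
    HasCompactSupport (dbar F) := by
  refine HasCompactSupport.intro (hF.fderiv (𝕜 := ℝ)) fun x hx => ?_
  have := image_eq_zero_of_notMem_tsupport hx
  simp [_root_.dbar, this]

lemma integral_dbar_eq_zero {F : ℂ → ℂ} (hF : ContDiff ℝ 1 F) (hc : HasCompactSupport F) :
    ∫ z, dbar F z = 0 := by
  have hcont := hF.continuous_fderiv one_ne_zero
  have key : ∀ v : ℂ, Integrable (fun z => fderiv ℝ F z v) ∧ ∫ z, fderiv ℝ F z v = 0 := by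
    intro v
    have hi : Integrable (fun z => fderiv ℝ F z v) := by
      refine Continuous.integrable_of_hasCompactSupport (by fun_prop) ?_
      exact HasCompactSupport.intro (hc.fderiv (𝕜 := ℝ)) fun x hx => by
        simp [image_eq_zero_of_notMem_tsupport hx]
    refine ⟨hi, ?_⟩
    have := integral_mul_fderiv_eq_neg_fderiv_mul_of_integrable (𝕜 := ℂ) (μ := volume)
      (f := fun _ : ℂ => (1 : ℂ)) (g := F) (v := v) (by simp) (by simpa using hi)
      (by simpa using hF.continuous.integrable_of_hasCompactSupport hc) (by simp)
      (fun x _ => hF.differentiable one_ne_zero x)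
    simpa using this
  unfold dbar
  rw [integral_div, integral_add (key 1).1 ((key Complex.I).1.const_mul _), integral_const_mul,
    (key 1).2, (key Complex.I).2]
  simp

lemma integral_mul_dbar {F G : ℂ → ℂ} (hF : ContDiff ℝ 1 F) (hc : HasCompactSupport F)
    (hG : ContDiff ℝ 1 G) : ∫ z, dbar F z * G z = - ∫ z, F z * dbar G z := by
  have h0 := integral_dbar_eq_zero (hF.mul hG) (hc.mul_right (f' := G))
  have h1 : Integrable (fun z => dbar F z * G z) :=
    ((continuous_dbar hF).mul hG.continuous).integrable_of_hasCompactSupport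
      (hc.dbar.mul_right (f' := G))
  have h2 : Integrable (fun z => F z * dbar G z) :=
    (hF.continuous.mul (continuous_dbar hG)).integrable_of_hasCompactSupport
      (hc.mul_right (f' := dbar G))
  have : ∀ z, dbar (fun w => F w * G w) z = dbar F z * G z + F z * dbar G z := fun z =>
    dbar_mul (hF.differentiable one_ne_zero z) (hG.differentiable one_ne_zero z)
  have h0' : ∫ z, dbar (fun w => F w * G w) z = 0 := h0
  simp_rw [this] at h0'
  rw [integral_add h1 h2] at h0'
  exact eq_neg_of_add_eq_zero_left h0'

lemma lintegral_polar (F : ℂ → ENNReal) (hF : Measurable F) :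
    ∫⁻ z, F z = ∫⁻ t in Set.Ioi (0 : ℝ), ENNReal.ofReal t *
      ∫⁻ θ in Set.Ioo (-Real.pi) Real.pi, F (t * Complex.exp (θ * Complex.I)) := by
  rw [← Complex.lintegral_comp_polarCoord_symm, polarCoord_target, Measure.volume_eq_prod,
    ← Measure.prod_restrict, lintegral_prod]
  · refine lintegral_congr fun t => ?_
    rw [← lintegral_const_mul]
    · refine lintegral_congr fun θ => ?_
      rw [Complex.polarCoord_symm_apply, smul_eq_mul, Complex.exp_mul_I]
      simp
    · exact hF.comp (by fun_prop)
  · refine Measurable.aemeasurable ?_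
    refine Measurable.smul (ENNReal.measurable_ofReal.comp measurable_fst) (hF.comp ?_)
    have : Continuous fun p : ℝ × ℝ => (p.1 : ℂ) * (Real.cos p.2 + Real.sin p.2 * Complex.I) := by
      fun_prop
    exact (funext Complex.polarCoord_symm_apply : (Complex.polarCoord.symm : ℝ × ℝ → ℂ) = _) ▸
      this.measurable

lemma integral_one_div_one_add_norm_sq_sq :
    ∫ z : ℂ, 1 / (Real.pi * (1 + ‖z‖ ^ 2) ^ 2) = 1 := by
  rw [integral_fun_norm_addHaar volume (fun y : ℝ => 1 / (Real.pi * (1 + y ^ 2) ^ 2))]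
  have hd : ∀ y ∈ Set.Ici (0 : ℝ),
      HasDerivAt (fun y : ℝ => - (1 / (2 * Real.pi)) * (1 + y ^ 2)⁻¹)
      (y ^ (Module.finrank ℝ ℂ - 1) • (1 / (Real.pi * (1 + y ^ 2) ^ 2))) y := by
    intro y _
    have h1 : (1 + y ^ 2) ≠ 0 := by positivity
    have := (((hasDerivAt_pow 2 y).const_add 1).inv h1).const_mul (-(1 / (2 * Real.pi)))
    refine this.congr_deriv ?_
    have := Real.pi_ne_zero
    simp
    field_simp
  have ht : Filter.Tendsto (fun y : ℝ => - (1 / (2 * Real.pi)) * (1 + y ^ 2)⁻¹) Filter.atTop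
      (nhds (- (1 / (2 * Real.pi)) * 0)) := by
    refine Filter.Tendsto.const_mul _ (Filter.Tendsto.inv_tendsto_atTop ?_)
    exact Filter.tendsto_atTop_add_const_left _ _ (Filter.tendsto_pow_atTop two_ne_zero)
  rw [integral_Ioi_of_hasDerivAt_of_nonneg' hd ?_ ht]
  · have := Real.pi_ne_zero
    simp [Complex.volume_ball, Measure.real]
  · intro y hy
    have : 0 < y := hy
    positivity

lemma integrable_one_div_norm_ball (z : ℂ) (R : ℝ) :
    IntegrableOn (fun ζ : ℂ => 1 / ‖ζ - z‖) (ball z R) := by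
  have h0 : IntegrableOn (fun ζ : ℂ => 1 / ‖ζ‖) (ball 0 R) := by
    rw [integrableOn_fun_norm_addHaar (μ := volume) (f := fun y : ℝ => 1 / y)]
    refine IntegrableOn.congr_fun (f := fun _ => (1 : ℝ)) (by simp) (fun y hy => ?_)
      measurableSet_Ioo
    have : y ≠ 0 := hy.1.ne'
    simp [this]
  have := (integrable_indicator_iff measurableSet_ball).2 h0
  rw [← integrable_indicator_iff measurableSet_ball]
  refine (this.comp_sub_right z).congr (Filter.Eventually.of_forall fun ζ => ?_)
  simp only [Set.indicator, mem_ball, dist_eq_norm, sub_zero]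

/-- The **Cauchy–Pompeiu formula** for compactly supported functions. -/
theorem integral_dbar_div_sub {F : ℂ → ℂ} (hF : ContDiff ℝ 1 F) (hc : HasCompactSupport F) (z : ℂ) :
    ∫ ζ, dbar F ζ / (ζ - z) = - (Real.pi * F z) := by
  let k : ℝ → ℂ → ℂ := fun c ζ =>
    (c : ℂ) ^ 2 * (starRingEnd ℂ (ζ - z)) * ((1 + c ^ 2 * ‖ζ - z‖ ^ 2 : ℝ) : ℂ)⁻¹
  have hpos : ∀ (c : ℝ) (ζ : ℂ), 0 < 1 + c ^ 2 * ‖ζ - z‖ ^ 2 := fun c ζ => by positivity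
  have hk : ∀ c, ContDiff ℝ 1 (k c) := by
    intro c
    have h1 : ContDiff ℝ 1 (fun ζ : ℂ => ‖ζ - z‖ ^ 2) := (contDiff_id.sub contDiff_const).norm_sq ℝ
    have h2 : ContDiff ℝ 1 (fun ζ : ℂ => starRingEnd ℂ (ζ - z)) :=
      Complex.conjCLE.contDiff.comp (contDiff_id.sub contDiff_const)
    have h3 : ContDiff ℝ 1 (fun ζ : ℂ => ((1 + c ^ 2 * ‖ζ - z‖ ^ 2 : ℝ) : ℂ)) :=
      Complex.ofRealCLM.contDiff.comp (contDiff_const.add (contDiff_const.mul h1))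
    exact (contDiff_const.mul h2).mul (h3.inv fun ζ => by exact_mod_cast (hpos c ζ).ne')
  have hdk : ∀ c ζ, dbar (k c) ζ = ((c ^ 2 / (1 + c ^ 2 * ‖ζ - z‖ ^ 2) ^ 2 : ℝ) : ℂ) := by
    intro c ζ
    have hnorm : ∀ w : ℂ, ((1 + c ^ 2 * ‖w - z‖ ^ 2 : ℝ) : ℂ) =
        1 + (c : ℂ) ^ 2 * (w - z) * starRingEnd ℂ (w - z) := fun w => by
      rw [mul_assoc, Complex.mul_conj']
      push_cast
      ring
    have hne : (1 : ℂ) + (c : ℂ) ^ 2 * (ζ - z) * starRingEnd ℂ (ζ - z) ≠ 0 := by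
      rw [← hnorm]
      exact_mod_cast (hpos c ζ).ne'
    have hkeq : k c = fun w => (c : ℂ) ^ 2 * starRingEnd ℂ (w - z) *
        (1 + (c : ℂ) ^ 2 * (w - z) * starRingEnd ℂ (w - z))⁻¹ := by
      funext w
      simp only [k, hnorm]
    have hd1 : DifferentiableAt ℝ (fun w : ℂ => starRingEnd ℂ (w - z)) ζ :=
      Complex.conjCLE.differentiableAt.comp ζ (by fun_prop)
    have hd2 : DifferentiableAt ℝ
        (fun w : ℂ => (c : ℂ) ^ 2 * (w - z) * starRingEnd ℂ (w - z)) ζ :=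
      DifferentiableAt.mul (by fun_prop) hd1
    have hd3 : DifferentiableAt ℝ
        (fun w : ℂ => (1 : ℂ) + (c : ℂ) ^ 2 * (w - z) * starRingEnd ℂ (w - z)) ζ :=
      hd2.const_add _
    have hc1 : dbar (fun w : ℂ => starRingEnd ℂ (w - z)) ζ = 1 := by
      rw [((hasDerivAt_id' ζ).sub_const z).dbar_conj, map_one]
    have e0 : dbar (fun _ : ℂ => (c : ℂ) ^ 2) ζ = 0 :=
      DifferentiableAt.dbar_eq_zero (by fun_prop)
    have e1 : dbar (fun _ : ℂ => (1 : ℂ)) ζ = 0 :=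
      DifferentiableAt.dbar_eq_zero (by fun_prop)
    have e2 : dbar (fun w : ℂ => (c : ℂ) ^ 2 * (w - z)) ζ = 0 :=
      DifferentiableAt.dbar_eq_zero (by fun_prop)
    have hd4 : DifferentiableAt ℝ
        (fun w : ℂ => ((1 : ℂ) + (c : ℂ) ^ 2 * (w - z) * starRingEnd ℂ (w - z))⁻¹) ζ := hd3.inv hne
    rw [hkeq, dbar_mul (hd1.const_mul _) hd4, dbar_inv hd3 hne,
      dbar_mul (by fun_prop) hd1, dbar_add (by fun_prop) hd2, dbar_mul (by fun_prop) hd1,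
      hc1, e0, e1, e2, Complex.ofReal_div, Complex.ofReal_pow (1 + _), hnorm]
    push_cast
    field_simp
    ring
  have hlim1 : Filter.Tendsto (fun c : ℝ => ∫ ζ, dbar F ζ * k c ζ) Filter.atTop
      (nhds (∫ ζ, dbar F ζ / (ζ - z))) := by
    have hFc := continuous_dbar hF
    obtain ⟨R, hR⟩ := hc.dbar.isCompact.isBounded.subset_ball z
    obtain ⟨C, hC⟩ := hc.dbar.exists_bound_of_continuous hFc
    refine tendsto_integral_filter_of_dominated_convergence
      (bound := (ball z R).indicator fun ζ => C * (1 / ‖ζ - z‖)) ?_ ?_ ?_ ?_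
    · exact Filter.Eventually.of_forall fun c =>
        (hFc.mul (hk c).continuous).aestronglyMeasurable
    · refine Filter.Eventually.of_forall fun c => Filter.Eventually.of_forall fun ζ => ?_
      by_cases hζ : ζ ∈ ball z R
      · rw [Set.indicator_of_mem hζ, norm_mul]
        refine mul_le_mul (hC ζ) ?_ (norm_nonneg _) ((norm_nonneg _).trans (hC ζ))
        have hp := hpos c ζ
        have : ‖k c ζ‖ = c ^ 2 * ‖ζ - z‖ * (1 + c ^ 2 * ‖ζ - z‖ ^ 2)⁻¹ := by
          simp only [k, norm_mul, norm_pow, Complex.norm_real, RCLike.norm_conj, norm_inv,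
            Real.norm_eq_abs, sq_abs, abs_of_pos hp]
        rw [this]
        rcases (norm_nonneg (ζ - z)).eq_or_lt with h | h
        · simp [← h]
        · rw [← div_eq_mul_inv, div_le_div_iff₀ hp h]
          nlinarith
      · rw [Set.indicator_of_notMem hζ,
          image_eq_zero_of_notMem_tsupport fun h => hζ (hR h)]
        simp
    · rw [integrable_indicator_iff measurableSet_ball]
      exact (integrable_one_div_norm_ball z R).const_mul C
    · have hz : ∀ᵐ ζ : ℂ, ζ ≠ z := Measure.ae_ne volume z
      filter_upwards [hz] with ζ hζ
      rw [div_eq_mul_inv]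
      refine Filter.Tendsto.const_mul _ ?_
      have hζ' : ζ - z ≠ 0 := sub_ne_zero.2 hζ
      have hn : ‖ζ - z‖ ≠ 0 := norm_ne_zero_iff.2 hζ'
      have h1 : Filter.Tendsto (fun c : ℝ => ((c ^ 2)⁻¹ + ‖ζ - z‖ ^ 2)⁻¹) Filter.atTop
          (nhds (0 + ‖ζ - z‖ ^ 2)⁻¹) := by
        refine Filter.Tendsto.inv₀ (Filter.Tendsto.add_const _ ?_) (by simpa using hn)
        exact (Filter.tendsto_pow_atTop two_ne_zero).inv_tendsto_atTop
      have h2 : Filter.Tendsto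
          (fun c : ℝ => starRingEnd ℂ (ζ - z) * ((((c ^ 2)⁻¹ + ‖ζ - z‖ ^ 2)⁻¹ : ℝ) : ℂ))
          Filter.atTop (nhds (starRingEnd ℂ (ζ - z) * (((0 + ‖ζ - z‖ ^ 2)⁻¹ : ℝ) : ℂ))) :=
        ((Complex.continuous_ofReal.tendsto _).comp h1).const_mul _
      have h3 : starRingEnd ℂ (ζ - z) * (((0 + ‖ζ - z‖ ^ 2)⁻¹ : ℝ) : ℂ) = (ζ - z)⁻¹ := by
        rw [Complex.inv_def, zero_add, Complex.normSq_eq_norm_sq]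
      rw [h3] at h2
      refine h2.congr' ?_
      filter_upwards [Filter.eventually_gt_atTop 0] with c hcpos
      simp only [k]
      rw [mul_comm ((c : ℂ) ^ 2), mul_assoc]
      congr 1
      rw [← Complex.ofReal_pow, ← Complex.ofReal_inv, ← Complex.ofReal_mul]
      congr 1
      have := hpos c ζ
      field_simp
  have hlim2 : Filter.Tendsto (fun c : ℝ => ∫ ζ, F ζ * dbar (k c) ζ) Filter.atTop
      (nhds (Real.pi * F z)) := by
    have h := tendsto_integral_comp_smul_smul_of_integrable' (μ := (volume : Measure ℂ))
      (φ := fun x : ℂ => 1 / (Real.pi * (1 + ‖x‖ ^ 2) ^ 2)) (fun x => by positivity)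
      integral_one_div_one_add_norm_sq_sq ?_
      (hF.continuous.integrable_of_hasCompactSupport hc) (hF.continuous.continuousAt (x := z))
    · refine (h.const_mul (Real.pi : ℂ)).congr fun c => ?_
      rw [← integral_const_mul]
      refine integral_congr_ae (Filter.Eventually.of_forall fun ζ => ?_)
      have h0 : ‖c • (z - ζ)‖ ^ 2 = c ^ 2 * ‖ζ - z‖ ^ 2 := by
        rw [norm_smul, norm_sub_rev z ζ, mul_pow, Real.norm_eq_abs, sq_abs]
      simp only [hdk, Complex.finrank_real_complex, h0]
      rw [Complex.real_smul]
      have := Real.pi_ne_zero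
      have h1 : (Real.pi : ℂ) ≠ 0 := by exact_mod_cast this
      have h2 : (1 : ℂ) + (c : ℂ) ^ 2 * (‖ζ - z‖ : ℂ) ^ 2 ≠ 0 := by
        exact_mod_cast (hpos c ζ).ne'
      push_cast
      field_simp
    · have ht : Filter.Tendsto (fun y : ℝ => (1 / Real.pi) * (1 + y ^ 2)⁻¹) Filter.atTop
          (nhds ((1 / Real.pi) * 0)) := by
        refine Filter.Tendsto.const_mul _ (Filter.Tendsto.inv_tendsto_atTop ?_)
        exact Filter.tendsto_atTop_add_const_left _ _ (Filter.tendsto_pow_atTop two_ne_zero)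
      rw [mul_zero] at ht
      refine squeeze_zero (fun x => by positivity) (fun x => ?_)
        (ht.comp tendsto_norm_cobounded_atTop)
      have := Real.pi_pos
      simp only [Function.comp, Complex.finrank_real_complex]
      rw [← div_eq_mul_inv, div_div, mul_one_div, div_le_div_iff₀ (by positivity) (by positivity)]
      nlinarith [sq_nonneg ‖x‖, mul_nonneg this.le (sq_nonneg ‖x‖)]
  refine tendsto_nhds_unique hlim1 ?_
  simp_rw [integral_mul_dbar hF hc (hk _)]
  exact hlim2.neg

lemma lintegral_radial_withDensity {w : ℝ → ℝ} (hw : Measurable w) {F : ℂ → ENNReal}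
    (hF : Measurable F) :
    ∫⁻ z, F z ∂(((volume : Measure ℂ).restrict (ball (0 : ℂ) 1)).withDensity
      fun z => ENNReal.ofReal (w ‖z‖)) =
    ∫⁻ t in Set.Ioo (0 : ℝ) 1, ENNReal.ofReal t * (ENNReal.ofReal (w t) *
      ∫⁻ θ in Set.Ioo (-Real.pi) Real.pi, F (t * Complex.exp (θ * Complex.I))) := by
  have hm : Measurable fun z : ℂ => ENNReal.ofReal (w ‖z‖) := by fun_prop
  rw [lintegral_withDensity_eq_lintegral_mul _ hm hF, ← lintegral_indicator measurableSet_ball,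
    lintegral_polar _ ((hm.mul hF).indicator measurableSet_ball)]
  have hIoo : Set.Ioo (0 : ℝ) 1 = Set.Iio 1 ∩ Set.Ioi 0 := by ext; simp [and_comm]
  rw [hIoo, ← Measure.restrict_restrict measurableSet_Iio, ← lintegral_indicator measurableSet_Iio]
  refine setLIntegral_congr_fun measurableSet_Ioi fun t (ht : 0 < t) => ?_
  have hn : ∀ θ : ℝ, ‖(t : ℂ) * Complex.exp (θ * Complex.I)‖ = t := fun θ => by
    rw [norm_mul, Complex.norm_exp_ofReal_mul_I, mul_one, Complex.norm_real, Real.norm_of_nonneg ht.le]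
  by_cases h1 : t < 1
  · rw [Set.indicator_of_mem (Set.mem_Iio.2 h1)]
    congr 1
    rw [← lintegral_const_mul _ (by fun_prop)]
    refine lintegral_congr fun θ => ?_
    rw [Set.indicator_of_mem (by rwa [mem_ball_zero_iff, hn])]
    simp only [Pi.mul_apply, hn]
  · rw [Set.indicator_of_notMem (by simpa using h1)]
    rw [lintegral_congr (g := fun _ => 0), lintegral_zero, mul_zero]
    intro θ
    rw [Set.indicator_of_notMem (by rwa [mem_ball_zero_iff, hn])]

/-- The hyperbolic area measure `dA(z) / (1 - |z|²)²` on the unit disk. -/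
noncomputable def hypMeasure : Measure ℂ :=
  ((volume : Measure ℂ).restrict (ball (0 : ℂ) 1)).withDensity
    fun z => ENNReal.ofReal (1 / (Real.pi * (1 - ‖z‖ ^ 2) ^ 2))

lemma hypMeasure_compl_ball : hypMeasure (ball 0 1)ᶜ = 0 := by
  refine withDensity_absolutelyContinuous _ _ ?_
  rw [Measure.restrict_apply measurableSet_ball.compl]
  simp

lemma ae_hypMeasure_mem_ball : ∀ᵐ z ∂hypMeasure, z ∈ ball (0 : ℂ) 1 := by
  rw [ae_iff]
  exact hypMeasure_compl_ball

lemma one_sub_norm_sq_pos {z : ℂ} (hz : z ∈ ball (0 : ℂ) 1) : 0 < 1 - ‖z‖ ^ 2 := by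
  have : ‖z‖ < 1 := by simpa using hz
  nlinarith [norm_nonneg z]

lemma measurePreserving_hypMeasure {φ φ' : ℂ → ℂ} (hm : Measurable φ)
    (hd : ∀ z ∈ ball (0 : ℂ) 1, HasDerivAt φ (φ' z) z) (hinj : Set.InjOn φ (ball 0 1))
    (himg : φ '' ball 0 1 = ball 0 1)
    (hw : ∀ z ∈ ball (0 : ℂ) 1, ‖φ' z‖ * (1 - ‖z‖ ^ 2) = 1 - ‖φ z‖ ^ 2) :
    MeasurePreserving φ hypMeasure hypMeasure := by
  refine ⟨hm, ?_⟩
  ext s hs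
  rw [Measure.map_apply hm hs, hypMeasure, withDensity_apply _ hs, withDensity_apply _ (hm hs),
    ← lintegral_indicator hs, ← lintegral_indicator (hm hs)]
  conv_rhs => rw [← himg]
  rw [lintegral_image_eq_lintegral_abs_det_fderiv_mul volume measurableSet_ball
    (fun z hz => ((hd z hz).hasFDerivAt.restrictScalars ℝ).hasFDerivWithinAt) hinj]
  refine setLIntegral_congr_fun measurableSet_ball fun z hz => ?_
  have hdet : (ContinuousLinearMap.restrictScalars ℝ
      (ContinuousLinearMap.toSpanSingleton ℂ (φ' z))).det = ‖φ' z‖ ^ 2 := by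
    rw [ContinuousLinearMap.det]
    have : (((ContinuousLinearMap.toSpanSingleton ℂ (φ' z)).restrictScalars ℝ : ℂ →L[ℝ] ℂ) : ℂ →ₗ[ℝ] ℂ)
        = Algebra.lmul ℝ ℂ (φ' z) := by
      ext; simp [mul_comm]
    rw [this, ← Complex.normSq_eq_norm_sq, ← Algebra.norm_complex_apply]
    rfl
  rw [hdet, abs_of_nonneg (by positivity)]
  by_cases h : φ z ∈ s
  · rw [Set.indicator_of_mem h, Set.indicator_of_mem (show z ∈ φ ⁻¹' s from h),
      ← ENNReal.ofReal_mul (by positivity)]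
    congr 1
    have h1 := hw z hz
    have h2 := one_sub_norm_sq_pos hz
    have h3 : 0 < 1 - ‖φ z‖ ^ 2 := one_sub_norm_sq_pos (himg ▸ Set.mem_image_of_mem φ hz)
    rw [← h1] at h3 ⊢
    have h4 : ‖φ' z‖ ≠ 0 := fun h => by simp [h] at h3
    have := h2.ne'
    field_simp
  · rw [Set.indicator_of_notMem h, Set.indicator_of_notMem (show z ∉ φ ⁻¹' s from h), mul_zero]

/-- The involutive automorphism of the unit disk exchanging `0` and `a`. -/
noncomputable def mob (a z : ℂ) : ℂ := (a - z) / (1 - starRingEnd ℂ a * z)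

lemma one_sub_conj_mul_ne_zero {a z : ℂ} (ha : a ∈ ball (0 : ℂ) 1) (hz : z ∈ ball (0 : ℂ) 1) :
    1 - starRingEnd ℂ a * z ≠ 0 := by
  intro h
  have h1 : starRingEnd ℂ a * z = 1 := (sub_eq_zero.1 h).symm
  have h2 : ‖a‖ * ‖z‖ = 1 := by simpa using congrArg norm h1
  have h3 : ‖a‖ < 1 := by simpa using ha
  have h4 : ‖z‖ < 1 := by simpa using hz
  nlinarith [norm_nonneg a, norm_nonneg z]

lemma one_sub_norm_mob_sq {a z : ℂ} (ha : a ∈ ball (0 : ℂ) 1) (hz : z ∈ ball (0 : ℂ) 1) :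
    1 - ‖mob a z‖ ^ 2 = (1 - ‖a‖ ^ 2) * (1 - ‖z‖ ^ 2) / ‖1 - starRingEnd ℂ a * z‖ ^ 2 := by
  have h := one_sub_conj_mul_ne_zero ha hz
  have h' : ‖1 - starRingEnd ℂ a * z‖ ^ 2 ≠ 0 := by positivity
  rw [mob, norm_div, div_pow, eq_div_iff h', sub_mul, div_mul_cancel₀ _ h']
  simp only [← Complex.normSq_eq_norm_sq, Complex.normSq_apply]
  simp
  ring

lemma mob_mem_ball {a z : ℂ} (ha : a ∈ ball (0 : ℂ) 1) (hz : z ∈ ball (0 : ℂ) 1) :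
    mob a z ∈ ball (0 : ℂ) 1 := by
  have h := one_sub_norm_mob_sq ha hz
  have h0 := one_sub_conj_mul_ne_zero ha hz
  have h1 := one_sub_norm_sq_pos ha
  have h2 := one_sub_norm_sq_pos hz
  have : 0 < 1 - ‖mob a z‖ ^ 2 := by rw [h]; positivity
  rw [mem_ball_zero_iff]
  nlinarith [norm_nonneg (mob a z)]

lemma mob_mob {a z : ℂ} (ha : a ∈ ball (0 : ℂ) 1) (hz : z ∈ ball (0 : ℂ) 1) :
    mob a (mob a z) = z := by
  have h0 := one_sub_conj_mul_ne_zero ha hz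
  have h1 := one_sub_conj_mul_ne_zero ha (mob_mem_ball ha hz)
  rw [mob, div_eq_iff h1, mob]
  generalize starRingEnd ℂ a = c at *
  rw [mul_div_assoc', sub_div' h0, sub_div' h0, mul_div_assoc']
  congr 1
  ring

lemma measurable_mob (a : ℂ) : Measurable (mob a) := by
  unfold mob; fun_prop

lemma hasDerivAt_mob {a z : ℂ} (ha : a ∈ ball (0 : ℂ) 1) (hz : z ∈ ball (0 : ℂ) 1) :
    HasDerivAt (mob a) (-(1 - starRingEnd ℂ a * a) / (1 - starRingEnd ℂ a * z) ^ 2) z := by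
  have h0 := one_sub_conj_mul_ne_zero ha hz
  have h1 : HasDerivAt (fun w => a - w) (-1) z := by simpa using (hasDerivAt_id z).const_sub a
  have h2 : HasDerivAt (fun w => 1 - starRingEnd ℂ a * w) (-starRingEnd ℂ a) z := by
    simpa using ((hasDerivAt_id z).const_mul (starRingEnd ℂ a)).const_sub 1
  exact (h1.div h2 h0).congr_deriv (by ring)

lemma measurePreserving_mob {a : ℂ} (ha : a ∈ ball (0 : ℂ) 1) :
    MeasurePreserving (mob a) hypMeasure hypMeasure := by
  refine measurePreserving_hypMeasure (measurable_mob a) (fun z hz => hasDerivAt_mob ha hz)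
    (Set.LeftInvOn.injOn fun z hz => mob_mob ha hz) ?_ fun z hz => ?_
  · refine Set.Subset.antisymm (Set.image_subset_iff.2 fun z hz => mob_mem_ball ha hz)
      fun z hz => ⟨mob a z, mob_mem_ball ha hz, mob_mob ha hz⟩
  · rw [one_sub_norm_mob_sq ha hz]
    have : starRingEnd ℂ a * a = ((‖a‖ ^ 2 : ℝ) : ℂ) := by
      rw [← Complex.normSq_eq_conj_mul_self, Complex.normSq_eq_norm_sq]
    have h : ‖-(1 - starRingEnd ℂ a * a)‖ = 1 - ‖a‖ ^ 2 := by
      rw [this, norm_neg, ← Complex.ofReal_one, ← Complex.ofReal_sub, Complex.norm_real,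
        Real.norm_of_nonneg (one_sub_norm_sq_pos ha).le]
    rw [norm_div, h, norm_pow]
    ring

lemma measurePreserving_const_mul_hypMeasure {η : ℂ} (hη : ‖η‖ = 1) :
    MeasurePreserving (fun z => η * z) hypMeasure hypMeasure := by
  have h0 : η ≠ 0 := fun h => by simp [h] at hη
  refine measurePreserving_hypMeasure (φ' := fun _ => η) (by fun_prop)
    (fun z _ => by simpa using (hasDerivAt_id z).const_mul η)
    (fun x _ y _ h => mul_left_cancel₀ h0 h) ?_ fun z _ => by simp [hη]
  refine Set.Subset.antisymm (Set.image_subset_iff.2 fun z hz => by simpa [hη] using hz)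
      fun z hz => ⟨η⁻¹ * z, by simpa [hη] using hz, by simp [h0]⟩

lemma setIntegral_Ioo_circle {B : ℂ → ℂ} {ρ t : ℝ} (hB : DifferentiableOn ℂ B (ball 0 ρ))
    (ht0 : 0 < t) (ht : t < ρ) :
    ∫ θ in Set.Ioo (-Real.pi) Real.pi, B (t * Complex.exp (θ * Complex.I)) =
      2 * Real.pi * B 0 := by
  have h := (DiffContOnCl.circleAverage (f := B) (c := 0) (R := t)
    (DifferentiableOn.diffContOnCl_ball (U := ball 0 ρ) hB (by
      rw [abs_of_pos ht0]; exact closedBall_subset_ball ht)))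
  rw [Real.circleAverage_def] at h
  have hper : Function.Periodic (fun θ : ℝ => B (circleMap 0 t θ)) (2 * Real.pi) := fun θ => by
    simp only [periodic_circleMap 0 t θ]
  have h2 := hper.intervalIntegral_add_eq (-Real.pi) 0
  rw [zero_add, show -Real.pi + 2 * Real.pi = Real.pi by ring] at h2
  rw [← h2, intervalIntegral.integral_of_le (by linarith [Real.pi_pos]),
    integral_Ioc_eq_integral_Ioo] at h
  simp only [circleMap_zero] at h
  rw [← h, Complex.real_smul]
  have : (Real.pi : ℂ) ≠ 0 := by exact_mod_cast Real.pi_ne_zero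
  generalize (∫ θ in Set.Ioo (-Real.pi) Real.pi, B (t * Complex.exp (θ * Complex.I))) = J
  push_cast
  field_simp

lemma setLIntegral_Ioo_circle {B : ℂ → ℂ} {ρ t : ℝ} (hB : DifferentiableOn ℂ B (ball 0 ρ))
    (hre : ∀ z ∈ ball (0 : ℂ) ρ, 0 ≤ (B z).re) (ht0 : 0 < t) (ht : t < ρ) :
    ∫⁻ θ in Set.Ioo (-Real.pi) Real.pi, ENNReal.ofReal (B (t * Complex.exp (θ * Complex.I))).re =
      ENNReal.ofReal (2 * Real.pi) * ENNReal.ofReal (B 0).re := by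
  have hmem : ∀ θ : ℝ, (t : ℂ) * Complex.exp (θ * Complex.I) ∈ ball (0 : ℂ) ρ := fun θ => by
    rw [mem_ball_zero_iff, norm_mul, Complex.norm_exp_ofReal_mul_I, mul_one, Complex.norm_real,
      Real.norm_of_nonneg ht0.le]
    exact ht
  have hcont : Continuous fun θ : ℝ => B (t * Complex.exp (θ * Complex.I)) :=
    hB.continuousOn.comp_continuous (by fun_prop) hmem
  have hint : IntegrableOn (fun θ : ℝ => B (t * Complex.exp (θ * Complex.I)))
      (Set.Ioo (-Real.pi) Real.pi) :=
    (hcont.integrableOn_Icc (a := -Real.pi) (b := Real.pi)).mono_set Set.Ioo_subset_Icc_self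
  have hint' : IntegrableOn (fun θ : ℝ => (B (t * Complex.exp (θ * Complex.I))).re)
      (Set.Ioo (-Real.pi) Real.pi) := hint.re
  rw [← ofReal_integral_eq_lintegral_ofReal hint' (.of_forall fun θ => hre _ (hmem θ)),
    ← ENNReal.ofReal_mul (by positivity)]
  congr 1
  have := integral_re hint
  simp only [RCLike.re_to_complex] at this
  rw [this, setIntegral_Ioo_circle hB ht0 ht]
  simp

lemma lintegral_two_mul_div_one_sub_sq_sq {ρ : ℝ} (h0 : 0 < ρ) (h1 : ρ < 1) :
    ∫⁻ t in Set.Ioo 0 ρ, ENNReal.ofReal (2 * t / (1 - t ^ 2) ^ 2) =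
      ENNReal.ofReal (ρ ^ 2 / (1 - ρ ^ 2)) := by
  have hne : ∀ t ∈ Set.Icc 0 ρ, 1 - t ^ 2 ≠ 0 := fun t ht => by
    have : 0 < 1 - t ^ 2 := by nlinarith [ht.1, ht.2]
    exact this.ne'
  have hc : ContinuousOn (fun t : ℝ => 2 * t / (1 - t ^ 2) ^ 2) (Set.Icc 0 ρ) :=
    ContinuousOn.div (by fun_prop) (by fun_prop) fun t ht => pow_ne_zero _ (hne t ht)
  rw [← ofReal_integral_eq_lintegral_ofReal
    ((hc.integrableOn_Icc).mono_set Set.Ioo_subset_Icc_self)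
    ((ae_restrict_iff' measurableSet_Ioo).2 (.of_forall fun t ht => by
      have := ht.1; positivity))]
  congr 1
  rw [← integral_Ioc_eq_integral_Ioo, ← intervalIntegral.integral_of_le h0.le,
    intervalIntegral.integral_eq_sub_of_hasDerivAt (f := fun t => (1 - t ^ 2)⁻¹)]
  · have := hne ρ ⟨h0.le, le_rfl⟩
    field_simp
    ring
  · intro t ht
    rw [Set.uIcc_of_le h0.le] at ht
    have h2 : HasDerivAt (fun t : ℝ => 1 - t ^ 2) (-(2 * t)) t := by
      simpa using (hasDerivAt_pow 2 t).const_sub 1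
    exact (h2.inv (hne t ht)).congr_deriv (by ring)
  · exact (Set.uIcc_of_le h0.le ▸ hc).intervalIntegrable

lemma setLIntegral_ball_hypMeasure {B : ℂ → ℂ} {ρ : ℝ} (hm : Measurable B)
    (hB : DifferentiableOn ℂ B (ball 0 ρ))
    (hre : ∀ z ∈ ball (0 : ℂ) ρ, 0 ≤ (B z).re) (h0 : 0 < ρ) (h1 : ρ < 1) :
    ∫⁻ z in ball 0 ρ, ENNReal.ofReal (B z).re ∂hypMeasure =
      ENNReal.ofReal (ρ ^ 2 / (1 - ρ ^ 2)) * ENNReal.ofReal (B 0).re := by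
  rw [← lintegral_indicator measurableSet_ball, hypMeasure,
    lintegral_radial_withDensity (w := fun t => 1 / (Real.pi * (1 - t ^ 2) ^ 2)) (by fun_prop)
      ((by fun_prop : Measurable fun z => ENNReal.ofReal (B z).re).indicator measurableSet_ball),
    ← lintegral_two_mul_div_one_sub_sq_sq h0 h1, ← lintegral_mul_const _ (by fun_prop)]
  have hsub : Set.Ioo (0 : ℝ) ρ = Set.Iio ρ ∩ Set.Ioo 0 1 := by
    ext t; simp only [Set.mem_Ioo, Set.mem_inter_iff, Set.mem_Iio]
    constructor
    · rintro ⟨h, h'⟩; exact ⟨h', h, h'.trans h1⟩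
    · rintro ⟨h, h', _⟩; exact ⟨h', h⟩
  rw [hsub, ← Measure.restrict_restrict measurableSet_Iio, ← lintegral_indicator measurableSet_Iio]
  refine setLIntegral_congr_fun measurableSet_Ioo fun t ht => ?_
  have hn : ∀ θ : ℝ, ‖(t : ℂ) * Complex.exp (θ * Complex.I)‖ = t := fun θ => by
    rw [norm_mul, Complex.norm_exp_ofReal_mul_I, mul_one, Complex.norm_real,
      Real.norm_of_nonneg ht.1.le]
  by_cases htρ : t < ρ
  · rw [Set.indicator_of_mem (Set.mem_Iio.2 htρ)]
    have : ∀ θ : ℝ, (ball (0 : ℂ) ρ).indicator (fun z => ENNReal.ofReal (B z).re)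
        (t * Complex.exp (θ * Complex.I)) =
        ENNReal.ofReal (B (t * Complex.exp (θ * Complex.I))).re := fun θ => by
      rw [Set.indicator_of_mem (by rwa [mem_ball_zero_iff, hn])]
    have hpos : 0 < 1 - t ^ 2 := by nlinarith [ht.1, ht.2]
    simp only [this]
    rw [setLIntegral_Ioo_circle hB hre ht.1 htρ, ← mul_assoc, ← mul_assoc,
      ← ENNReal.ofReal_mul ht.1.le, ← ENNReal.ofReal_mul (by have := ht.1; positivity)]
    congr 2
    have := Real.pi_ne_zero
    field_simp
  · rw [Set.indicator_of_notMem (by simpa using htρ)]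
    rw [lintegral_congr (g := fun _ => 0), lintegral_zero, mul_zero, mul_zero]
    intro θ
    rw [Set.indicator_of_notMem (by rwa [mem_ball_zero_iff, hn])]

lemma hypMeasure_ball {ρ : ℝ} (h0 : 0 < ρ) (h1 : ρ < 1) :
    hypMeasure (ball 0 ρ) = ENNReal.ofReal (ρ ^ 2 / (1 - ρ ^ 2)) := by
  have := setLIntegral_ball_hypMeasure (B := fun _ => 1) (ρ := ρ) (by fun_prop) (by fun_prop)
    (by simp) h0 h1
  simpa using this

lemma integrable_indicator_inv_norm_hypMeasure :
    IntegrableOn (fun w : ℂ => ‖w‖⁻¹) (ball 0 (1 / 2)) hypMeasure := by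
  have h1 := integrable_one_div_norm_ball 0 (1 / 2)
  have h2 : ∀ z ∈ ball (0 : ℂ) (1 / 2),
      ENNReal.ofReal (1 / (Real.pi * (1 - ‖z‖ ^ 2) ^ 2)) ≤ 2 := by
    intro z hz
    rw [mem_ball_zero_iff] at hz
    rw [show (2 : ENNReal) = ENNReal.ofReal 2 by simp]
    apply ENNReal.ofReal_le_ofReal
    have h3 : (3 / 4 : ℝ) ≤ 1 - ‖z‖ ^ 2 := by nlinarith [norm_nonneg z]
    have h4 : (9 / 16 : ℝ) ≤ (1 - ‖z‖ ^ 2) ^ 2 := by nlinarith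
    rw [div_le_iff₀ (by have := Real.pi_pos; positivity)]
    nlinarith [Real.pi_gt_three]
  have h5 : hypMeasure.restrict (ball 0 (1 / 2)) ≤ (2 : ENNReal) • volume.restrict (ball 0 (1 / 2)) := by
    refine Measure.le_iff.2 fun s hs => ?_
    rw [Measure.restrict_apply hs, Measure.smul_apply, Measure.restrict_apply hs, hypMeasure,
      withDensity_apply _ (hs.inter measurableSet_ball), Measure.restrict_restrict
      (hs.inter measurableSet_ball)]
    calc _ ≤ ∫⁻ z in s ∩ ball 0 (1 / 2) ∩ ball 0 1, 2 :=
          setLIntegral_mono measurable_const fun z hz => h2 z hz.1.2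
      _ ≤ _ := by
        rw [setLIntegral_const, smul_eq_mul]
        exact mul_le_mul_right (measure_mono Set.inter_subset_left) _
  have h6 : IntegrableOn (fun w : ℂ => ‖w‖⁻¹) (ball 0 (1 / 2)) volume := by simpa using h1
  exact (Integrable.smul_measure h6 (by simp)).mono_measure h5

lemma integrableOn_inv_norm_mob {ζ : ℂ} (hζ : ζ ∈ ball (0 : ℂ) 1) {E : Set ℂ}
    (hE : hypMeasure E ≠ ⊤) :
    IntegrableOn (fun z => ‖mob ζ z‖⁻¹) E hypMeasure := by
  have hmp := measurePreserving_mob hζ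
  have hm := measurable_mob ζ
  have h1 := (integrable_indicator_iff measurableSet_ball).2 integrable_indicator_inv_norm_hypMeasure
  have h2 := (hmp.integrable_comp h1.aestronglyMeasurable).2 h1
  have h3 : IntegrableOn (fun _ : ℂ => (2 : ℝ)) E hypMeasure := integrableOn_const hE
  refine Integrable.mono' (h2.integrableOn.add h3) (by fun_prop) (.of_forall fun z => ?_)
  rw [Real.norm_of_nonneg (by positivity)]
  simp only [Pi.add_apply, Function.comp]
  by_cases h : mob ζ z ∈ ball (0 : ℂ) (1 / 2)
  · rw [Set.indicator_of_mem h]; linarith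
  · rw [Set.indicator_of_notMem h, zero_add]
    rw [mem_ball_zero_iff, not_lt] at h
    exact inv_le_of_inv_le₀ (by norm_num) (by linarith)

lemma setIntegral_inv_mob_re_le {ζ η : ℂ} (hζ : ζ ∈ ball (0 : ℂ) 1) (hη : ‖η‖ = 1) {E : Set ℂ}
    (hEm : MeasurableSet E) {A : ℝ} (hA : 0 < A) (hE : hypMeasure E = ENNReal.ofReal A) :
    ∫ z in E, (η * (mob ζ z)⁻¹).re ∂hypMeasure ≤ √(A + A ^ 2) := by
  obtain ⟨ρ, hρ0, hρ2⟩ : ∃ ρ : ℝ, 0 < ρ ∧ ρ ^ 2 = A / (1 + A) :=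
    ⟨√(A / (1 + A)), by positivity, Real.sq_sqrt (by positivity)⟩
  have hρ1 : ρ < 1 := by
    have : A / (1 + A) < 1 := (div_lt_one (by positivity)).2 (by linarith)
    nlinarith
  have hρA : ρ ^ 2 / (1 - ρ ^ 2) = A := by
    rw [hρ2]; field_simp; ring
  have hsq : A / ρ = √(A + A ^ 2) := by
    refine (Real.sqrt_eq_iff_mul_self_eq (by positivity) (by positivity)).2 ?_ |>.symm
    rw [← sq, div_pow, hρ2]; field_simp
  have hρD : (ρ : ℂ) ∈ ball (0 : ℂ) 1 := by
    rwa [mem_ball_zero_iff, Complex.norm_real, Real.norm_of_nonneg hρ0.le]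
  let B : ℂ → ℂ := fun w => (1 - ρ * w) / (ρ - w)
  let S : ℂ → ℂ := fun z => mob ρ (starRingEnd ℂ η * mob ζ z)
  have hη' : ‖starRingEnd ℂ η‖ = 1 := by simpa using hη
  have hS : MeasurePreserving S hypMeasure hypMeasure :=
    (measurePreserving_mob hρD).comp
      ((measurePreserving_const_mul_hypMeasure hη').comp (measurePreserving_mob hζ))
  have hη0 : η * starRingEnd ℂ η = 1 := by
    rw [Complex.mul_conj, Complex.normSq_eq_norm_sq, hη]; simp
  have hBm : Measurable B := by fun_prop
  have hmemrot : ∀ z ∈ ball (0 : ℂ) 1, starRingEnd ℂ η * mob ζ z ∈ ball (0 : ℂ) 1 := fun z hz => by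
    have := mob_mem_ball hζ hz
    rw [mem_ball_zero_iff] at this ⊢
    rwa [norm_mul, hη', one_mul]
  have hBS : ∀ z ∈ ball (0 : ℂ) 1, η * (mob ζ z)⁻¹ = B (S z) := by
    intro z hz
    have h1 : mob ρ (S z) = starRingEnd ℂ η * mob ζ z := mob_mob hρD (hmemrot z hz)
    have h2 : B (S z) = (mob ρ (S z))⁻¹ := by simp [B, mob]
    rw [h2, h1, mul_inv, ← eq_inv_of_mul_eq_one_left hη0]
  set c : ℝ := (1 + ρ ^ 2) / (2 * ρ) with hc
  have hBre : ∀ w : ℂ, w ≠ ρ → (B w).re - c = (1 - ρ ^ 2) / (2 * ρ) * (ρ ^ 2 - ‖w‖ ^ 2) / ‖ρ - w‖ ^ 2 := by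
    intro w hw
    have h0 : (ρ - w : ℂ) ≠ 0 := sub_ne_zero.2 hw.symm
    have h1 : Complex.normSq (ρ - w) ≠ 0 := by simpa using h0
    simp only [B, Complex.div_re, ← Complex.normSq_eq_norm_sq, hc]
    field_simp
    simp [Complex.normSq_apply]
    ring
  let D' := S ⁻¹' ball 0 ρ
  have hD'm : MeasurableSet D' := hS.measurable measurableSet_ball
  have hD' : hypMeasure D' = ENNReal.ofReal A := by
    rw [hS.measure_preimage measurableSet_ball.nullMeasurableSet, hypMeasure_ball hρ0 hρ1, hρA]
  let h : ℂ → ℝ := fun z => (η * (mob ζ z)⁻¹).re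
  have hhm : Measurable h := by
    have := measurable_mob ζ
    fun_prop
  have hint : ∀ {E : Set ℂ}, hypMeasure E = ENNReal.ofReal A → MeasurableSet E →
      IntegrableOn h E hypMeasure := by
    intro E hE hEm
    refine (integrableOn_inv_norm_mob hζ (E := E) (by simp [hE])).mono' hhm.aestronglyMeasurable
      (.of_forall fun z => ?_)
    refine (Complex.abs_re_le_norm _).trans ?_
    simp [hη]
  have hge : ∀ z ∈ ball (0 : ℂ) 1, z ∈ D' → c ≤ h z := by
    intro z hz hzD
    have hn : ‖S z‖ < ρ := by simpa [D'] using hzD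
    have hne : S z ≠ ρ := fun h => by
      rw [h, Complex.norm_real, Real.norm_of_nonneg hρ0.le] at hn; exact lt_irrefl _ hn
    have := hBre (S z) hne
    simp only [h, hBS z hz]
    have h2 : 0 ≤ (1 - ρ ^ 2) / (2 * ρ) * (ρ ^ 2 - ‖S z‖ ^ 2) / ‖ρ - S z‖ ^ 2 := by
      have h3 : 0 ≤ 1 - ρ ^ 2 := by nlinarith
      have h4 : 0 ≤ ρ ^ 2 - ‖S z‖ ^ 2 := by nlinarith [norm_nonneg (S z)]
      positivity
    linarith
  have hle : ∀ z ∈ ball (0 : ℂ) 1, z ∉ D' → h z ≤ c := by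
    intro z hz hzD
    have hn : ρ ≤ ‖S z‖ := by simpa [D'] using hzD
    simp only [h, hBS z hz]
    by_cases hne : S z = ρ
    · simp [B, hne, hc]; positivity
    have := hBre (S z) hne
    have h2 : 0 ≤ (1 - ρ ^ 2) / (2 * ρ) * (‖S z‖ ^ 2 - ρ ^ 2) / ‖ρ - S z‖ ^ 2 := by
      have h3 : 0 ≤ 1 - ρ ^ 2 := by nlinarith
      have h4 : 0 ≤ ‖S z‖ ^ 2 - ρ ^ 2 := by nlinarith [norm_nonneg (S z)]
      positivity
    have h5 : (1 - ρ ^ 2) / (2 * ρ) * (‖S z‖ ^ 2 - ρ ^ 2) / ‖ρ - S z‖ ^ 2 =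
      - ((1 - ρ ^ 2) / (2 * ρ) * (ρ ^ 2 - ‖S z‖ ^ 2) / ‖ρ - S z‖ ^ 2) := by ring
    linarith
  have hDval : ∫ z in D', h z ∂hypMeasure = A / ρ := by
    have h1 : ∫ z in D', h z ∂hypMeasure = ∫ z in D', (B (S z)).re ∂hypMeasure := by
      refine setIntegral_congr_ae hD'm ?_
      filter_upwards [ae_hypMeasure_mem_ball] with z hz _
      simp only [h, hBS z hz]
    have hne : ∀ w ∈ ball (0 : ℂ) ρ, (ρ - w : ℂ) ≠ 0 := fun w hw h0 => by
      rw [mem_ball_zero_iff, ← sub_eq_zero.1 h0, Complex.norm_real,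
        Real.norm_of_nonneg hρ0.le] at hw
      exact lt_irrefl _ hw
    have hpos : ∀ w ∈ ball (0 : ℂ) ρ, 0 ≤ (B w).re := fun w hw => by
      have := hBre w fun h => hne w hw (by simp [h])
      have h2 : 0 ≤ (1 - ρ ^ 2) / (2 * ρ) * (ρ ^ 2 - ‖w‖ ^ 2) / ‖ρ - w‖ ^ 2 := by
        rw [mem_ball_zero_iff] at hw
        have h3 : 0 ≤ 1 - ρ ^ 2 := by nlinarith
        have h4 : 0 ≤ ρ ^ 2 - ‖w‖ ^ 2 := by nlinarith [norm_nonneg w]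
        positivity
      have : 0 < c := by positivity
      linarith
    rw [h1, integral_eq_lintegral_of_nonneg_ae]
    · rw [hS.setLIntegral_comp_preimage measurableSet_ball (f := fun w => ENNReal.ofReal (B w).re)
        (by fun_prop), setLIntegral_ball_hypMeasure hBm ?_ hpos hρ0 hρ1, hρA,
        ← ENNReal.ofReal_mul hA.le, ENNReal.toReal_ofReal]
      · have hB0 : B 0 = ((1 / ρ : ℝ) : ℂ) := by simp [B]
        rw [hB0, Complex.ofReal_re]
        ring
      · have := hpos 0 (by simpa using hρ0)
        positivity
      · exact DifferentiableOn.div (by fun_prop) (by fun_prop) hne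
    · exact (ae_restrict_iff' hD'm).2 (.of_forall fun z hz => hpos _ hz)
    · have := hS.measurable
      exact Measurable.aestronglyMeasurable (by fun_prop)
  rw [← hsq, ← hDval]
  have hcE : ∀ {E : Set ℂ}, hypMeasure E = ENNReal.ofReal A → MeasurableSet E →
      ∫ z in E, h z ∂hypMeasure = ∫ z in E, (h z - c) ∂hypMeasure + A * c := by
    intro E hE hEm
    rw [integral_sub (hint hE hEm) (integrableOn_const (by simp [hE])), setIntegral_const,
      measureReal_def, hE, ENNReal.toReal_ofReal hA.le, smul_eq_mul]
    ring
  have hintc : ∀ {E : Set ℂ}, hypMeasure E = ENNReal.ofReal A → MeasurableSet E →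
      IntegrableOn (fun z => h z - c) E hypMeasure := fun hE hEm =>
    (hint hE hEm).sub (integrableOn_const (by simp [hE]))
  change ∫ z in E, h z ∂hypMeasure ≤ _
  rw [hcE hE hEm, hcE hD' hD'm]
  gcongr ?_ + _
  rw [← integral_indicator hEm, ← integral_indicator hD'm]
  refine integral_mono_ae ((integrable_indicator_iff hEm).2 (hintc hE hEm))
    ((integrable_indicator_iff hD'm).2 (hintc hD' hD'm)) ?_
  filter_upwards [ae_hypMeasure_mem_ball] with z hz
  by_cases h1 : z ∈ E <;> by_cases h2 : z ∈ D'
  · simp [h1, h2]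
  · simpa [h1, h2] using hle z hz h2
  · simpa [h1, h2] using hge z hz h2
  · simp [h1, h2]

/-- A hyperbolic analogue of the Ahlfors–Beurling inequality. -/
theorem norm_setIntegral_inv_mob_le {ζ : ℂ} (hζ : ζ ∈ ball (0 : ℂ) 1) {E : Set ℂ}
    (hEm : MeasurableSet E) {A : ℝ} (hA : 0 ≤ A) (hE : hypMeasure E = ENNReal.ofReal A) :
    ‖∫ z in E, (mob ζ z)⁻¹ ∂hypMeasure‖ ≤ √(A + A ^ 2) := by
  rcases hA.eq_or_lt with rfl | hA
  · rw [Measure.restrict_eq_zero.2 (by simpa using hE)]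
    simp
  set J := ∫ z in E, (mob ζ z)⁻¹ ∂hypMeasure with hJ
  by_cases hJ0 : J = 0
  · rw [hJ0, norm_zero]; positivity
  have hn : ‖J‖ ≠ 0 := norm_ne_zero_iff.2 hJ0
  have hint : IntegrableOn (fun z => (mob ζ z)⁻¹) E hypMeasure := by
    have hm := measurable_mob ζ
    refine (integrableOn_inv_norm_mob hζ (E := E) (by simp [hE])).mono'
      (Measurable.aestronglyMeasurable (by fun_prop)) (.of_forall fun z => by simp)
  have hη : ‖starRingEnd ℂ J / ‖J‖‖ = 1 := by simp [hn]
  have := setIntegral_inv_mob_re_le hζ hη hEm hA hE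
  refine le_trans (le_of_eq ?_) this
  have h2 := integral_re (hint.const_mul (starRingEnd ℂ J / ‖J‖))
  simp only [RCLike.re_to_complex] at h2
  rw [h2, integral_const_mul, ← hJ, div_mul_eq_mul_div, ← Complex.normSq_eq_conj_mul_self,
    Complex.normSq_eq_norm_sq, ← Complex.ofReal_div, Complex.ofReal_re]
  field_simp

instance : SFinite hypMeasure := by unfold hypMeasure; infer_instance

lemma exists_setIntegral_inv_norm_mob_le {E : Set ℂ}
    (hE : hypMeasure E ≠ ⊤) :
    ∃ C : ℝ, ∀ ζ ∈ ball (0 : ℂ) 1, ∫ z in E, ‖mob ζ z‖⁻¹ ∂hypMeasure ≤ C := by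
  refine ⟨∫ w in ball (0 : ℂ) (1 / 2), ‖w‖⁻¹ ∂hypMeasure + ∫ z in E, (2 : ℝ) ∂hypMeasure,
    fun ζ hζ => ?_⟩
  have hmp := measurePreserving_mob hζ
  have h1 := (integrable_indicator_iff measurableSet_ball).2 integrable_indicator_inv_norm_hypMeasure
  have h2 := (hmp.integrable_comp h1.aestronglyMeasurable).2 h1
  have h3 : IntegrableOn (fun _ : ℂ => (2 : ℝ)) E hypMeasure := integrableOn_const hE
  have h4 : ∫ w in ball (0 : ℂ) (1 / 2), ‖w‖⁻¹ ∂hypMeasure =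
      ∫ z, ((ball (0 : ℂ) (1 / 2)).indicator (fun w => ‖w‖⁻¹) ∘ mob ζ) z ∂hypMeasure := by
    rw [← integral_indicator measurableSet_ball]
    conv_lhs => rw [← hmp.map_eq]
    rw [integral_map hmp.aemeasurable]
    · rfl
    · rw [hmp.map_eq]; exact h1.aestronglyMeasurable
  have h5 : ∫ z in E, ((ball (0 : ℂ) (1 / 2)).indicator (fun w => ‖w‖⁻¹) ∘ mob ζ) z ∂hypMeasure ≤
      ∫ z, ((ball (0 : ℂ) (1 / 2)).indicator (fun w => ‖w‖⁻¹) ∘ mob ζ) z ∂hypMeasure :=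
    setIntegral_le_integral h2 (.of_forall fun z => Set.indicator_nonneg (fun _ _ => by positivity) _)
  rw [h4]
  refine le_trans ?_ (add_le_add_left h5 _)
  rw [← integral_add h2.integrableOn h3]
  refine integral_mono (integrableOn_inv_norm_mob hζ hE) (h2.integrableOn.add h3) fun z => ?_
  simp only [Function.comp]
  by_cases h : mob ζ z ∈ ball (0 : ℂ) (1 / 2)
  · rw [Set.indicator_of_mem h]; linarith
  · rw [Set.indicator_of_notMem h, zero_add]
    rw [mem_ball_zero_iff, not_lt] at h
    exact inv_le_of_inv_le₀ (by norm_num) (by linarith)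

lemma dbar_one_sub_mul_conj_div {z ζ : ℂ} (hζ : ζ ∈ ball (0 : ℂ) 1) :
    dbar (fun w => (1 - z * starRingEnd ℂ w) * ((1 - ‖w‖ ^ 2 : ℝ) : ℂ)⁻¹) ζ =
      (ζ - z) / ((1 - ‖ζ‖ ^ 2 : ℝ) : ℂ) ^ 2 := by
  have h0 : ((1 - ‖ζ‖ ^ 2 : ℝ) : ℂ) ≠ 0 := by exact_mod_cast (one_sub_norm_sq_pos hζ).ne'
  have hconj : dbar (fun w => starRingEnd ℂ w) ζ = 1 := by
    simpa using (hasDerivAt_id ζ).dbar_conj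
  have dconj : DifferentiableAt ℝ (fun w : ℂ => starRingEnd ℂ w) ζ :=
    Complex.conjCLE.differentiableAt
  have d1 : DifferentiableAt ℝ (fun w : ℂ => 1 - z * starRingEnd ℂ w) ζ := by fun_prop
  have e1 : dbar (fun w => 1 - z * starRingEnd ℂ w) ζ = -z := by
    have : (fun w => 1 - z * starRingEnd ℂ w) = fun w => 1 + (-z) * starRingEnd ℂ w := by
      ext; ring
    rw [this, dbar_add (by fun_prop) (by fun_prop), dbar_mul (by fun_prop) dconj, hconj,
      (by fun_prop : DifferentiableAt ℂ (fun _ : ℂ => (1 : ℂ)) ζ).dbar_eq_zero,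
      (by fun_prop : DifferentiableAt ℂ (fun _ : ℂ => -z) ζ).dbar_eq_zero]
    ring
  have hfun : (fun w : ℂ => ((1 - ‖w‖ ^ 2 : ℝ) : ℂ)) = fun w => 1 + (-w) * starRingEnd ℂ w := by
    ext w
    rw [neg_mul, Complex.mul_conj, Complex.normSq_eq_norm_sq]
    push_cast; ring
  have d2 : DifferentiableAt ℝ (fun w : ℂ => ((1 - ‖w‖ ^ 2 : ℝ) : ℂ)) ζ := by
    rw [hfun]; fun_prop
  have e2 : dbar (fun w => ((1 - ‖w‖ ^ 2 : ℝ) : ℂ)) ζ = -ζ := by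
    rw [hfun, dbar_add (by fun_prop) (by fun_prop), dbar_mul (by fun_prop) dconj, hconj,
      (by fun_prop : DifferentiableAt ℂ (fun _ : ℂ => (1 : ℂ)) ζ).dbar_eq_zero,
      (by fun_prop : DifferentiableAt ℂ (fun w : ℂ => -w) ζ).dbar_eq_zero]
    ring
  have d3 : DifferentiableAt ℝ (fun w : ℂ => ((1 - ‖w‖ ^ 2 : ℝ) : ℂ)⁻¹) ζ := d2.inv h0
  rw [dbar_mul d1 d3, e1, dbar_inv d2 h0, e2]
  have h1 : ((1 - ‖ζ‖ ^ 2 : ℝ) : ℂ) = 1 - ζ * starRingEnd ℂ ζ := by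
    have := congrFun hfun ζ
    rw [this]; ring
  rw [h1] at h0 ⊢
  generalize starRingEnd ℂ ζ = c at *
  field_simp
  ring

lemma contDiff_mul_of_tsupport_subset {ψ : ℂ → ℂ} {k : ℂ → ℂ} (hψ : ContDiff ℝ 1 ψ)
    (hk : ∀ z ∈ tsupport ψ, ContDiffAt ℝ 1 k z) : ContDiff ℝ 1 fun z => ψ z * k z := by
  rw [contDiff_iff_contDiffAt]
  intro z
  by_cases hz : z ∈ tsupport ψ
  · exact hψ.contDiffAt.mul (hk z hz)
  · have : (fun z => ψ z * k z) =ᶠ[nhds z] fun _ => 0 := by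
      filter_upwards [notMem_tsupport_iff_eventuallyEq.1 hz] with w hw
      simp [hw]
    exact contDiffAt_const.congr_of_eventuallyEq this

lemma contDiffAt_inv_one_sub_norm_sq {z : ℂ} (hz : z ∈ ball (0 : ℂ) 1) :
    ContDiffAt ℝ 1 (fun w : ℂ => ((1 - ‖w‖ ^ 2 : ℝ) : ℂ)⁻¹) z := by
  have h0 : ((1 - ‖z‖ ^ 2 : ℝ) : ℂ) ≠ 0 := by exact_mod_cast (one_sub_norm_sq_pos hz).ne'
  refine ContDiffAt.inv ?_ h0
  have h1 : ContDiff ℝ 1 (fun ζ : ℂ => ‖ζ‖ ^ 2) := contDiff_id.norm_sq ℝ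
  exact (Complex.ofRealCLM.contDiff.comp (contDiff_const.sub h1)).contDiffAt

lemma setIntegral_hypMeasure_eq {ψ : ℂ → ℂ} (hs : tsupport ψ ⊆ ball 0 1) :
    ∫ ζ, ψ ζ ∂hypMeasure = (Real.pi : ℂ)⁻¹ * ∫ ζ, ψ ζ * (((1 - ‖ζ‖ ^ 2 : ℝ) : ℂ)⁻¹) ^ 2 := by
  rw [hypMeasure, integral_withDensity_eq_integral_toReal_smul₀ (by fun_prop)
    (.of_forall fun _ => ENNReal.ofReal_lt_top), setIntegral_eq_integral_of_forall_compl_eq_zero,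
    ← integral_const_mul]
  · congr 1; ext ζ
    rw [ENNReal.toReal_ofReal (by have := Real.pi_pos; positivity), Complex.real_smul]
    push_cast
    have : (Real.pi : ℂ) ≠ 0 := by exact_mod_cast Real.pi_ne_zero
    simp only [one_div, mul_inv, inv_pow]
    ring
  · intro ζ hζ
    rw [image_eq_zero_of_notMem_tsupport fun h => hζ (hs h), smul_zero]

/-- The reproducing identity behind the hyperbolic isoperimetric inequality. -/
lemma add_integral_hypMeasure_eq {ψ : ℂ → ℂ} (hψ : ContDiff ℝ 1 ψ) (hc : HasCompactSupport ψ)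
    (hs : tsupport ψ ⊆ ball 0 1) {z : ℂ} (hz : z ∈ ball (0 : ℂ) 1) :
    ψ z + ∫ ζ, ψ ζ ∂hypMeasure =
      - ∫ ζ, (Real.pi : ℂ)⁻¹ * (dbar ψ ζ * ((1 - ‖ζ‖ ^ 2 : ℝ) : ℂ)⁻¹) * (mob ζ z)⁻¹ := by
  have hpi : (Real.pi : ℂ) ≠ 0 := by exact_mod_cast Real.pi_ne_zero
  let k : ℂ → ℂ := fun w => (1 - z * starRingEnd ℂ w) * ((1 - ‖w‖ ^ 2 : ℝ) : ℂ)⁻¹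
  have hk : ∀ w ∈ ball (0 : ℂ) 1, ContDiffAt ℝ 1 k w := fun w hw => by
    have : ContDiff ℝ 1 fun w : ℂ => starRingEnd ℂ w := Complex.conjCLE.contDiff
    exact (contDiff_const.sub (contDiff_const.mul this)).contDiffAt.mul
      (contDiffAt_inv_one_sub_norm_sq hw)
  have hΨ : ContDiff ℝ 1 fun ζ => ψ ζ * k ζ :=
    contDiff_mul_of_tsupport_subset hψ fun w hw => hk w (hs hw)
  have hΨc : HasCompactSupport fun ζ => ψ ζ * k ζ := hc.mul_right
  have hP := integral_dbar_div_sub hΨ hΨc z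
  have hkz : k z = 1 := by
    have h0 : ((1 - ‖z‖ ^ 2 : ℝ) : ℂ) ≠ 0 := by exact_mod_cast (one_sub_norm_sq_pos hz).ne'
    have : (1 - z * starRingEnd ℂ z) = ((1 - ‖z‖ ^ 2 : ℝ) : ℂ) := by
      rw [Complex.mul_conj, Complex.normSq_eq_norm_sq]; push_cast; ring
    simp only [k]
    rw [this, mul_inv_cancel₀ h0]
  rw [hkz, mul_one] at hP
  have hpt : ∀ ζ, ζ ≠ z → dbar (fun ζ => ψ ζ * k ζ) ζ / (ζ - z) =
      dbar ψ ζ * ((1 - ‖ζ‖ ^ 2 : ℝ) : ℂ)⁻¹ * (mob ζ z)⁻¹ +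
        ψ ζ * (((1 - ‖ζ‖ ^ 2 : ℝ) : ℂ)⁻¹) ^ 2 := by
    intro ζ hζ
    have h0 : ζ - z ≠ 0 := sub_ne_zero.2 hζ
    by_cases hζs : ζ ∈ tsupport ψ
    · have hζD := hs hζs
      rw [dbar_mul (hψ.differentiable one_ne_zero).differentiableAt
        ((hk ζ hζD).differentiableAt one_ne_zero)]
      have := dbar_one_sub_mul_conj_div (z := z) hζD
      simp only [k] at this ⊢
      rw [this, mob, inv_div]
      generalize ((1 - ‖ζ‖ ^ 2 : ℝ) : ℂ) = y
      field_simp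
    · have h1 := notMem_tsupport_iff_eventuallyEq.1 hζs
      have h2 : ψ ζ = 0 := image_eq_zero_of_notMem_tsupport hζs
      have h3 : dbar ψ ζ = 0 := by
        rw [dbar, h1.fderiv_eq]; simp
      have h4 : dbar (fun ζ => ψ ζ * k ζ) ζ = 0 := by
        have : (fun z => ψ z * k z) =ᶠ[nhds ζ] fun _ => 0 := by
          filter_upwards [h1] with w hw
          simp [hw]
        rw [dbar, this.fderiv_eq]; simp
      rw [h2, h3, h4]; simp
  have hw : Continuous fun ζ => ψ ζ * (((1 - ‖ζ‖ ^ 2 : ℝ) : ℂ)⁻¹) ^ 2 :=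
    (contDiff_mul_of_tsupport_subset hψ
      fun w hw => (contDiffAt_inv_one_sub_norm_sq (hs hw)).pow 2).continuous
  have hwi : Integrable fun ζ => ψ ζ * (((1 - ‖ζ‖ ^ 2 : ℝ) : ℂ)⁻¹) ^ 2 :=
    hw.integrable_of_hasCompactSupport hc.mul_right
  have htot : Integrable fun ζ => dbar (fun ζ => ψ ζ * k ζ) ζ / (ζ - z) := by
    obtain ⟨C, hC⟩ := hΨc.dbar.exists_bound_of_continuous (continuous_dbar hΨ)
    obtain ⟨R, hR⟩ := hΨc.dbar.isCompact.isBounded.subset_ball z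
    have hI := (integrable_one_div_norm_ball z R).const_mul C
    rw [← integrableOn_iff_integrable_of_support_subset (s := ball z R)]
    · refine Integrable.mono' hI ?_ (.of_forall fun ζ => ?_)
      · have := (continuous_dbar hΨ).measurable
        exact Measurable.aestronglyMeasurable (by fun_prop)
      · rw [norm_div, div_eq_mul_one_div]
        gcongr
        exact hC ζ
    · intro ζ hζ
      apply hR
      apply subset_tsupport
      intro h
      apply hζ
      simp only [h, zero_div]
  have hae : (fun ζ => dbar (fun ζ => ψ ζ * k ζ) ζ / (ζ - z)) =ᵐ[volume] fun ζ =>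
      dbar ψ ζ * ((1 - ‖ζ‖ ^ 2 : ℝ) : ℂ)⁻¹ * (mob ζ z)⁻¹ +
        ψ ζ * (((1 - ‖ζ‖ ^ 2 : ℝ) : ℂ)⁻¹) ^ 2 := by
    filter_upwards [Measure.ae_ne volume z] with ζ hζ using hpt ζ hζ
  have hI1 : Integrable fun ζ => dbar ψ ζ * ((1 - ‖ζ‖ ^ 2 : ℝ) : ℂ)⁻¹ * (mob ζ z)⁻¹ := by
    have := (htot.congr hae).sub hwi
    refine this.congr (.of_forall fun ζ => ?_)
    simp
  rw [integral_congr_ae hae, integral_add hI1 hwi] at hP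
  rw [setIntegral_hypMeasure_eq hs]
  simp only [mul_assoc, integral_const_mul] at hP ⊢
  generalize (∫ ζ, ψ ζ * (((1 - ‖ζ‖ ^ 2 : ℝ) : ℂ)⁻¹) ^ 2) = X at *
  generalize (∫ ζ, dbar ψ ζ * (((1 - ‖ζ‖ ^ 2 : ℝ) : ℂ)⁻¹ * (mob ζ z)⁻¹)) = Y at *
  have : Y = -(Real.pi * ψ z) - X := by rw [← hP]; ring
  rw [this]
  field_simp
  ring

/-- A functional form of the hyperbolic isoperimetric inequality. -/
theorem sqrt_add_sq_le_integral_dbar {ψ : ℂ → ℝ} (hψ : ContDiff ℝ 1 ψ) (hc : HasCompactSupport ψ)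
    (hs : tsupport ψ ⊆ ball 0 1) (hψ0 : ∀ z, 0 ≤ ψ z) {E : Set ℂ} (hEm : MeasurableSet E)
    (hE1 : ∀ z ∈ E, ψ z = 1) {A : ℝ} (hA : 0 ≤ A) (hE : hypMeasure E = ENNReal.ofReal A) :
    √(A + A ^ 2) ≤ Real.pi⁻¹ * ∫ ζ, ‖dbar (fun z => (ψ z : ℂ)) ζ‖ / (1 - ‖ζ‖ ^ 2) := by
  rcases hA.eq_or_lt with rfl | hA
  · have h0 : 0 ≤ ∫ ζ, ‖dbar (fun z => (ψ z : ℂ)) ζ‖ / (1 - ‖ζ‖ ^ 2) := by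
      refine integral_nonneg fun ζ => ?_
      by_cases hζ : ζ ∈ ball (0 : ℂ) 1
      · have := one_sub_norm_sq_pos hζ
        positivity
      · have h1 : ψ =ᶠ[nhds ζ] 0 :=
          notMem_tsupport_iff_eventuallyEq.1 fun h => hζ (hs h)
        have h2 : (fun z => (ψ z : ℂ)) =ᶠ[nhds ζ] fun _ => 0 := by
          filter_upwards [h1] with w hw
          simp [hw]
        simp [dbar, h2.fderiv_eq]
    have := Real.pi_pos
    simp only [ne_eq, OfNat.ofNat_ne_zero, not_false_eq_true, zero_pow, add_zero, Real.sqrt_zero]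
    positivity
  let Ψ : ℂ → ℂ := fun z => (ψ z : ℂ)
  have hΨ : ContDiff ℝ 1 Ψ := Complex.ofRealCLM.contDiff.comp hψ
  have hΨc : HasCompactSupport Ψ := hc.comp_left (g := fun x : ℝ => (x : ℂ)) (by simp)
  have hts : tsupport Ψ ⊆ tsupport ψ := closure_mono fun z hz => by
    simpa [Ψ] using hz
  have hΨs : tsupport Ψ ⊆ ball 0 1 := hts.trans hs
  have hED : E ⊆ ball 0 1 := fun z hz => hs (subset_tsupport _ (by simp [hE1 z hz]))
  let w : ℂ → ℂ := fun ζ => (Real.pi : ℂ)⁻¹ * (dbar Ψ ζ * ((1 - ‖ζ‖ ^ 2 : ℝ) : ℂ)⁻¹)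
  have hoff : ∀ ζ, ζ ∉ tsupport Ψ → dbar Ψ ζ = 0 := fun ζ hζ => by
    rw [dbar, (notMem_tsupport_iff_eventuallyEq.1 hζ).fderiv_eq]; simp
  have hwoff : ∀ ζ, ζ ∉ ball (0 : ℂ) 1 → w ζ = 0 := fun ζ hζ => by
    simp [w, hoff ζ fun h => hζ (hΨs h)]
  have hwcont : Continuous w := by
    refine continuous_const.mul (continuous_iff_continuousAt.2 fun ζ => ?_)
    by_cases hζ : ζ ∈ tsupport Ψ
    · exact (continuous_dbar hΨ).continuousAt.mul
        (contDiffAt_inv_one_sub_norm_sq (hΨs hζ)).continuousAt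
    · have : (fun ζ => dbar Ψ ζ * ((1 - ‖ζ‖ ^ 2 : ℝ) : ℂ)⁻¹) =ᶠ[nhds ζ] fun _ => 0 := by
        filter_upwards [(isClosed_tsupport Ψ).isOpen_compl.mem_nhds hζ] with x hx
        simp [hoff x hx]
      exact continuousAt_const.congr this.symm
  have hwi : Integrable w := hwcont.integrable_of_hasCompactSupport (by
    refine HasCompactSupport.intro hΨc fun ζ hζ => ?_
    simp [w, hoff ζ hζ])
  have hnorm : ∀ ζ, ‖w ζ‖ = Real.pi⁻¹ * (‖dbar Ψ ζ‖ / (1 - ‖ζ‖ ^ 2)) := by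
    intro ζ
    by_cases hζ : ζ ∈ ball (0 : ℂ) 1
    · simp only [w, norm_mul, norm_inv, Complex.norm_real,
        Real.norm_of_nonneg (one_sub_norm_sq_pos hζ).le, Real.norm_of_nonneg Real.pi_pos.le]
      rfl
    · rw [hwoff ζ hζ, hoff ζ fun h => hζ (hΨs h)]; simp
  rw [← integral_const_mul]
  simp_rw [← show ∀ ζ, ‖w ζ‖ = Real.pi⁻¹ * (‖dbar (fun z => (ψ z : ℂ)) ζ‖ / (1 - ‖ζ‖ ^ 2)) from hnorm]
  have hEtop : hypMeasure E ≠ ⊤ := by simp [hE]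
  obtain ⟨C, hC⟩ := exists_setIntegral_inv_norm_mob_le hEtop
  have : IsFiniteMeasure (hypMeasure.restrict E) := ⟨by simpa using hEtop.lt_top⟩
  have hmm : Measurable fun x : ℂ × ℂ => w x.2 * (mob x.2 x.1)⁻¹ := by
    have := hwcont.measurable
    unfold mob
    fun_prop
  have hprod : Integrable (Function.uncurry fun z ζ => w ζ * (mob ζ z)⁻¹)
      ((hypMeasure.restrict E).prod volume) := by
    refine (integrable_prod_iff' hmm.aestronglyMeasurable).2 ⟨?_, ?_⟩
    · refine .of_forall fun ζ => ?_
      by_cases hζ : ζ ∈ ball (0 : ℂ) 1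
      · refine Integrable.const_mul ?_ (w ζ)
        refine (integrableOn_inv_norm_mob hζ hEtop).mono'
          (measurable_mob ζ).inv.aestronglyMeasurable (.of_forall fun z => by simp)
      · simp [hwoff ζ hζ]
    · refine Integrable.mono' (hwi.norm.const_mul C) ?_ (.of_forall fun ζ => ?_)
      · exact (hmm.norm.comp measurable_swap).aestronglyMeasurable.integral_prod_right'
      · rw [Real.norm_of_nonneg (integral_nonneg fun _ => norm_nonneg _)]
        simp only [norm_mul, norm_inv, integral_const_mul]
        by_cases hζ : ζ ∈ ball (0 : ℂ) 1
        · rw [mul_comm]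
          exact mul_le_mul_of_nonneg_right (hC ζ hζ) (norm_nonneg _)
        · simp [hwoff ζ hζ]
  have hswap := integral_integral_swap hprod
  set N := ∫ ζ, ψ ζ ∂hypMeasure with hN
  have hNc : ∫ ζ, Ψ ζ ∂hypMeasure = (N : ℂ) := integral_ofReal
  have hNA : A ≤ N := by
    by_cases hint : Integrable ψ hypMeasure
    · have h1 : ∫ ζ in E, ψ ζ ∂hypMeasure = A := by
        rw [setIntegral_congr_fun hEm hE1, setIntegral_const, measureReal_def, hE,
          ENNReal.toReal_ofReal hA.le]
        simp
      rw [← h1]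
      exact setIntegral_le_integral hint (.of_forall hψ0)
    · exfalso
      apply hint
      rw [hypMeasure, integrable_withDensity_iff_integrable_smul₀' (by fun_prop)
        (.of_forall fun _ => ENNReal.ofReal_lt_top)]
      refine Integrable.integrableOn ?_
      have h1 : Continuous fun ζ => Ψ ζ * (((1 - ‖ζ‖ ^ 2 : ℝ) : ℂ)⁻¹) ^ 2 :=
        (contDiff_mul_of_tsupport_subset hΨ
          fun w hw => (contDiffAt_inv_one_sub_norm_sq (hΨs hw)).pow 2).continuous
      have h2 := ((h1.integrable_of_hasCompactSupport (μ := volume) hΨc.mul_right).re).const_mul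
        Real.pi⁻¹
      refine h2.congr (.of_forall fun ζ => ?_)
      have h3 : Ψ ζ * (((1 - ‖ζ‖ ^ 2 : ℝ) : ℂ)⁻¹) ^ 2 =
        ((ψ ζ * ((1 - ‖ζ‖ ^ 2)⁻¹) ^ 2 : ℝ) : ℂ) := by simp [Ψ]
      simp only [h3, RCLike.re_to_complex, Complex.ofReal_re, smul_eq_mul]
      rw [ENNReal.toReal_ofReal (by have := Real.pi_pos; positivity), one_div, mul_inv, inv_pow]
      ring
  have hinner : ∀ z ∈ E, ∫ ζ, w ζ * (mob ζ z)⁻¹ = -(1 + N : ℝ) := by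
    intro z hz
    have h1 := add_integral_hypMeasure_eq hΨ hΨc hΨs (hED hz)
    rw [hNc] at h1
    simp only [Ψ, hE1 z hz] at h1
    rw [← neg_eq_iff_eq_neg.2 h1]
    simp
  rw [setIntegral_congr_fun hEm hinner, setIntegral_const, measureReal_def, hE,
    ENNReal.toReal_ofReal hA.le] at hswap
  have hnn : A * (1 + N) = ‖(A : ℝ) • (-((1 + N : ℝ) : ℂ))‖ := by
    rw [norm_smul, norm_neg, Complex.norm_real, Real.norm_of_nonneg hA.le,
      Real.norm_of_nonneg (by linarith)]
  have hbound : A * (1 + N) ≤ (∫ ζ, ‖w ζ‖) * √(A + A ^ 2) := by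
    rw [hnn, hswap, ← integral_mul_const]
    refine norm_integral_le_of_norm_le (hwi.norm.mul_const _) (.of_forall fun ζ => ?_)
    rw [integral_const_mul, norm_mul]
    by_cases hζ : ζ ∈ ball (0 : ℂ) 1
    · gcongr
      exact norm_setIntegral_inv_mob_le hζ hEm hA.le hE
    · simp [hwoff ζ hζ]
  have hpos : 0 < √(A + A ^ 2) := by positivity
  have hsq : √(A + A ^ 2) * √(A + A ^ 2) = A + A ^ 2 := Real.mul_self_sqrt (by positivity)
  have : √(A + A ^ 2) * √(A + A ^ 2) ≤ (∫ ζ, ‖w ζ‖) * √(A + A ^ 2) := by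
    rw [hsq]
    nlinarith
  exact le_of_mul_le_mul_right this hpos

/-- The function `|f|ᵖ (1 - |z|²)^α`, extended by zero outside of the unit disk. -/
noncomputable def weightedPow (f : ℂ → ℂ) (p α : ℝ) (z : ℂ) : ℝ :=
  ‖f z‖ ^ p * (max 0 (1 - ‖z‖ ^ 2)) ^ α

section weightedPow

variable {f : ℂ → ℂ} {p α : ℝ}

lemma weightedPow_nonneg (z : ℂ) : 0 ≤ weightedPow f p α z := by
  unfold weightedPow; positivity

lemma continuous_weightedPow (hf : Continuous f) (hp : 0 < p) (hα : 0 < α) :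
    Continuous (weightedPow f p α) := by
  unfold weightedPow
  exact (hf.norm.rpow_const fun _ => .inr hp.le).mul
    (Continuous.rpow_const (by fun_prop) fun _ => .inr hα.le)

lemma mem_ball_of_weightedPow_pos (hα : 0 < α) {z : ℂ} (hz : 0 < weightedPow f p α z) :
    z ∈ ball (0 : ℂ) 1 := by
  by_contra h
  rw [mem_ball_zero_iff, not_lt] at h
  have : max 0 (1 - ‖z‖ ^ 2) = 0 := max_eq_left (by nlinarith)
  simp [weightedPow, this, Real.zero_rpow hα.ne'] at hz

lemma ne_zero_of_weightedPow_pos (hp : 0 < p) {z : ℂ} (hz : 0 < weightedPow f p α z) :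
    f z ≠ 0 := by
  intro h
  simp [weightedPow, h, Real.zero_rpow hp.ne'] at hz

lemma weightedPow_eq_exp {z : ℂ} (hz : z ∈ ball (0 : ℂ) 1) (h0 : f z ≠ 0) :
    weightedPow f p α z =
      Real.exp (p / 2 * Real.log (‖f z‖ ^ 2) + α * Real.log (1 - ‖z‖ ^ 2)) := by
  have h1 := one_sub_norm_sq_pos hz
  have h2 : 0 < ‖f z‖ := norm_pos_iff.2 h0
  rw [weightedPow, max_eq_right h1.le, Real.exp_add, Real.rpow_def_of_pos h1,
    Real.rpow_def_of_pos h2, Real.log_pow]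
  congr 2 <;> push_cast <;> ring

lemma isOpen_weightedPow_pos (hf : Continuous f) (hp : 0 < p) (hα : 0 < α) :
    IsOpen {z | 0 < weightedPow f p α z} :=
  isOpen_lt continuous_const (continuous_weightedPow hf hp hα)

lemma isCompact_le_weightedPow (hf : Continuous f) (hp : 0 < p) (hα : 0 < α) {a : ℝ} (ha : 0 < a) :
    IsCompact {z | a ≤ weightedPow f p α z} := by
  refine Metric.isCompact_of_isClosed_isBounded
    (isClosed_le continuous_const (continuous_weightedPow hf hp hα))
    (isBounded_ball.subset (s := _) (t := ball (0 : ℂ) 1) fun z hz => ?_)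
  exact mem_ball_of_weightedPow_pos hα (ha.trans_le hz)

lemma hypMeasure_lt_top_of_isCompact {K : Set ℂ} (hK : IsCompact K) (hKD : K ⊆ ball 0 1) :
    hypMeasure K < ⊤ := by
  obtain ⟨r, hr, hKr⟩ := exists_lt_subset_ball hK.isClosed hKD
  have h1 : K ⊆ ball 0 (max r (1 / 2)) := hKr.trans (ball_subset_ball (le_max_left _ _))
  refine (measure_mono h1).trans_lt ?_
  rw [hypMeasure_ball (by positivity) (by simp; constructor <;> linarith)]
  exact ENNReal.ofReal_lt_top

lemma hypMeasure_lt_weightedPow_lt_top (hf : Continuous f) (hp : 0 < p) (hα : 0 < α) {a : ℝ}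
    (ha : 0 < a) : hypMeasure {z | a < weightedPow f p α z} < ⊤ := by
  have h1 : {z | a < weightedPow f p α z} ⊆ {z | a ≤ weightedPow f p α z} := fun z (h : a < _) => h.le
  have h2 : {z | a ≤ weightedPow f p α z} ⊆ ball 0 1 := fun z hz =>
    mem_ball_of_weightedPow_pos hα (lt_of_lt_of_le ha hz)
  exact (measure_mono h1).trans_lt
    (hypMeasure_lt_top_of_isCompact (isCompact_le_weightedPow hf hp hα ha) h2)

/-- The logarithmic derivative `∂ log (|f|ᵖ (1 - |z|²)^α)`. -/
noncomputable def weightedLogDeriv (f : ℂ → ℂ) (p α : ℝ) (z : ℂ) : ℂ :=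
  p / 2 * (deriv f z / f z) - α * (starRingEnd ℂ z * ((1 - ‖z‖ ^ 2 : ℝ) : ℂ)⁻¹)

lemma dbar_ofReal_comp {h : ℝ → ℝ} {h' : ℝ} {X : ℂ → ℝ} {z : ℂ} (hh : HasDerivAt h h' (X z))
    (hX : DifferentiableAt ℝ X z) :
    dbar (fun w => ((h (X w) : ℝ) : ℂ)) z = h' * dbar (fun w => (X w : ℂ)) z := by
  have h1 : HasFDerivAt (fun w => (X w : ℂ)) _ z :=
    Complex.ofRealCLM.hasFDerivAt.comp z hX.hasFDerivAt
  have h2 : HasFDerivAt (fun w => ((h (X w) : ℝ) : ℂ)) _ z :=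
    Complex.ofRealCLM.hasFDerivAt.comp z (hh.comp_hasFDerivAt z hX.hasFDerivAt)
  rw [h1.dbar_eq, h2.dbar_eq]
  simp
  ring

lemma dbar_ofReal_one_sub_norm_sq (z : ℂ) : dbar (fun w => ((1 - ‖w‖ ^ 2 : ℝ) : ℂ)) z = -z := by
  have hconj : dbar (fun w => starRingEnd ℂ w) z = 1 := by
    simpa using (hasDerivAt_id z).dbar_conj
  have dconj : DifferentiableAt ℝ (fun w : ℂ => starRingEnd ℂ w) z :=
    Complex.conjCLE.differentiableAt
  have hfun : (fun w : ℂ => ((1 - ‖w‖ ^ 2 : ℝ) : ℂ)) = fun w => 1 + (-w) * starRingEnd ℂ w := by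
    ext w
    rw [neg_mul, Complex.mul_conj, Complex.normSq_eq_norm_sq]
    push_cast; ring
  rw [hfun, dbar_add (by fun_prop) (by fun_prop), dbar_mul (by fun_prop) dconj, hconj,
    (by fun_prop : DifferentiableAt ℂ (fun _ : ℂ => (1 : ℂ)) z).dbar_eq_zero,
    (by fun_prop : DifferentiableAt ℂ (fun w : ℂ => -w) z).dbar_eq_zero]
  ring

lemma dbar_ofReal_norm_sq (hf : Differentiable ℂ f) (z : ℂ) :
    dbar (fun w => ((‖f w‖ ^ 2 : ℝ) : ℂ)) z = f z * starRingEnd ℂ (deriv f z) := by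
  have dconj : DifferentiableAt ℝ (fun w : ℂ => starRingEnd ℂ (f w)) z :=
    Complex.conjCLE.differentiableAt.comp z ((hf z).restrictScalars ℝ)
  have hfun : (fun w : ℂ => ((‖f w‖ ^ 2 : ℝ) : ℂ)) = fun w => f w * starRingEnd ℂ (f w) := by
    ext w
    rw [Complex.mul_conj, Complex.normSq_eq_norm_sq]
  rw [hfun, dbar_mul ((hf z).restrictScalars ℝ) dconj, (hf z).dbar_eq_zero,
    (hf z).hasDerivAt.dbar_conj]
  ring

lemma Differentiable.contDiff_norm_sq (hf : Differentiable ℂ f) :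
    ContDiff ℝ 1 fun z => ‖f z‖ ^ 2 :=
  (hf.contDiff.restrict_scalars ℝ).norm_sq ℝ

lemma contDiffAt_weightedLog (hf : Differentiable ℂ f) {z : ℂ} (hz : z ∈ ball (0 : ℂ) 1)
    (h0 : f z ≠ 0) : ContDiffAt ℝ 1
      (fun z => p / 2 * Real.log (‖f z‖ ^ 2) + α * Real.log (1 - ‖z‖ ^ 2)) z := by
  have h1 := hf.contDiff_norm_sq.contDiffAt (x := z)
  have h2 : ContDiffAt ℝ 1 (fun z : ℂ => 1 - ‖z‖ ^ 2) z :=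
    contDiffAt_const.sub (contDiff_id.norm_sq ℝ).contDiffAt
  exact (contDiffAt_const.mul (h1.log (by positivity))).add
    (contDiffAt_const.mul (h2.log (one_sub_norm_sq_pos hz).ne'))

lemma dbar_weightedLog (hf : Differentiable ℂ f) {z : ℂ} (hz : z ∈ ball (0 : ℂ) 1)
    (h0 : f z ≠ 0) :
    dbar (fun z => ((p / 2 * Real.log (‖f z‖ ^ 2) + α * Real.log (1 - ‖z‖ ^ 2) : ℝ) : ℂ)) z =
      starRingEnd ℂ (weightedLogDeriv f p α z) := by
  have hX : DifferentiableAt ℝ (fun w => ‖f w‖ ^ 2) z :=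
    (hf.contDiff_norm_sq.differentiable one_ne_zero) z
  have hY : DifferentiableAt ℝ (fun w : ℂ => 1 - ‖w‖ ^ 2) z :=
    ((contDiff_const.sub (contDiff_id.norm_sq ℝ) : ContDiff ℝ 1 fun w : ℂ => 1 - ‖w‖ ^ 2).differentiable
      one_ne_zero) z
  have hY0 := (one_sub_norm_sq_pos hz).ne'
  have hX0 : ‖f z‖ ^ 2 ≠ 0 := by positivity
  have d1 := dbar_ofReal_comp (h := fun x => p / 2 * Real.log x) (X := fun w => ‖f w‖ ^ 2) (z := z)
    ((Real.hasDerivAt_log hX0).const_mul (p / 2)) hX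
  have d2 := dbar_ofReal_comp (h := fun x => α * Real.log x) (X := fun w : ℂ => 1 - ‖w‖ ^ 2) (z := z)
    ((Real.hasDerivAt_log hY0).const_mul α) hY
  rw [dbar_ofReal_norm_sq hf] at d1
  rw [dbar_ofReal_one_sub_norm_sq] at d2
  have e1 : DifferentiableAt ℝ (fun w => ((p / 2 * Real.log (‖f w‖ ^ 2) : ℝ) : ℂ)) z :=
    Complex.ofRealCLM.differentiableAt.comp z ((hX.log hX0).const_mul (p / 2))
  have e2 : DifferentiableAt ℝ (fun w : ℂ => ((α * Real.log (1 - ‖w‖ ^ 2) : ℝ) : ℂ)) z :=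
    Complex.ofRealCLM.differentiableAt.comp z ((hY.log hY0).const_mul α)
  have : (fun z => ((p / 2 * Real.log (‖f z‖ ^ 2) + α * Real.log (1 - ‖z‖ ^ 2) : ℝ) : ℂ)) =
      fun z => ((p / 2 * Real.log (‖f z‖ ^ 2) : ℝ) : ℂ) + ((α * Real.log (1 - ‖z‖ ^ 2) : ℝ) : ℂ) := by
    ext; push_cast; rfl
  rw [this, dbar_add e1 e2, d1, d2, weightedLogDeriv]
  have hX1 : ((‖f z‖ ^ 2 : ℝ) : ℂ) = f z * starRingEnd ℂ (f z) := by
    rw [Complex.mul_conj, Complex.normSq_eq_norm_sq]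
  have hc : starRingEnd ℂ (f z) ≠ 0 := by simpa using h0
  simp only [map_sub, map_mul, map_div₀, map_inv₀, Complex.conj_conj, Complex.conj_ofReal, map_ofNat]
  rw [Complex.ofReal_mul, Complex.ofReal_mul, Complex.ofReal_inv, Complex.ofReal_inv, hX1]
  generalize ((1 - ‖z‖ ^ 2 : ℝ) : ℂ) = y
  push_cast
  field_simp
  ring

lemma contDiffAt_weightedLogDeriv (hf : Differentiable ℂ f) {z : ℂ} (hz : z ∈ ball (0 : ℂ) 1)
    (h0 : f z ≠ 0) : ContDiffAt ℝ 1 (weightedLogDeriv f p α) z := by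
  have h1 : ContDiffAt ℝ 1 (fun z => deriv f z / f z) z :=
    ((hf.contDiff.deriv').contDiffAt.div hf.contDiff.contDiffAt h0).restrict_scalars ℝ
  have h2 : ContDiff ℝ 1 fun w : ℂ => starRingEnd ℂ w := Complex.conjCLE.contDiff
  exact (contDiffAt_const.mul h1).sub
    (contDiffAt_const.mul (h2.contDiffAt.mul (contDiffAt_inv_one_sub_norm_sq hz)))

lemma dbar_weightedLogDeriv (hf : Differentiable ℂ f) {z : ℂ} (hz : z ∈ ball (0 : ℂ) 1)
    (h0 : f z ≠ 0) :
    dbar (weightedLogDeriv f p α) z = -(α * (((1 - ‖z‖ ^ 2 : ℝ) : ℂ)⁻¹) ^ 2) := by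
  have hY0 : ((1 - ‖z‖ ^ 2 : ℝ) : ℂ) ≠ 0 := by exact_mod_cast (one_sub_norm_sq_pos hz).ne'
  have h1 : DifferentiableAt ℂ (fun z => p / 2 * (deriv f z / f z) : ℂ → ℂ) z :=
    (((hf.contDiff (n := 2)).deriv'.differentiable one_ne_zero z).div (hf z) h0).const_mul _
  have dconj : DifferentiableAt ℝ (fun w : ℂ => starRingEnd ℂ w) z :=
    Complex.conjCLE.differentiableAt
  have hconj : dbar (fun w => starRingEnd ℂ w) z = 1 := by
    simpa using (hasDerivAt_id z).dbar_conj
  have dY : DifferentiableAt ℝ (fun w : ℂ => ((1 - ‖w‖ ^ 2 : ℝ) : ℂ)) z :=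
    Complex.ofRealCLM.differentiableAt.comp z
      (((contDiff_const.sub (contDiff_id.norm_sq ℝ) : ContDiff ℝ 1 fun w : ℂ => 1 - ‖w‖ ^ 2).differentiable
      one_ne_zero) z)
  have dYi : DifferentiableAt ℝ (fun w : ℂ => ((1 - ‖w‖ ^ 2 : ℝ) : ℂ)⁻¹) z := dY.inv hY0
  have hfun : weightedLogDeriv f p α = fun z => p / 2 * (deriv f z / f z) +
      (-α : ℂ) * (starRingEnd ℂ z * ((1 - ‖z‖ ^ 2 : ℝ) : ℂ)⁻¹) := by
    ext; simp only [weightedLogDeriv]; ring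
  rw [hfun, dbar_add (h1.restrictScalars ℝ) (by fun_prop), h1.dbar_eq_zero,
    dbar_mul (by fun_prop) (by fun_prop), dbar_mul dconj dYi, hconj, dbar_inv dY hY0,
    dbar_ofReal_one_sub_norm_sq,
    (by fun_prop : DifferentiableAt ℂ (fun _ : ℂ => (-α : ℂ)) z).dbar_eq_zero]
  have h1 : ((1 - ‖z‖ ^ 2 : ℝ) : ℂ) = 1 - z * starRingEnd ℂ z := by
    rw [Complex.mul_conj, Complex.normSq_eq_norm_sq]; push_cast; ring
  rw [h1] at hY0 ⊢
  generalize starRingEnd ℂ z = c at *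
  field_simp
  ring

end weightedPow

lemma continuous_mul_of_forall_mem {a : ℂ → ℝ} {k : ℂ → ℝ} {V : Set ℂ}
    (ha : Continuous a) (hV : tsupport a ⊆ V) (hk : ∀ z ∈ V, ContinuousAt k z) :
    Continuous fun z => a z * k z := by
  rw [continuous_iff_continuousAt]
  intro z
  by_cases hz : z ∈ tsupport a
  · exact ha.continuousAt.mul (hk z (hV hz))
  · have : (fun z => a z * k z) =ᶠ[nhds z] fun _ => 0 := by
      filter_upwards [notMem_tsupport_iff_eventuallyEq.1 hz] with w hw
      simp [hw]
    exact continuousAt_const.congr this.symm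

lemma integral_hypMeasure_eq_of_tsupport_subset {h : ℂ → ℝ} (hs : tsupport h ⊆ ball 0 1) :
    ∫ z, h z ∂hypMeasure = Real.pi⁻¹ * ∫ z, h z * ((1 - ‖z‖ ^ 2)⁻¹) ^ 2 := by
  rw [hypMeasure, integral_withDensity_eq_integral_toReal_smul₀ (by fun_prop)
    (.of_forall fun _ => ENNReal.ofReal_lt_top), setIntegral_eq_integral_of_forall_compl_eq_zero,
    ← integral_const_mul]
  · congr 1; ext ζ
    rw [ENNReal.toReal_ofReal (by have := Real.pi_pos; positivity), smul_eq_mul]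
    simp only [one_div, mul_inv, inv_pow]
    ring
  · intro ζ hζ
    rw [image_eq_zero_of_notMem_tsupport fun h => hζ (hs h), smul_zero]

lemma integral_hypMeasure_le_of_le_indicator {h : ℂ → ℝ} {C : ℝ} {S : Set ℂ}
    (hS : MeasurableSet S) (hfin : hypMeasure S ≠ ⊤) (h0 : ∀ z, 0 ≤ h z)
    (hle : ∀ z, h z ≤ S.indicator (fun _ => C) z) :
    ∫ z, h z ∂hypMeasure ≤ C * hypMeasure.real S := by
  have h1 : ∫ z, S.indicator (fun _ => C) z ∂hypMeasure = C * hypMeasure.real S := by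
    rw [integral_indicator hS, setIntegral_const, smul_eq_mul, mul_comm]
  rw [← h1]
  exact integral_mono_of_nonneg (.of_forall h0)
    ((integrable_indicator_iff hS).2 (integrableOn_const hfin)) (.of_forall hle)

lemma levelSet_inequality_aux {f : ℂ → ℂ} {p α : ℝ} (hf : Differentiable ℂ f) (hp : 0 < p)
    (hα : 0 < α) {a b I : ℝ} (ha : 0 < a) {Θ κ : ℝ → ℝ} (hΘC : ContDiff ℝ 1 Θ)
    (hΘ : ∀ t, 0 < t → HasDerivAt Θ (κ t / t) t) (hκ : Continuous κ) (hκ0 : ∀ t, 0 ≤ κ t)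
    (hκ1 : ∀ t, κ t ≤ 1) (hκa : ∀ t ≤ a, κ t = 0) (hκb : ∀ t, b ≤ t → κ t = 0)
    (hΘa : ∀ t ≤ a, Θ t = 0) (hΘb : ∀ t, b ≤ t → Θ t = I) (hΘ0 : ∀ t, 0 ≤ Θ t)
    (hΘI : ∀ t, Θ t ≤ I) (hI : 0 < I) (hab : a < b) :
    I * (hypMeasure.real {z | b ≤ weightedPow f p α z} +
        hypMeasure.real {z | b ≤ weightedPow f p α z} ^ 2) ≤
      α * hypMeasure.real {z | a < weightedPow f p α z} *
        (hypMeasure.real {z | a < weightedPow f p α z} -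
          hypMeasure.real {z | b ≤ weightedPow f p α z}) := by
  set u := weightedPow f p α with hu
  have huc : Continuous u := continuous_weightedPow hf.continuous hp hα
  set g := weightedLogDeriv f p α with hg
  let V := {z | 0 < u z}
  have hVo : IsOpen V := isOpen_weightedPow_pos hf.continuous hp hα
  have hVD : ∀ z ∈ V, z ∈ ball (0 : ℂ) 1 := fun z hz => mem_ball_of_weightedPow_pos hα hz
  have hV0 : ∀ z ∈ V, f z ≠ 0 := fun z hz => ne_zero_of_weightedPow_pos hp hz
  let K := {z | a ≤ u z}
  have hK : IsCompact K := isCompact_le_weightedPow hf.continuous hp hα ha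
  have hKV : K ⊆ V := fun z (hz : a ≤ u z) => ha.trans_le hz
  have hKD : K ⊆ ball 0 1 := fun z hz => hVD z (hKV hz)
  have htsΘ : tsupport (fun z => Θ (u z)) ⊆ K := by
    refine closure_minimal (fun z hz => ?_) hK.isClosed
    by_contra h
    exact hz (hΘa _ (not_le.1 h).le)
  have htsκ : tsupport (fun z => κ (u z)) ⊆ K := by
    refine closure_minimal (fun z hz => ?_) hK.isClosed
    by_contra h
    exact hz (hκa _ (not_le.1 h).le)
  have hcsΘ : HasCompactSupport fun z => Θ (u z) := hK.of_isClosed_subset (isClosed_tsupport _) htsΘ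
  have hcsκ : HasCompactSupport fun z => κ (u z) := hK.of_isClosed_subset (isClosed_tsupport _) htsκ
  -- regularity of `Θ ∘ u`
  have huv : ∀ z ∈ V, u =ᶠ[nhds z] fun z =>
      Real.exp (p / 2 * Real.log (‖f z‖ ^ 2) + α * Real.log (1 - ‖z‖ ^ 2)) := fun z hz => by
    filter_upwards [hVo.mem_nhds hz] with w hw
    exact weightedPow_eq_exp (hVD w hw) (hV0 w hw)
  have hucd : ∀ z ∈ V, ContDiffAt ℝ 1 u z := fun z hz =>
    (contDiffAt_weightedLog hf (hVD z hz) (hV0 z hz)).exp.congr_of_eventuallyEq (huv z hz)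
  have hΘu : ContDiff ℝ 1 fun z => Θ (u z) := by
    rw [contDiff_iff_contDiffAt]
    intro z
    by_cases hz : z ∈ tsupport fun z => Θ (u z)
    · exact hΘC.contDiffAt.comp z (hucd z (hKV (htsΘ hz)))
    · exact contDiffAt_const.congr_of_eventuallyEq (notMem_tsupport_iff_eventuallyEq.1 hz)
  have hΘuc : ContDiff ℝ 1 fun z => (Θ (u z) : ℂ) := Complex.ofRealCLM.contDiff.comp hΘu
  have hdbar : ∀ z, dbar (fun z => (Θ (u z) : ℂ)) z = κ (u z) * starRingEnd ℂ (g z) := by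
    intro z
    by_cases hz : 0 < u z
    · have h1 : (fun z => (Θ (u z) : ℂ)) =ᶠ[nhds z] fun z => (((fun x => Θ (Real.exp x))
          (p / 2 * Real.log (‖f z‖ ^ 2) + α * Real.log (1 - ‖z‖ ^ 2)) : ℝ) : ℂ) := by
        filter_upwards [huv z hz] with w hw
        rw [hw]
      have h2 : dbar (fun z => (Θ (u z) : ℂ)) z = dbar (fun z => (((fun x => Θ (Real.exp x))
          (p / 2 * Real.log (‖f z‖ ^ 2) + α * Real.log (1 - ‖z‖ ^ 2)) : ℝ) : ℂ)) z := by
        rw [dbar, dbar, h1.fderiv_eq]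
      have h3 := (huv z hz).eq_of_nhds
      have h4 : HasDerivAt (fun x => Θ (Real.exp x)) (κ (u z))
          (p / 2 * Real.log (‖f z‖ ^ 2) + α * Real.log (1 - ‖z‖ ^ 2)) := by
        have := (hΘ _ (Real.exp_pos _)).comp _ (Real.hasDerivAt_exp
          (p / 2 * Real.log (‖f z‖ ^ 2) + α * Real.log (1 - ‖z‖ ^ 2)))
        refine this.congr_deriv ?_
        rw [h3, div_mul_cancel₀ _ (Real.exp_pos _).ne']
      rw [h2, dbar_ofReal_comp h4 ((contDiffAt_weightedLog hf (hVD z hz)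
        (hV0 z hz)).differentiableAt one_ne_zero), dbar_weightedLog hf (hVD z hz) (hV0 z hz)]
    · have h1 : u z < a := by linarith
      have h2 : z ∉ tsupport fun z => Θ (u z) := fun h => not_lt.2 (htsΘ h) h1
      have h3 : (fun z => (Θ (u z) : ℂ)) =ᶠ[nhds z] fun _ => 0 := by
        filter_upwards [notMem_tsupport_iff_eventuallyEq.1 h2] with w hw
        simp [hw]
      rw [dbar, h3.fderiv_eq, hκa _ h1.le]
      simp
  -- integration by parts
  have htsΘc : tsupport (fun z => (Θ (u z) : ℂ)) ⊆ K := by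
    refine closure_minimal (fun z hz => ?_) hK.isClosed
    by_contra h
    exact hz (by simp [hΘa _ (not_le.1 h).le])
  have hcsΘc : HasCompactSupport fun z => (Θ (u z) : ℂ) :=
    hK.of_isClosed_subset (isClosed_tsupport _) htsΘc
  have hgcd : ∀ z ∈ V, ContDiffAt ℝ 1 g z := fun z hz =>
    contDiffAt_weightedLogDeriv hf (hVD z hz) (hV0 z hz)
  have hparts := integral_dbar_eq_zero (contDiff_mul_of_tsupport_subset hΘuc
    fun z hz => hgcd z (hKV (htsΘc hz))) hcsΘc.mul_right
  have hpt : ∀ z, dbar (fun z => (Θ (u z) : ℂ) * g z) z =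
      ((κ (u z) * ‖g z‖ ^ 2 - α * (Θ (u z) * ((1 - ‖z‖ ^ 2)⁻¹) ^ 2) : ℝ) : ℂ) := by
    intro z
    by_cases hz : 0 < u z
    · rw [dbar_mul (hΘuc.differentiable one_ne_zero z) ((hgcd z hz).differentiableAt one_ne_zero),
        hdbar, dbar_weightedLogDeriv hf (hVD z hz) (hV0 z hz), mul_assoc,
        ← Complex.normSq_eq_conj_mul_self, Complex.normSq_eq_norm_sq]
      push_cast
      ring
    · have h1 : u z < a := by linarith
      have h2 : z ∉ tsupport fun z => (Θ (u z) : ℂ) := fun h => not_lt.2 (htsΘc h) h1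
      have h3 : (fun z => (Θ (u z) : ℂ) * g z) =ᶠ[nhds z] fun _ => 0 := by
        filter_upwards [notMem_tsupport_iff_eventuallyEq.1 h2] with w hw
        simp [hw]
      rw [dbar, h3.fderiv_eq, hκa _ h1.le, hΘa _ h1.le]
      simp
  have hY : ∀ z ∈ V, ContinuousAt (fun z : ℂ => (1 - ‖z‖ ^ 2)⁻¹) z := fun z hz =>
    ContinuousAt.inv₀ (by fun_prop) (one_sub_norm_sq_pos (hVD z hz)).ne'
  have hgc : ∀ z ∈ V, ContinuousAt (fun z => ‖g z‖) z := fun z hz => (hgcd z hz).continuousAt.norm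
  have hκu : Continuous fun z => κ (u z) := hκ.comp huc
  have hint : ∀ {k : ℂ → ℝ}, (∀ z ∈ V, ContinuousAt k z) → Integrable fun z => κ (u z) * k z :=
    fun hk => (continuous_mul_of_forall_mem hκu (htsκ.trans hKV) hk).integrable_of_hasCompactSupport
      hcsκ.mul_right
  have hP := hint (k := fun z => ‖g z‖ ^ 2) fun z hz => (hgc z hz).pow 2
  have hQ := hint (k := fun z => ‖g z‖ * (1 - ‖z‖ ^ 2)⁻¹) fun z hz => (hgc z hz).mul (hY z hz)
  have hR := hint (k := fun z => ((1 - ‖z‖ ^ 2)⁻¹) ^ 2) fun z hz => (hY z hz).pow 2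
  have hT : Integrable fun z => Θ (u z) * ((1 - ‖z‖ ^ 2)⁻¹) ^ 2 :=
    (continuous_mul_of_forall_mem hΘu.continuous (htsΘ.trans hKV)
      fun z hz => (hY z hz).pow 2).integrable_of_hasCompactSupport hcsΘ.mul_right
  simp_rw [hpt] at hparts
  rw [integral_complex_ofReal, Complex.ofReal_eq_zero, integral_sub hP (hT.const_mul α),
    integral_const_mul] at hparts
  set P := ∫ z, κ (u z) * ‖g z‖ ^ 2
  set Q := ∫ z, κ (u z) * (‖g z‖ * (1 - ‖z‖ ^ 2)⁻¹)
  set R := ∫ z, κ (u z) * ((1 - ‖z‖ ^ 2)⁻¹) ^ 2 with hRdef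
  set T := ∫ z, Θ (u z) * ((1 - ‖z‖ ^ 2)⁻¹) ^ 2 with hTdef
  -- Cauchy–Schwarz
  have hCS : Q ^ 2 ≤ P * R := by
    have h1 : ∀ x : ℝ, 0 ≤ R * (x * x) + (-2 * Q) * x + P := by
      intro x
      have h2 : ∫ z, κ (u z) * (‖g z‖ - x * (1 - ‖z‖ ^ 2)⁻¹) ^ 2 =
          R * (x * x) + (-2 * Q) * x + P := by
        have h3 : ∀ z, κ (u z) * (‖g z‖ - x * (1 - ‖z‖ ^ 2)⁻¹) ^ 2 =
            κ (u z) * ((1 - ‖z‖ ^ 2)⁻¹) ^ 2 * (x * x) +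
            κ (u z) * (‖g z‖ * (1 - ‖z‖ ^ 2)⁻¹) * (-2 * x) + κ (u z) * ‖g z‖ ^ 2 := fun z => by ring
        simp_rw [h3]
        have hRQ : Integrable fun z => κ (u z) * ((1 - ‖z‖ ^ 2)⁻¹) ^ 2 * (x * x) +
            κ (u z) * (‖g z‖ * (1 - ‖z‖ ^ 2)⁻¹) * (-2 * x) :=
          (hR.mul_const _).add (hQ.mul_const _)
        rw [integral_add hRQ hP,
          integral_add (hR.mul_const _) (hQ.mul_const _), integral_mul_const, integral_mul_const]
        ring
      rw [← h2]
      exact integral_nonneg fun z => mul_nonneg (hκ0 _) (sq_nonneg _)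
    have := discrim_le_zero h1
    rw [discrim] at this
    nlinarith
  -- isoperimetric inequality
  set E := {z | b ≤ u z} with hEdef
  have hEK : E ⊆ K := fun z (hz : b ≤ u z) => hab.le.trans hz
  have hEm : MeasurableSet E := measurableSet_le measurable_const huc.measurable
  have hEtop : hypMeasure E ≠ ⊤ := ((measure_mono hEK).trans_lt
    (hypMeasure_lt_top_of_isCompact hK hKD)).ne
  set A := hypMeasure.real E with hAdef
  have hEA : hypMeasure E = ENNReal.ofReal A := by
    rw [hAdef, measureReal_def, ENNReal.ofReal_toReal hEtop]
  have hA0 : 0 ≤ A := measureReal_nonneg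
  have hψ : ContDiff ℝ 1 fun z => I⁻¹ * Θ (u z) := contDiff_const.mul hΘu
  have hψts : tsupport (fun z => I⁻¹ * Θ (u z)) ⊆ K := by
    refine closure_minimal (fun z hz => ?_) hK.isClosed
    by_contra h
    exact hz (by simp [hΘa _ (not_le.1 h).le])
  have hiso := sqrt_add_sq_le_integral_dbar hψ
    (hK.of_isClosed_subset (isClosed_tsupport _) hψts) (hψts.trans hKD)
    (fun z => mul_nonneg (inv_nonneg.2 hI.le) (hΘ0 _)) hEm
    (fun z hz => by rw [hΘb _ hz, inv_mul_cancel₀ hI.ne']) hA0 hEA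
  have hdψ : ∀ z, ‖dbar (fun z => ((I⁻¹ * Θ (u z) : ℝ) : ℂ)) z‖ / (1 - ‖z‖ ^ 2) =
      I⁻¹ * (κ (u z) * (‖g z‖ * (1 - ‖z‖ ^ 2)⁻¹)) := by
    intro z
    have h1 : (fun z => ((I⁻¹ * Θ (u z) : ℝ) : ℂ)) = fun z => ((I⁻¹ : ℝ) : ℂ) * (Θ (u z) : ℂ) := by
      ext; push_cast; rfl
    rw [h1, dbar_mul (by fun_prop) (hΘuc.differentiable one_ne_zero z),
      (by fun_prop : DifferentiableAt ℂ (fun _ : ℂ => ((I⁻¹ : ℝ) : ℂ)) z).dbar_eq_zero, hdbar,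
      zero_mul, zero_add, norm_mul, norm_mul, Complex.norm_real, Complex.norm_real, RCLike.norm_conj,
      Real.norm_of_nonneg (hκ0 _), Real.norm_of_nonneg (inv_nonneg.2 hI.le)]
    ring
  simp_rw [hdψ] at hiso
  rw [integral_const_mul] at hiso
  have hpi := Real.pi_pos
  have hsq : A + A ^ 2 ≤ (Real.pi⁻¹ * (I⁻¹ * Q)) ^ 2 := by
    rw [← Real.sq_sqrt (by positivity : 0 ≤ A + A ^ 2)]
    exact pow_le_pow_left₀ (Real.sqrt_nonneg _) hiso 2
  have hI2 : I ^ 2 * (A + A ^ 2) ≤ Real.pi⁻¹ ^ 2 * Q ^ 2 := by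
    calc I ^ 2 * (A + A ^ 2) ≤ I ^ 2 * (Real.pi⁻¹ * (I⁻¹ * Q)) ^ 2 := by gcongr
      _ = _ := by field_simp
  -- estimates of the integrals
  set M := hypMeasure.real {z | a < u z} with hM
  have hMm : MeasurableSet {z | a < u z} := measurableSet_lt measurable_const huc.measurable
  have hMtop : hypMeasure {z | a < u z} ≠ ⊤ :=
    (hypMeasure_lt_weightedPow_lt_top hf.continuous hp hα ha).ne
  have hTle : Real.pi⁻¹ * T ≤ I * M := by
    rw [hTdef, ← integral_hypMeasure_eq_of_tsupport_subset (h := fun z => Θ (u z)) (htsΘ.trans hKD)]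
    refine integral_hypMeasure_le_of_le_indicator hMm hMtop (fun z => hΘ0 _) fun z => ?_
    by_cases hz : a < u z
    · rw [Set.indicator_of_mem (show z ∈ {z | a < u z} from hz)]; exact hΘI _
    · rw [Set.indicator_of_notMem (show z ∉ {z | a < u z} from hz), hΘa _ (not_lt.1 hz)]
  have hEsub : E ⊆ {z | a < u z} := fun z (hz : b ≤ u z) => hab.trans_le hz
  have hdiff : hypMeasure.real ({z | a < u z} \ E) = M - A := by
    have h := measureReal_inter_add_sdiff (μ := hypMeasure) (s := {z | a < u z}) hEm hMtop
    rw [Set.inter_eq_right.2 hEsub] at h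
    linarith
  have hRle : Real.pi⁻¹ * R ≤ 1 * (M - A) := by
    rw [hRdef, ← integral_hypMeasure_eq_of_tsupport_subset (h := fun z => κ (u z)) (htsκ.trans hKD),
      ← hdiff]
    refine integral_hypMeasure_le_of_le_indicator (hMm.diff hEm)
      ((measure_mono Set.sdiff_subset).trans_lt hMtop.lt_top).ne (fun z => hκ0 _) fun z => ?_
    by_cases hz : a < u z
    · by_cases hz' : b ≤ u z
      · rw [Set.indicator_of_notMem fun h => h.2 hz', hκb _ hz']
      · rw [Set.indicator_of_mem (show z ∈ {z | a < u z} \ E from ⟨hz, hz'⟩)]; exact hκ1 _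
    · rw [Set.indicator_of_notMem fun h => hz h.1, hκa _ (not_lt.1 hz)]
  have hR0 : 0 ≤ R := integral_nonneg fun z => mul_nonneg (hκ0 _) (sq_nonneg _)
  have hM0 : 0 ≤ M := measureReal_nonneg
  have hPT : P = α * T := by linarith
  have hfinal : I ^ 2 * (A + A ^ 2) ≤ α * (I * M) * (M - A) := by
    calc I ^ 2 * (A + A ^ 2) ≤ Real.pi⁻¹ ^ 2 * (P * R) := hI2.trans (by gcongr)
      _ = α * (Real.pi⁻¹ * T) * (Real.pi⁻¹ * R) := by rw [hPT]; ring
      _ ≤ α * (I * M) * (1 * (M - A)) := by gcongr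
      _ = _ := by ring
  nlinarith [hfinal, hI]

lemma levelSet_inequality_cutoff {f : ℂ → ℂ} {p α : ℝ} (hf : Differentiable ℂ f) (hp : 0 < p)
    (hα : 0 < α) {a b δ : ℝ} (ha : 0 < a) (hδ : 0 < δ) (hδab : a + δ < b - δ) :
    Real.log ((b - δ) / (a + δ)) * (hypMeasure.real {z | b ≤ weightedPow f p α z} +
        hypMeasure.real {z | b ≤ weightedPow f p α z} ^ 2) ≤
      α * hypMeasure.real {z | a < weightedPow f p α z} *
        (hypMeasure.real {z | a < weightedPow f p α z} -
          hypMeasure.real {z | b ≤ weightedPow f p α z}) := by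
  have hab : a < b := by linarith
  let κ : ℝ → ℝ := fun t => max 0 (min 1 (min (t - a) (b - t) / δ))
  have hκ : Continuous κ := by fun_prop
  have hκ0 : ∀ t, 0 ≤ κ t := fun t => le_max_left _ _
  have hκ1 : ∀ t, κ t ≤ 1 := fun t => max_le zero_le_one (min_le_left _ _)
  have hκz : ∀ t, min (t - a) (b - t) ≤ 0 → κ t = 0 := fun t ht =>
    max_eq_left ((min_le_right _ _).trans (div_nonpos_of_nonpos_of_nonneg ht hδ.le))
  have hκa : ∀ t ≤ a, κ t = 0 := fun t ht => hκz t ((min_le_left _ _).trans (by linarith))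
  have hκb : ∀ t, b ≤ t → κ t = 0 := fun t ht => hκz t ((min_le_right _ _).trans (by linarith))
  have hκmid : ∀ t, a + δ ≤ t → t ≤ b - δ → κ t = 1 := fun t h1 h2 => by
    have : 1 ≤ min (t - a) (b - t) / δ := by
      rw [le_div_iff₀ hδ, one_mul]; exact le_min (by linarith) (by linarith)
    simp only [κ, min_eq_left this]
    exact max_eq_right zero_le_one
  let φ : ℝ → ℝ := fun x => κ x / max x a
  have hmax : ∀ x, 0 < max x a := fun x => lt_max_of_lt_right ha
  have hφ : Continuous φ := hκ.div (by fun_prop) fun x => (hmax x).ne'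
  have hφ0 : ∀ x, 0 ≤ φ x := fun x => div_nonneg (hκ0 x) (hmax x).le
  have hint : ∀ x y, IntervalIntegrable φ volume x y := fun x y => hφ.intervalIntegrable x y
  let Θ : ℝ → ℝ := fun t => ∫ x in a..t, φ x
  have hΘd : ∀ t, HasDerivAt Θ (φ t) t := fun t =>
    intervalIntegral.integral_hasDerivAt_right (hint _ _) (hφ.stronglyMeasurableAtFilter _ _)
      hφ.continuousAt
  have hΘC : ContDiff ℝ 1 Θ := by
    rw [contDiff_one_iff_deriv]
    refine ⟨fun t => (hΘd t).differentiableAt, ?_⟩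
    rwa [show deriv Θ = φ from funext fun t => (hΘd t).deriv]
  have hmono : Monotone Θ := monotone_of_deriv_nonneg (hΘC.differentiable one_ne_zero) fun t => by
    rw [(hΘd t).deriv]; exact hφ0 t
  have hΘa : ∀ t ≤ a, Θ t = 0 := fun t ht => by
    simp only [Θ]
    rw [intervalIntegral.integral_congr (g := fun _ => (0 : ℝ)), intervalIntegral.integral_zero]
    intro x hx
    rw [Set.uIcc_of_ge ht] at hx
    simp only [φ, hκa x hx.2, zero_div]
  have hΘb : ∀ t, b ≤ t → Θ t = Θ b := fun t ht => by
    have h1 : ∫ x in b..t, φ x = 0 := by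
      rw [intervalIntegral.integral_congr (g := fun _ => (0 : ℝ)), intervalIntegral.integral_zero]
      intro x hx
      rw [Set.uIcc_of_le ht] at hx
      simp only [φ, hκb x hx.1, zero_div]
    have h2 := intervalIntegral.integral_add_adjacent_intervals (hint a b) (hint b t)
    simp only [Θ]
    linarith
  have hlog : Real.log ((b - δ) / (a + δ)) ≤ Θ b := by
    have h1 : ∫ x in (a + δ)..(b - δ), φ x = Real.log ((b - δ) / (a + δ)) := by
      rw [← integral_one_div_of_pos (by linarith) (by linarith)]
      refine intervalIntegral.integral_congr fun x hx => ?_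
      rw [Set.uIcc_of_le hδab.le] at hx
      simp only [φ, hκmid x hx.1 hx.2, max_eq_left (by linarith [hx.1] : a ≤ x)]
    have h2 := intervalIntegral.integral_add_adjacent_intervals (hint a (a + δ))
      (hint (a + δ) (b - δ))
    have h3 : Θ (b - δ) ≤ Θ b := hmono (by linarith)
    have h4 : 0 ≤ Θ (a + δ) := (hΘa a le_rfl).symm.le.trans (hmono (by linarith))
    simp only [Θ] at h3 h4 ⊢
    linarith
  have hlog0 : 0 < Real.log ((b - δ) / (a + δ)) :=
    Real.log_pos (by rw [lt_div_iff₀ (by linarith)]; linarith)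
  have key := levelSet_inequality_aux hf hp hα (I := Θ b) ha hΘC (κ := κ) (fun t ht => by
      rcases le_total t a with h | h
      · have := hΘd t
        simpa only [φ, hκa t h, zero_div] using this
      · have := hΘd t
        simpa only [φ, max_eq_left h] using this) hκ hκ0 hκ1 hκa hκb hΘa hΘb
      (fun t => by
        rcases le_total t a with h | h
        · exact (hΘa t h).ge
        · exact (hΘa a le_rfl).symm.le.trans (hmono h))
      (fun t => by
        rcases le_total t b with h | h
        · exact hmono h
        · exact (hΘb t h).le) (hlog0.trans_le hlog) hab
  refine le_trans ?_ key
  gcongr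

lemma levelSet_inequality {f : ℂ → ℂ} {p α : ℝ} (hf : Differentiable ℂ f) (hp : 0 < p)
    (hα : 0 < α) {a b : ℝ} (ha : 0 < a) (hab : a < b) :
    Real.log (b / a) * (hypMeasure.real {z | b < weightedPow f p α z} +
        hypMeasure.real {z | b < weightedPow f p α z} ^ 2) ≤
      α * hypMeasure.real {z | a < weightedPow f p α z} *
        (hypMeasure.real {z | a < weightedPow f p α z} -
          hypMeasure.real {z | b < weightedPow f p α z}) := by
  set A := hypMeasure.real {z | b ≤ weightedPow f p α z}
  set M := hypMeasure.real {z | a < weightedPow f p α z} with hM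
  have h1 : Real.log (b / a) * (A + A ^ 2) ≤ α * M * (M - A) := by
    have ht : Filter.Tendsto (fun δ => Real.log ((b - δ) / (a + δ)) * (A + A ^ 2))
        (nhdsWithin 0 (Set.Ioi 0)) (nhds (Real.log (b / a) * (A + A ^ 2))) := by
      have hc : ContinuousAt (fun δ => Real.log ((b - δ) / (a + δ)) * (A + A ^ 2)) 0 := by
        refine ContinuousAt.mul (ContinuousAt.log (ContinuousAt.div (by fun_prop) (by fun_prop)
          (by simpa using ha.ne')) ?_) continuousAt_const
        simpa using ⟨(ha.trans hab).ne', ha.ne'⟩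
      have := hc.tendsto
      simp only [sub_zero, add_zero] at this
      exact this.mono_left nhdsWithin_le_nhds
    refine le_of_tendsto ht ?_
    have : Set.Ioo 0 ((b - a) / 2) ∈ nhdsWithin (0 : ℝ) (Set.Ioi 0) :=
      Ioo_mem_nhdsGT (by linarith)
    filter_upwards [this] with δ hδ
    exact levelSet_inequality_cutoff hf hp hα ha hδ.1 (by linarith [hδ.2])
  have hfin : hypMeasure {z | b ≤ weightedPow f p α z} ≠ ⊤ :=
    ((measure_mono fun z (hz : b ≤ _) => hab.trans_le hz).trans_lt
      (hypMeasure_lt_weightedPow_lt_top hf.continuous hp hα ha)).ne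
  have h2 : hypMeasure.real {z | b < weightedPow f p α z} ≤ A :=
    measureReal_mono (fun z (hz : b < _) => hz.le) hfin
  have h0 : 0 ≤ hypMeasure.real {z | b < weightedPow f p α z} := measureReal_nonneg
  have hl : 0 ≤ Real.log (b / a) := Real.log_nonneg (by rw [le_div_iff₀ ha]; linarith)
  have hM0 : 0 ≤ M := measureReal_nonneg
  calc _ ≤ Real.log (b / a) * (A + A ^ 2) := by gcongr
    _ ≤ α * M * (M - A) := h1
    _ ≤ _ := by gcongr

section DistributionFunction

variable {m : ℝ → ℝ} {α : ℝ}

lemma log_one_add_sub_log_one_add_ge (hα : 0 < α)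
    (hm : ∀ a b, 0 < a → a < b → Real.log (b / a) * (m b + m b ^ 2) ≤ α * m a * (m a - m b))
    (hanti : ∀ a b, 0 < a → a ≤ b → m b ≤ m a) {a ε : ℝ} (ha : 0 < a) (hε : 0 < ε)
    (hb : 0 < m (a * Real.exp (α * ε))) :
    ε * (1 - (Real.log (m a) - Real.log (m (a * Real.exp (α * ε))))) - ε ^ 2 ≤
      Real.log (1 + m a) - Real.log (1 + m (a * Real.exp (α * ε))) := by
  set b := a * Real.exp (α * ε) with hbdef
  have hab : a < b := lt_mul_of_one_lt_right ha (Real.one_lt_exp_iff.2 (by positivity))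
  have h1 := hm a b ha hab
  have hma : 0 < m a := hb.trans_le (hanti a b ha hab.le)
  rw [hbdef, mul_div_cancel_left₀ _ ha.ne', Real.log_exp, ← hbdef] at h1
  have h2 : ε * (m b + m b ^ 2) ≤ m a * (m a - m b) := by
    have : α * (ε * (m b + m b ^ 2)) ≤ α * (m a * (m a - m b)) := by linarith
    exact le_of_mul_le_mul_left this hα
  set ρ := m b / m a with hρ
  have hρ0 : 0 < ρ := by positivity
  have hρ1 : ρ ≤ 1 := (div_le_one hma).2 (hanti a b ha hab.le)
  have h3 : 1 + ε * ρ ≤ (1 + m a) / (1 + m b) := by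
    rw [le_div_iff₀ (by linarith), hρ]
    have : ε * (m b / m a) * (1 + m b) ≤ m a - m b := by
      rw [show ε * (m b / m a) * (1 + m b) = ε * (m b + m b ^ 2) / m a by ring,
        div_le_iff₀ hma]
      linarith
    linarith
  have h4 : Real.log (1 + ε * ρ) ≤ Real.log (1 + m a) - Real.log (1 + m b) := by
    rw [← Real.log_div (by linarith) (by linarith)]
    exact Real.log_le_log (by positivity) h3
  have h5 : ε * ρ - (ε * ρ) ^ 2 ≤ Real.log (1 + ε * ρ) := by
    have h6 := Real.one_sub_inv_le_log_of_pos (x := 1 + ε * ρ) (by positivity)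
    have h7 : 1 - (1 + ε * ρ)⁻¹ - (ε * ρ - (ε * ρ) ^ 2) = (ε * ρ) ^ 3 / (1 + ε * ρ) := by
      field_simp
      ring
    have h8 : 0 ≤ (ε * ρ) ^ 3 / (1 + ε * ρ) := by positivity
    linarith
  have h6 : 1 - (Real.log (m a) - Real.log (m b)) ≤ ρ := by
    have := Real.log_le_sub_one_of_pos hρ0
    rw [hρ, Real.log_div hb.ne' hma.ne', ← hρ] at this
    linarith
  have h7 : (ε * ρ) ^ 2 ≤ ε ^ 2 := by
    have : ε * ρ ≤ ε := by nlinarith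
    gcongr
  have h8 : ε * (1 - (Real.log (m a) - Real.log (m b))) ≤ ε * ρ := by gcongr
  linarith

lemma log_one_add_sub_log_one_add_ge_iterate (hα : 0 < α)
    (hm : ∀ a b, 0 < a → a < b → Real.log (b / a) * (m b + m b ^ 2) ≤ α * m a * (m a - m b))
    (hanti : ∀ a b, 0 < a → a ≤ b → m b ≤ m a) {a ε : ℝ} (ha : 0 < a) (hε : 0 < ε) (n : ℕ)
    (hb : 0 < m (a * Real.exp (α * ε * n))) :
    ε * (n - (Real.log (m a) - Real.log (m (a * Real.exp (α * ε * n))))) - n * ε ^ 2 ≤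
      Real.log (1 + m a) - Real.log (1 + m (a * Real.exp (α * ε * n))) := by
  induction n with
  | zero => simp
  | succ n ih =>
    have he : a * Real.exp (α * ε * (n + 1 : ℕ)) =
        a * Real.exp (α * ε * n) * Real.exp (α * ε) := by
      rw [mul_assoc a, ← Real.exp_add]; push_cast; ring_nf
    have hpos : 0 < a * Real.exp (α * ε * n) := by positivity
    have h1 := hb.trans_le (hanti (a * Real.exp (α * ε * n)) _ hpos (by
      rw [he]
      exact le_mul_of_one_le_right hpos.le (Real.one_le_exp (by positivity))))
    have h2 := ih h1
    rw [he] at hb ⊢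
    have h3 := log_one_add_sub_log_one_add_ge hα hm hanti hpos hε hb
    push_cast
    nlinarith

lemma one_add_mul_rpow_le (hα : 0 < α)
    (hm : ∀ a b, 0 < a → a < b → Real.log (b / a) * (m b + m b ^ 2) ≤ α * m a * (m a - m b))
    (hanti : ∀ a b, 0 < a → a ≤ b → m b ≤ m a) {a b : ℝ} (ha : 0 < a) (hab : a < b)
    (hb : 0 < m b) :
    (1 + m b) * b ^ (1 / α) ≤ (1 + m a) * a ^ (1 / α) := by
  set ε := Real.log (b / a) / α with hε
  have hb0 : 0 < b := ha.trans hab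
  have hε0 : 0 < ε := div_pos (Real.log_pos (by rwa [lt_div_iff₀ ha, one_mul])) hα
  have hma : 0 < m a := hb.trans_le (hanti a b ha hab.le)
  have key : ∀ n : ℕ, 0 < n → ε - (ε * (Real.log (m a) - Real.log (m b)) + ε ^ 2) / n ≤
      Real.log (1 + m a) - Real.log (1 + m b) := by
    intro n hn
    have hn' : (0 : ℝ) < n := by exact_mod_cast hn
    have he : a * Real.exp (α * (ε / n) * n) = b := by
      rw [show α * (ε / n) * n = Real.log (b / a) by rw [hε]; field_simp,
        Real.exp_log (by positivity)]
      field_simp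
    have := log_one_add_sub_log_one_add_ge_iterate hα hm hanti ha (ε := ε / n) (by positivity) n
      (by rwa [he])
    rw [he] at this
    refine le_trans (le_of_eq ?_) this
    field_simp
    ring
  have hlim : Filter.Tendsto
      (fun n : ℕ => ε - (ε * (Real.log (m a) - Real.log (m b)) + ε ^ 2) / n) Filter.atTop
      (nhds (ε - 0)) := tendsto_const_nhds.sub (tendsto_const_div_atTop_nhds_zero_nat _)
  have h1 : ε - 0 ≤ Real.log (1 + m a) - Real.log (1 + m b) :=
    le_of_tendsto hlim (by filter_upwards [Filter.eventually_gt_atTop 0] with n hn using key n hn)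
  rw [← Real.log_le_log_iff (by positivity) (by positivity),
    Real.log_mul (by positivity) (by positivity), Real.log_mul (by positivity) (by positivity),
    Real.log_rpow hb0, Real.log_rpow ha]
  rw [hε, Real.log_div hb0.ne' ha.ne'] at h1
  have : (Real.log b - Real.log a) / α = 1 / α * Real.log b - 1 / α * Real.log a := by ring
  linarith

lemma lintegral_extremal_distribution {c s : ℝ} (hα : 1 < α) (hc : 0 < c) (hs : 1 ≤ s) :
    ∫⁻ t in Set.Ioi (0 : ℝ), ENNReal.ofReal (max 0 ((c / t) ^ (1 / α) - 1) * t ^ (s - 1)) =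
      ENNReal.ofReal (c ^ s / (s * (s * α - 1))) := by
  have hα0 : 0 < α := by linarith
  have h1 : 1 / α < 1 := by rw [div_lt_one hα0]; exact hα
  have h1' : 0 < 1 / α := by positivity
  have hmc : ∀ t, c ≤ t → max 0 ((c / t) ^ (1 / α) - 1) = 0 := fun t ht => by
    have ht0 : 0 < t := hc.trans_le ht
    refine max_eq_left ?_
    have := Real.rpow_le_one (by positivity) ((div_le_one ht0).2 ht) h1'.le
    linarith
  have hmc' : ∀ t ∈ Set.Ioc 0 c, max 0 ((c / t) ^ (1 / α) - 1) * t ^ (s - 1) =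
      c ^ (1 / α) * t ^ (s - 1 - 1 / α) - t ^ (s - 1) := fun t ht => by
    rw [max_eq_right]
    · rw [Real.div_rpow hc.le ht.1.le, Real.rpow_sub ht.1 (s - 1)]
      ring
    · have := Real.one_le_rpow ((one_le_div ht.1).2 ht.2) h1'.le
      linarith
  have h2 : ∫⁻ t in Set.Ioi (0 : ℝ), ENNReal.ofReal (max 0 ((c / t) ^ (1 / α) - 1) * t ^ (s - 1)) =
      ∫⁻ t in Set.Ioc (0 : ℝ) c,
        ENNReal.ofReal (c ^ (1 / α) * t ^ (s - 1 - 1 / α) - t ^ (s - 1)) := by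
    rw [← setLIntegral_congr_fun measurableSet_Ioc
        (fun t ht => congrArg ENNReal.ofReal (hmc' t ht)), ← Set.Ioc_union_Ioi_eq_Ioi hc.le,
        lintegral_union measurableSet_Ioi
        (Set.disjoint_left.2 fun x hx hx' => not_lt.2 hx.2 hx')]
    rw [setLIntegral_congr_fun (g := fun _ => 0) measurableSet_Ioi (fun t ht => by
      rw [hmc t (le_of_lt ht), zero_mul, ENNReal.ofReal_zero]), lintegral_zero, add_zero]
  have hi1 : IntervalIntegrable (fun t : ℝ => t ^ (s - 1 - 1 / α)) volume 0 c :=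
    intervalIntegral.intervalIntegrable_rpow' (by linarith)
  have hi2 : IntervalIntegrable (fun t : ℝ => t ^ (s - 1)) volume 0 c :=
    intervalIntegral.intervalIntegrable_rpow' (by linarith)
  rw [h2, ← ofReal_integral_eq_lintegral_ofReal
    (((hi1.const_mul _).sub hi2).1) ?_, ← intervalIntegral.integral_of_le hc.le,
    intervalIntegral.integral_sub (hi1.const_mul _) hi2, intervalIntegral.integral_const_mul,
    integral_rpow (Or.inl (by linarith)), integral_rpow (Or.inl (by linarith))]
  · congr 1
    have e1 : s - 1 - 1 / α + 1 = s - 1 / α := by ring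
    have e2 : s - 1 + 1 = s := by ring
    have hs1 : 0 < s - 1 / α := by linarith
    have hs2 : 0 < s * α - 1 := by nlinarith
    rw [e1, e2, Real.zero_rpow hs1.ne', Real.zero_rpow (by linarith), sub_zero, sub_zero,
      ← mul_div_assoc, ← Real.rpow_add hc, show 1 / α + (s - 1 / α) = s by ring]
    have : s - 1 / α = (s * α - 1) / α := by field_simp
    rw [this]
    field_simp
    ring
  · filter_upwards [ae_restrict_mem measurableSet_Ioc] with t ht
    rw [← hmc' t ht]
    have := ht.1
    exact mul_nonneg (le_max_left _ _) (by positivity)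

lemma lintegral_mul_rpow_le_of_crossing {m k : ℝ → ℝ} {t₀ s : ℝ} (hm : Measurable m)
    (hk : Measurable k) (hm0 : ∀ t, 0 ≤ m t) (hk0 : ∀ t, 0 ≤ k t) (ht₀ : 0 ≤ t₀) (hs : 1 ≤ s)
    (hlt : ∀ t, 0 < t → t < t₀ → k t ≤ m t) (hgt : ∀ t, t₀ < t → m t ≤ k t)
    (heq : ∫⁻ t in Set.Ioi (0 : ℝ), ENNReal.ofReal (m t) =
      ∫⁻ t in Set.Ioi (0 : ℝ), ENNReal.ofReal (k t))
    (hfin : ∫⁻ t in Set.Ioi (0 : ℝ), ENNReal.ofReal (k t) ≠ ⊤) :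
    ∫⁻ t in Set.Ioi (0 : ℝ), ENNReal.ofReal (m t * t ^ (s - 1)) ≤
      ∫⁻ t in Set.Ioi (0 : ℝ), ENNReal.ofReal (k t * t ^ (s - 1)) := by
  have hs' : 0 ≤ s - 1 := by linarith
  have hpt : ∀ t ∈ Set.Ioi (0 : ℝ),
      ENNReal.ofReal (m t * t ^ (s - 1)) + ENNReal.ofReal (t₀ ^ (s - 1)) * ENNReal.ofReal (k t) ≤
      ENNReal.ofReal (k t * t ^ (s - 1)) + ENNReal.ofReal (t₀ ^ (s - 1)) * ENNReal.ofReal (m t) := by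
    intro t ht
    have ht' : 0 < t := ht
    have p1 : 0 ≤ t ^ (s - 1) := by positivity
    have p2 : 0 ≤ t₀ ^ (s - 1) := by positivity
    rw [← ENNReal.ofReal_mul p2, ← ENNReal.ofReal_mul p2,
      ← ENNReal.ofReal_add (mul_nonneg (hm0 t) p1) (mul_nonneg p2 (hk0 t)),
      ← ENNReal.ofReal_add (mul_nonneg (hk0 t) p1) (mul_nonneg p2 (hm0 t))]
    refine ENNReal.ofReal_le_ofReal ?_
    rcases lt_trichotomy t t₀ with h | h | h
    · have h1 := hlt t ht' h
      have h2 : t ^ (s - 1) ≤ t₀ ^ (s - 1) := Real.rpow_le_rpow ht'.le h.le hs'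
      nlinarith
    · rw [h]; linarith
    · have h1 := hgt t h
      have h2 : t₀ ^ (s - 1) ≤ t ^ (s - 1) := Real.rpow_le_rpow ht₀ h.le hs'
      nlinarith
  have h := setLIntegral_mono' (μ := volume) measurableSet_Ioi hpt
  rw [lintegral_add_left (by fun_prop), lintegral_add_left (by fun_prop),
    lintegral_const_mul _ (by fun_prop), lintegral_const_mul _ (by fun_prop), heq] at h
  exact (ENNReal.add_le_add_iff_right (ENNReal.mul_ne_top ENNReal.ofReal_ne_top hfin)).1 h

lemma lintegral_mul_rpow_le_extremal {c s : ℝ} (hα : 1 < α) (hc : 0 < c) (hs : 1 ≤ s)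
    (hmm : Measurable m) (hm0 : ∀ t, 0 ≤ m t)
    (hm : ∀ a b, 0 < a → a < b → 0 < m b →
      (1 + m b) * b ^ (1 / α) ≤ (1 + m a) * a ^ (1 / α))
    (heq : ∫⁻ t in Set.Ioi (0 : ℝ), ENNReal.ofReal (m t) = ENNReal.ofReal (c / (α - 1))) :
    ∫⁻ t in Set.Ioi (0 : ℝ), ENNReal.ofReal (m t * t ^ (s - 1)) ≤
      ENNReal.ofReal (c ^ s / (s * (s * α - 1))) := by
  rw [← lintegral_extremal_distribution hα hc hs]
  have hα0 : 0 < α := by linarith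
  set k : ℝ → ℝ := fun t => max 0 ((c / t) ^ (1 / α) - 1) with hk
  have hkm : Measurable k := by
    have : Measurable fun t : ℝ => (c / t) ^ (1 / α) := (measurable_const.div measurable_id).pow_const _
    exact measurable_const.max (this.sub_const 1)
  have hk0 : ∀ t, 0 ≤ k t := fun t => le_max_left _ _
  have hkeq : ∫⁻ t in Set.Ioi (0 : ℝ), ENNReal.ofReal (k t) = ENNReal.ofReal (c / (α - 1)) := by
    have := lintegral_extremal_distribution hα hc le_rfl
    simpa only [sub_self, Real.rpow_zero, mul_one, Real.rpow_one, one_mul] using this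
  have heq' := heq.trans hkeq.symm
  have hfin : ∫⁻ t in Set.Ioi (0 : ℝ), ENNReal.ofReal (k t) ≠ ⊤ := by
    rw [hkeq]; exact ENNReal.ofReal_ne_top
  have hlt_iff : ∀ t, 0 < t → (1 + m t) * t ^ (1 / α) < c ^ (1 / α) → m t < k t := by
    intro t ht h
    refine lt_max_of_lt_right ?_
    rw [Real.div_rpow hc.le ht.le, lt_sub_iff_add_lt, lt_div_iff₀ (by positivity)]
    linarith
  have hlt_iff' : ∀ t, 0 < t → m t < k t → (1 + m t) * t ^ (1 / α) < c ^ (1 / α) := by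
    intro t ht h
    rcases lt_max_iff.1 h with h | h
    · exact absurd h (not_lt.2 (hm0 t))
    · rw [Real.div_rpow hc.le ht.le, lt_sub_iff_add_lt, lt_div_iff₀ (by positivity)] at h
      linarith
  let S := {t | 0 < t ∧ m t < k t}
  by_cases hS : S.Nonempty
  · have hbdd : BddBelow S := ⟨0, fun t ht => ht.1.le⟩
    refine lintegral_mul_rpow_le_of_crossing hmm hkm hm0 hk0 (t₀ := sInf S)
      (le_csInf hS fun t ht => ht.1.le) hs ?_ ?_ heq' hfin
    · intro t ht htS
      by_contra h
      exact not_lt.2 (csInf_le hbdd ⟨ht, not_le.1 h⟩) htS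
    · intro t ht
      obtain ⟨a, haS, hat⟩ := (csInf_lt_iff hbdd hS).1 ht
      rcases (hm0 t).eq_or_lt with h | h
      · rw [← h]; exact hk0 t
      · exact (hlt_iff t (haS.1.trans hat) ((hm a t haS.1 hat h).trans_lt
          (hlt_iff' a haS.1 haS.2))).le
  · have hle : ∀ t ∈ Set.Ioi (0 : ℝ), k t ≤ m t := fun t ht => by
      by_contra h
      exact hS ⟨t, ht, not_le.1 h⟩
    have hae : (fun t => ENNReal.ofReal (k t)) =ᵐ[volume.restrict (Set.Ioi (0 : ℝ))]
        fun t => ENNReal.ofReal (m t) :=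
      ae_eq_of_ae_le_of_lintegral_le (by
        filter_upwards [ae_restrict_mem measurableSet_Ioi] with t ht
        exact ENNReal.ofReal_le_ofReal (hle t ht)) hfin (by fun_prop) heq'.le
    refine (lintegral_congr_ae ?_).le
    filter_upwards [hae] with t ht
    rw [ENNReal.ofReal_eq_ofReal_iff (hk0 t) (hm0 t)] at ht
    rw [← ht]

end DistributionFunction

lemma lintegral_norm_rpow_bergmanMeasure {f : ℂ → ℂ} (hf : Continuous f) {p α : ℝ} (hp : 0 < p)
    (hα : 1 < α) :
    ∫⁻ z, ENNReal.ofReal (‖f z‖ ^ p) ∂(bergmanMeasure α) =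
      ENNReal.ofReal (α - 1) * ∫⁻ z, ENNReal.ofReal (weightedPow f p α z) ∂hypMeasure := by
  have hm : Measurable fun z => ENNReal.ofReal (‖f z‖ ^ p) :=
    (hf.norm.rpow_const fun _ => Or.inr hp.le).measurable.ennreal_ofReal
  have hw : Measurable fun z => ENNReal.ofReal (weightedPow f p α z) :=
    (continuous_weightedPow hf hp (by linarith)).measurable.ennreal_ofReal
  rw [bergmanMeasure, hypMeasure, lintegral_withDensity_eq_lintegral_mul _ (by fun_prop) hm,
    lintegral_withDensity_eq_lintegral_mul _ (by fun_prop) hw,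
    ← lintegral_const_mul _ (by fun_prop)]
  refine setLIntegral_congr_fun measurableSet_ball fun z hz => ?_
  have h1 := one_sub_norm_sq_pos hz
  have hπ := Real.pi_pos
  simp only [Pi.mul_apply]
  rw [← ENNReal.ofReal_mul (div_nonneg (mul_nonneg (by linarith) (by positivity)) hπ.le),
    ← ENNReal.ofReal_mul (by positivity), ← ENNReal.ofReal_mul (by linarith), weightedPow,
    max_eq_right h1.le, Real.rpow_sub h1, Real.rpow_two]
  congr 1
  field_simp

lemma lintegral_weightedPow_le {f : ℂ → ℂ} (hf : Differentiable ℂ f) {p α s : ℝ} (hp : 0 < p)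
    (hα : 1 < α) (hs : 1 ≤ s) :
    ENNReal.ofReal (s * α - 1) *
        ∫⁻ z, ENNReal.ofReal (weightedPow f p α z ^ s) ∂hypMeasure ≤
      (ENNReal.ofReal (α - 1) * ∫⁻ z, ENNReal.ofReal (weightedPow f p α z) ∂hypMeasure) ^ s := by
  have hα0 : 0 < α := by linarith
  have hs0 : 0 < s := by linarith
  set u := weightedPow f p α with hu
  have huc : Continuous u := continuous_weightedPow hf.continuous hp hα0
  have hu0 : ∀ z, 0 ≤ u z := weightedPow_nonneg
  set X := ∫⁻ z, ENNReal.ofReal (u z) ∂hypMeasure with hX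
  rcases eq_or_ne X 0 with h0 | h0
  · have : (fun z => ENNReal.ofReal (u z)) =ᵐ[hypMeasure] 0 :=
      (lintegral_eq_zero_iff huc.measurable.ennreal_ofReal).1 h0
    have h1 : ∫⁻ z, ENNReal.ofReal (u z ^ s) ∂hypMeasure = 0 := by
      rw [lintegral_eq_zero_iff (huc.rpow_const fun _ => Or.inr hs0.le).measurable.ennreal_ofReal]
      filter_upwards [this] with z hz
      have h2 : u z = 0 := le_antisymm (ENNReal.ofReal_eq_zero.1 hz) (hu0 z)
      simp [h2, Real.zero_rpow hs0.ne']
    rw [h1, mul_zero]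
    exact zero_le
  rcases eq_or_ne X ⊤ with htop | htop
  · rw [htop, ENNReal.mul_top (by simpa using hα), ENNReal.top_rpow_of_pos hs0]
    exact le_top
  have hfin : ∀ t, 0 < t → hypMeasure {z | t < u z} ≠ ⊤ := fun t ht =>
    (hypMeasure_lt_weightedPow_lt_top hf.continuous hp hα0 ht).ne
  set m : ℝ → ℝ := fun t => hypMeasure.real {z | t < u z} with hm
  have hanti : ∀ a b, 0 < a → a ≤ b → m b ≤ m a := fun a b ha hab =>
    measureReal_mono (fun z (hz : b < u z) => hab.trans_lt hz) (hfin a ha)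
  have hmm : Measurable m := by
    have : Antitone fun t => hypMeasure {z | t < u z} := fun a b hab =>
      measure_mono fun z (hz : b < u z) => hab.trans_lt hz
    exact this.measurable.ennreal_toReal
  have hm0 : ∀ t, 0 ≤ m t := fun t => measureReal_nonneg
  have hmeas : ∀ t ∈ Set.Ioi (0 : ℝ), hypMeasure {z | t < u z} = ENNReal.ofReal (m t) :=
    fun t ht => (ofReal_measureReal (hfin t ht)).symm
  set c := (α - 1) * X.toReal with hc
  have hX0 : 0 < X.toReal := ENNReal.toReal_pos h0 htop
  have hc0 : 0 < c := mul_pos (by linarith) hX0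
  have hXc : X = ENNReal.ofReal (c / (α - 1)) := by
    rw [hc, mul_div_cancel_left₀ _ (by linarith), ENNReal.ofReal_toReal htop]
  have heq : ∫⁻ t in Set.Ioi (0 : ℝ), ENNReal.ofReal (m t) = ENNReal.ofReal (c / (α - 1)) := by
    rw [← hXc, hX, lintegral_eq_lintegral_meas_lt hypMeasure (.of_forall hu0)
      huc.measurable.aemeasurable]
    exact (setLIntegral_congr_fun measurableSet_Ioi hmeas).symm
  have key := lintegral_mul_rpow_le_extremal hα hc0 hs hmm hm0 (fun a b ha hab hb =>
    one_add_mul_rpow_le hα0 (fun a b ha hab => levelSet_inequality hf hp hα0 ha hab) hanti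
      ha hab hb) heq
  have hs1 : 0 < s * α - 1 := by nlinarith
  rw [lintegral_rpow_eq_lintegral_meas_lt_mul hypMeasure (.of_forall hu0)
    huc.measurable.aemeasurable hs0, setLIntegral_congr_fun measurableSet_Ioi (g := fun t =>
      ENNReal.ofReal (m t * t ^ (s - 1))) (fun t ht => by
      simp only
      rw [hmeas t ht, ENNReal.ofReal_mul (hm0 t)])]
  calc _ ≤ ENNReal.ofReal (s * α - 1) * (ENNReal.ofReal s *
        ENNReal.ofReal (c ^ s / (s * (s * α - 1)))) := by gcongr
    _ = ENNReal.ofReal (c ^ s) := by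
      rw [← ENNReal.ofReal_mul hs0.le, ← ENNReal.ofReal_mul hs1.le]
      congr 1
      field_simp
    _ = (ENNReal.ofReal c) ^ s := (ENNReal.ofReal_rpow_of_pos hc0).symm
    _ = _ := by
      rw [hc, ENNReal.ofReal_mul (by linarith), ENNReal.ofReal_toReal htop]

/-- Contractive embedding between weighted Bergman spaces, for entire functions. -/
theorem lintegral_bergmanMeasure_mul_le {f : ℂ → ℂ} (hf : Differentiable ℂ f) {p α s : ℝ}
    (hp : 0 < p) (hα : 1 < α) (hs : 1 ≤ s) :
    ∫⁻ z, ENNReal.ofReal (‖f z‖ ^ (p * s)) ∂(bergmanMeasure (α * s)) ≤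
      (∫⁻ z, ENNReal.ofReal (‖f z‖ ^ p) ∂(bergmanMeasure α)) ^ s := by
  rw [lintegral_norm_rpow_bergmanMeasure hf.continuous (by positivity) (by nlinarith),
    lintegral_norm_rpow_bergmanMeasure hf.continuous hp hα]
  convert lintegral_weightedPow_le hf hp hα hs using 3
  · ring
  · ext z
    congr 1
    rw [weightedPow, weightedPow, Real.mul_rpow (by positivity)
      (Real.rpow_nonneg (le_max_left _ _) _), ← Real.rpow_mul (by positivity),
      ← Real.rpow_mul (le_max_left _ _)]

lemma hasDerivAt_integral_of_continuous {G G' : ℝ → ℝ → ℂ} (hG : Continuous (Function.uncurry G))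
    (hG' : Continuous (Function.uncurry G')) (hd : ∀ t θ, HasDerivAt (fun t => G t θ) (G' t θ) t)
    (a b t : ℝ) :
    HasDerivAt (fun t => ∫ θ in a..b, G t θ) (∫ θ in a..b, G' t θ) t := by
  obtain ⟨C, hC⟩ := (((isCompact_closedBall t 1).prod (isCompact_uIcc (a := a) (b := b))).image_of_continuousOn
    hG'.norm.continuousOn).bddAbove
  refine (intervalIntegral.hasDerivAt_integral_of_dominated_loc_of_deriv_le (bound := fun _ => C)
    (ball_mem_nhds t one_pos) (.of_forall fun x => ?_) ?_ ?_ ?_ ?_ ?_).2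
  · exact (hG.comp (by fun_prop : Continuous fun θ => (x, θ))).aestronglyMeasurable
  · exact (hG.comp (by fun_prop : Continuous fun θ => (t, θ))).intervalIntegrable _ _
  · exact (hG'.comp (by fun_prop : Continuous fun θ => (t, θ))).aestronglyMeasurable
  · refine .of_forall fun θ hθ x hx => hC ⟨(x, θ), ⟨ball_subset_closedBall hx, ?_⟩, rfl⟩
    exact Set.uIoc_subset_uIcc hθ
  · simp
  · exact .of_forall fun θ _ x _ => hd x θ

/-- Differentiating the mean over a period in the imaginary direction. -/
lemma hasDerivAt_periodMean {E : ℂ → ℂ} (hE : ContDiff ℝ 1 E)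
    (hper : ∀ ζ, E (ζ + 2 * Real.pi * Complex.I) = E ζ) (t : ℝ) :
    HasDerivAt (fun t : ℝ => ∫ θ in (0 : ℝ)..2 * Real.pi, E (t + θ * Complex.I))
      (2 * ∫ θ in (0 : ℝ)..2 * Real.pi, dbar E (t + θ * Complex.I)) t := by
  have hfd : ∀ z, HasFDerivAt E (fderiv ℝ E z) z := fun z =>
    (hE.differentiable one_ne_zero z).hasFDerivAt
  have hcont := hE.continuous_fderiv one_ne_zero
  have hc := hE.continuous
  have h1 : ∀ t θ : ℝ, HasDerivAt (fun t : ℝ => E (t + θ * Complex.I))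
      (fderiv ℝ E (t + θ * Complex.I) 1) t := fun t θ =>
    (hfd _).comp_hasDerivAt t (Complex.ofRealCLM.hasDerivAt.add_const _)
  have h2 : ∀ θ : ℝ, HasDerivAt (fun θ : ℝ => E (t + θ * Complex.I))
      (fderiv ℝ E (t + θ * Complex.I) Complex.I) θ := fun θ => by
    have h3 : HasDerivAt (fun θ : ℝ => (t : ℂ) + θ * Complex.I) Complex.I θ := by
      simpa using (Complex.ofRealCLM.hasDerivAt (x := θ)).mul_const Complex.I |>.const_add (t : ℂ)
    exact (hfd (t + θ * Complex.I)).comp_hasDerivAt θ h3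
  have hz : ∫ θ in (0 : ℝ)..2 * Real.pi, fderiv ℝ E (t + θ * Complex.I) Complex.I = 0 := by
    rw [intervalIntegral.integral_eq_sub_of_hasDerivAt (fun θ _ => h2 θ)
      ((by fun_prop : Continuous fun θ : ℝ =>
        fderiv ℝ E (t + θ * Complex.I) Complex.I).intervalIntegrable _ _)]
    have := hper t
    push_cast
    rw [this]
    simp
  have h3 := hasDerivAt_integral_of_continuous (G := fun t θ => E (t + θ * Complex.I))
    (G' := fun t θ => fderiv ℝ E (t + θ * Complex.I) 1) (by unfold Function.uncurry; fun_prop)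
    (by unfold Function.uncurry; fun_prop) h1 0 (2 * Real.pi) t
  refine h3.congr_deriv ?_
  have h4 : ∀ θ : ℝ, dbar E (t + θ * Complex.I) = (1 / 2) * fderiv ℝ E (t + θ * Complex.I) 1 +
      Complex.I / 2 * fderiv ℝ E (t + θ * Complex.I) Complex.I := fun θ => by rw [dbar]; ring
  simp only [h4]
  rw [intervalIntegral.integral_add ((by fun_prop : Continuous _).intervalIntegrable _ _)
    ((by fun_prop : Continuous _).intervalIntegrable _ _), intervalIntegral.integral_const_mul,
    intervalIntegral.integral_const_mul, hz]
  ring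

/-- First and second derivative of the mean over a period of a real function `g` with
`∂̄ g = conj E` and `∂̄ E = h` real. -/
lemma hasDerivAt_periodMean_of_dbar {g h : ℂ → ℝ} {E : ℂ → ℂ} (hg : ContDiff ℝ 1 g)
    (hE : ContDiff ℝ 1 E) (hgp : ∀ ζ, g (ζ + 2 * Real.pi * Complex.I) = g ζ)
    (hEp : ∀ ζ, E (ζ + 2 * Real.pi * Complex.I) = E ζ)
    (hgE : ∀ ζ, dbar (fun ζ => (g ζ : ℂ)) ζ = starRingEnd ℂ (E ζ))
    (hEh : ∀ ζ, dbar E ζ = h ζ) (t : ℝ) :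
    HasDerivAt (fun t : ℝ => ∫ θ in (0 : ℝ)..2 * Real.pi, g (t + θ * Complex.I))
      (2 * (∫ θ in (0 : ℝ)..2 * Real.pi, E (t + θ * Complex.I)).re) t ∧
    HasDerivAt (fun t : ℝ => 2 * (∫ θ in (0 : ℝ)..2 * Real.pi, E (t + θ * Complex.I)).re)
      (4 * ∫ θ in (0 : ℝ)..2 * Real.pi, h (t + θ * Complex.I)) t := by
  have hre : ∀ {φ : ℝ → ℂ} {φ' : ℂ}, HasDerivAt φ φ' t →
      HasDerivAt (fun t => (φ t).re) φ'.re t := fun h =>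
    Complex.reCLM.hasFDerivAt.comp_hasDerivAt t h
  constructor
  · have h1 := hre (hasDerivAt_periodMean (E := fun ζ => (g ζ : ℂ))
      (Complex.ofRealCLM.contDiff.comp hg) (fun ζ => by rw [hgp]) t)
    simp only [intervalIntegral.integral_ofReal, Complex.ofReal_re] at h1
    refine h1.congr_deriv ?_
    simp only [hgE]
    have : ∫ θ in (0 : ℝ)..2 * Real.pi, starRingEnd ℂ (E (t + θ * Complex.I)) =
        starRingEnd ℂ (∫ θ in (0 : ℝ)..2 * Real.pi, E (t + θ * Complex.I)) :=
      intervalIntegral.intervalIntegral_conj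
    rw [this]
    simp
  · have h1 := (hre (hasDerivAt_periodMean hE hEp t)).const_mul 2
    refine h1.congr_deriv ?_
    simp only [hEh, intervalIntegral.integral_ofReal]
    simp
    ring

lemma ConvexOn.monotone_of_bddAbove {n : ℝ → ℝ} (hn : ConvexOn ℝ Set.univ n) {C : ℝ}
    (hC : ∀ t ≤ 0, n t ≤ C) : Monotone n := by
  intro s t hst
  by_contra! h
  have hlt : s < t := lt_of_le_of_ne hst fun e => by simp [e] at h
  set σ := (n s - n t) / (t - s) with hσ
  have hσ0 : 0 < σ := div_pos (by linarith) (by linarith)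
  have key : ∀ u < s, n s + σ * (s - u) ≤ n u := by
    intro u hu
    have := hn.slope_mono_adjacent (Set.mem_univ u) (Set.mem_univ t) hu hlt
    have h2 : (n t - n s) / (t - s) = -σ := by rw [hσ, ← neg_div]; ring
    rw [h2, div_le_iff₀ (by linarith)] at this
    linarith
  set u := min (min 0 (s - 1)) (s - (C - n s + 1) / σ) with hu
  have hu0 : u ≤ 0 := (min_le_left _ _).trans (min_le_left _ _)
  have hus : u < s := ((min_le_left _ _).trans (min_le_right _ _)).trans_lt (by linarith)
  have h1 := key u hus
  have h2 := hC u hu0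
  have h3 : (C - n s + 1) / σ ≤ s - u := by
    have := min_le_right (min 0 (s - 1)) (s - (C - n s + 1) / σ)
    linarith
  rw [div_le_iff₀ hσ0] at h3
  linarith

section PeriodMean

variable {F H : ℂ → ℂ} {Y Y₁ Y₂ : ℝ → ℝ}

/-- `Y(|F|²)|H|²`. -/
noncomputable def modulusWeight (Y : ℝ → ℝ) (F H : ℂ → ℂ) (ζ : ℂ) : ℝ :=
  Y (‖F ζ‖ ^ 2) * ‖H ζ‖ ^ 2

/-- The `∂`-derivative of `modulusWeight`. -/
noncomputable def modulusWeightDeriv (Y Y₁ : ℝ → ℝ) (F H : ℂ → ℂ) (ζ : ℂ) : ℂ :=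
  (Y₁ (‖F ζ‖ ^ 2) : ℝ) * (starRingEnd ℂ (F ζ) * deriv F ζ) * (‖H ζ‖ ^ 2 : ℝ) +
    (Y (‖F ζ‖ ^ 2) : ℝ) * (starRingEnd ℂ (H ζ) * deriv H ζ)

/-- The `∂∂̄`-derivative of `modulusWeight`. -/
noncomputable def modulusWeightLaplacian (Y Y₁ Y₂ : ℝ → ℝ) (F H : ℂ → ℂ) (ζ : ℂ) : ℝ :=
  (Y₁ (‖F ζ‖ ^ 2) + ‖F ζ‖ ^ 2 * Y₂ (‖F ζ‖ ^ 2)) * ‖deriv F ζ‖ ^ 2 * ‖H ζ‖ ^ 2 +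
    2 * Y₁ (‖F ζ‖ ^ 2) *
      (starRingEnd ℂ (F ζ) * deriv F ζ * H ζ * starRingEnd ℂ (deriv H ζ)).re +
    Y (‖F ζ‖ ^ 2) * ‖deriv H ζ‖ ^ 2

lemma contDiff_ofReal_comp_norm_sq (hF : Differentiable ℂ F)
    (hY : ∀ x, 0 ≤ x → ContDiffAt ℝ 1 Y x) : ContDiff ℝ 1 fun ζ => Y (‖F ζ‖ ^ 2) :=
  contDiff_iff_contDiffAt.2 fun ζ =>
    (hY _ (by positivity)).comp ζ hF.contDiff_norm_sq.contDiffAt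

lemma contDiff_modulusWeight (hF : Differentiable ℂ F) (hH : Differentiable ℂ H)
    (hY : ∀ x, 0 ≤ x → ContDiffAt ℝ 1 Y x) : ContDiff ℝ 1 (modulusWeight Y F H) :=
  (contDiff_ofReal_comp_norm_sq hF hY).mul hH.contDiff_norm_sq

lemma contDiff_conj_mul_deriv (hF : Differentiable ℂ F) :
    ContDiff ℝ 1 fun ζ => starRingEnd ℂ (F ζ) * deriv F ζ :=
  (Complex.conjCLE.contDiff.comp (hF.contDiff.restrict_scalars ℝ)).mul
    (hF.deriv.contDiff.restrict_scalars ℝ)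

lemma contDiff_modulusWeightDeriv (hF : Differentiable ℂ F) (hH : Differentiable ℂ H)
    (hY : ∀ x, 0 ≤ x → ContDiffAt ℝ 1 Y x) (hY₁ : ∀ x, 0 ≤ x → ContDiffAt ℝ 1 Y₁ x) :
    ContDiff ℝ 1 (modulusWeightDeriv Y Y₁ F H) := by
  have h : ∀ {k : ℂ → ℝ}, ContDiff ℝ 1 k → ContDiff ℝ 1 fun ζ => (k ζ : ℂ) := fun h =>
    Complex.ofRealCLM.contDiff.comp h
  exact (((h (contDiff_ofReal_comp_norm_sq hF hY₁)).mul (contDiff_conj_mul_deriv hF)).mul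
    (h hH.contDiff_norm_sq)).add
    ((h (contDiff_ofReal_comp_norm_sq hF hY)).mul (contDiff_conj_mul_deriv hH))

lemma dbar_comp_norm_sq (hF : Differentiable ℂ F)
    (hYd : ∀ x, 0 ≤ x → HasDerivAt Y (Y₁ x) x) (ζ : ℂ) :
    dbar (fun ζ => ((Y (‖F ζ‖ ^ 2) : ℝ) : ℂ)) ζ =
      (Y₁ (‖F ζ‖ ^ 2) : ℝ) * (F ζ * starRingEnd ℂ (deriv F ζ)) := by
  rw [dbar_ofReal_comp (hYd _ (by positivity)) (hF.contDiff_norm_sq.differentiable one_ne_zero ζ),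
    dbar_ofReal_norm_sq hF]

lemma dbar_conj_mul_deriv (hF : Differentiable ℂ F) (ζ : ℂ) :
    dbar (fun ζ => starRingEnd ℂ (F ζ) * deriv F ζ) ζ = (‖deriv F ζ‖ ^ 2 : ℝ) := by
  have dconj : DifferentiableAt ℝ (fun w : ℂ => starRingEnd ℂ (F w)) ζ :=
    Complex.conjCLE.differentiableAt.comp ζ ((hF ζ).restrictScalars ℝ)
  rw [dbar_mul dconj ((hF.deriv ζ).restrictScalars ℝ), (hF ζ).hasDerivAt.dbar_conj, (hF.deriv ζ).dbar_eq_zero,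
    mul_zero, add_zero, mul_comm, Complex.mul_conj, Complex.normSq_eq_norm_sq]

lemma dbar_modulusWeight (hF : Differentiable ℂ F) (hH : Differentiable ℂ H)
    (hY : ∀ x, 0 ≤ x → ContDiffAt ℝ 1 Y x) (hYd : ∀ x, 0 ≤ x → HasDerivAt Y (Y₁ x) x) (ζ : ℂ) :
    dbar (fun ζ => (modulusWeight Y F H ζ : ℂ)) ζ =
      starRingEnd ℂ (modulusWeightDeriv Y Y₁ F H ζ) := by
  have h : ∀ {k : ℂ → ℝ}, ContDiff ℝ 1 k → DifferentiableAt ℝ (fun ζ => (k ζ : ℂ)) ζ := fun h =>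
    (Complex.ofRealCLM.contDiff.comp h).differentiable one_ne_zero ζ
  simp only [modulusWeight, Complex.ofReal_mul]
  rw [dbar_mul (h (contDiff_ofReal_comp_norm_sq hF hY)) (h hH.contDiff_norm_sq),
    dbar_comp_norm_sq hF hYd, dbar_ofReal_norm_sq hH, modulusWeightDeriv]
  simp only [map_add, map_mul, Complex.conj_ofReal, Complex.conj_conj]

lemma dbar_modulusWeightDeriv (hF : Differentiable ℂ F) (hH : Differentiable ℂ H)
    (hY : ∀ x, 0 ≤ x → ContDiffAt ℝ 1 Y x) (hYd : ∀ x, 0 ≤ x → HasDerivAt Y (Y₁ x) x)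
    (hY₁ : ∀ x, 0 ≤ x → ContDiffAt ℝ 1 Y₁ x) (hY₁d : ∀ x, 0 ≤ x → HasDerivAt Y₁ (Y₂ x) x)
    (ζ : ℂ) :
    dbar (modulusWeightDeriv Y Y₁ F H) ζ = modulusWeightLaplacian Y Y₁ Y₂ F H ζ := by
  have h : ∀ {k : ℂ → ℝ}, ContDiff ℝ 1 k → DifferentiableAt ℝ (fun ζ => (k ζ : ℂ)) ζ := fun h =>
    (Complex.ofRealCLM.contDiff.comp h).differentiable one_ne_zero ζ
  have d1 := h (contDiff_ofReal_comp_norm_sq hF hY₁)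
  have d2 := (contDiff_conj_mul_deriv hF).differentiable one_ne_zero ζ
  have d3 := h hH.contDiff_norm_sq
  have d4 := h (contDiff_ofReal_comp_norm_sq hF hY)
  have d5 := (contDiff_conj_mul_deriv hH).differentiable one_ne_zero ζ
  have e : modulusWeightDeriv Y Y₁ F H = fun ζ =>
      ((Y₁ (‖F ζ‖ ^ 2) : ℝ) * (starRingEnd ℂ (F ζ) * deriv F ζ)) * (‖H ζ‖ ^ 2 : ℝ) +
      (Y (‖F ζ‖ ^ 2) : ℝ) * (starRingEnd ℂ (H ζ) * deriv H ζ) := rfl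
  rw [e, dbar_add ((d1.fun_mul d2).fun_mul d3) (d4.fun_mul d5),
    dbar_mul (d1.fun_mul d2) d3, dbar_mul d1 d2,
    dbar_mul d4 d5, dbar_comp_norm_sq hF hYd, dbar_comp_norm_sq hF hY₁d, dbar_ofReal_norm_sq hH,
    dbar_conj_mul_deriv hF, dbar_conj_mul_deriv hH, modulusWeightLaplacian]
  have hre : ∀ w : ℂ, ((2 * w.re : ℝ) : ℂ) = w + starRingEnd ℂ w := fun w =>
    (Complex.add_conj w).symm
  set w := starRingEnd ℂ (F ζ) * deriv F ζ * H ζ * starRingEnd ℂ (deriv H ζ) with hw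
  have hw' : starRingEnd ℂ w = F ζ * starRingEnd ℂ (deriv F ζ) * starRingEnd ℂ (H ζ) *
      deriv H ζ := by
    simp [hw]
  have hn : ∀ z : ℂ, ((‖z‖ ^ 2 : ℝ) : ℂ) = z * starRingEnd ℂ z := fun z => by
    rw [Complex.mul_conj, Complex.normSq_eq_norm_sq]
  rw [show 2 * Y₁ (‖F ζ‖ ^ 2) * w.re = Y₁ (‖F ζ‖ ^ 2) * (2 * w.re) by ring]
  have h2 : (Y₁ (‖F ζ‖ ^ 2) * (2 * w.re) : ℝ) = (Y₁ (‖F ζ‖ ^ 2) : ℂ) * (w + starRingEnd ℂ w) := by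
    rw [← hre, Complex.ofReal_mul]
  rw [Complex.ofReal_add, Complex.ofReal_add, h2, hw', hw]
  simp only [Complex.ofReal_add, Complex.ofReal_mul, hn]
  ring

lemma modulusWeightLaplacian_nonneg (hY0 : ∀ x, 0 ≤ x → 0 ≤ Y x)
    (hYY : ∀ x, 0 ≤ x → 0 ≤ Y₁ x + x * Y₂ x)
    (hlc : ∀ x, 0 ≤ x → x * Y₁ x ^ 2 ≤ Y x * (Y₁ x + x * Y₂ x)) (ζ : ℂ) :
    0 ≤ modulusWeightLaplacian Y Y₁ Y₂ F H ζ := by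
  rw [modulusWeightLaplacian]
  set x := ‖F ζ‖ ^ 2 with hx
  have hx0 : 0 ≤ x := by positivity
  set w := starRingEnd ℂ (F ζ) * deriv F ζ * H ζ * starRingEnd ℂ (deriv H ζ) with hw
  have hnw : ‖w‖ = ‖F ζ‖ * (‖deriv F ζ‖ * ‖H ζ‖) * ‖deriv H ζ‖ := by
    rw [hw]; simp only [norm_mul, RCLike.norm_conj]; ring
  have h1 := hlc x hx0
  have h2 := hY0 x hx0
  have h3 := hYY x hx0
  set P := Y₁ x + x * Y₂ x
  set s := ‖deriv F ζ‖ * ‖H ζ‖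
  set d := ‖deriv H ζ‖
  have h4 : |Y₁ x * w.re| ≤ Real.sqrt P * s * (Real.sqrt (Y x) * d) := by
    rw [abs_mul]
    calc |Y₁ x| * |w.re| ≤ |Y₁ x| * ‖w‖ := by gcongr; exact Complex.abs_re_le_norm w
      _ = |Y₁ x| * ‖F ζ‖ * (s * d) := by rw [hnw]; ring
      _ ≤ Real.sqrt (Y x * P) * (s * d) := by
        gcongr
        apply Real.le_sqrt_of_sq_le
        rw [mul_pow, sq_abs, ← hx]
        linarith
      _ = _ := by rw [Real.sqrt_mul h2]; ring
  have h5 := neg_le_of_abs_le h4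
  have h6 : P * ‖deriv F ζ‖ ^ 2 * ‖H ζ‖ ^ 2 = (Real.sqrt P * s) ^ 2 := by
    rw [mul_pow, Real.sq_sqrt h3]; ring
  have h7 : Y x * d ^ 2 = (Real.sqrt (Y x) * d) ^ 2 := by
    rw [mul_pow, Real.sq_sqrt h2]
  rw [h6, h7]
  nlinarith [sq_nonneg (Real.sqrt P * s - Real.sqrt (Y x) * d)]

lemma deriv_add_period {c : ℂ} (hF : ∀ ζ, F (ζ + c) = F ζ) (ζ : ℂ) :
    deriv F (ζ + c) = deriv F ζ := by
  rw [← deriv_comp_add_const]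
  simp only [hF]

lemma hasDerivAt_periodMean_modulusWeight (hF : Differentiable ℂ F) (hH : Differentiable ℂ H)
    (hFp : ∀ ζ, F (ζ + 2 * Real.pi * Complex.I) = F ζ)
    (hHp : ∀ ζ, H (ζ + 2 * Real.pi * Complex.I) = H ζ)
    (hY : ∀ x, 0 ≤ x → ContDiffAt ℝ 1 Y x) (hYd : ∀ x, 0 ≤ x → HasDerivAt Y (Y₁ x) x)
    (hY₁ : ∀ x, 0 ≤ x → ContDiffAt ℝ 1 Y₁ x) (hY₁d : ∀ x, 0 ≤ x → HasDerivAt Y₁ (Y₂ x) x)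
    (t : ℝ) :
    HasDerivAt (fun t : ℝ => ∫ θ in (0 : ℝ)..2 * Real.pi, modulusWeight Y F H (t + θ * Complex.I))
      (2 * (∫ θ in (0 : ℝ)..2 * Real.pi, modulusWeightDeriv Y Y₁ F H (t + θ * Complex.I)).re) t ∧
    HasDerivAt (fun t : ℝ =>
        2 * (∫ θ in (0 : ℝ)..2 * Real.pi, modulusWeightDeriv Y Y₁ F H (t + θ * Complex.I)).re)
      (4 * ∫ θ in (0 : ℝ)..2 * Real.pi,
        modulusWeightLaplacian Y Y₁ Y₂ F H (t + θ * Complex.I)) t :=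
  hasDerivAt_periodMean_of_dbar (contDiff_modulusWeight hF hH hY)
    (contDiff_modulusWeightDeriv hF hH hY hY₁)
    (fun ζ => by simp only [modulusWeight, hFp, hHp])
    (fun ζ => by
      simp only [modulusWeightDeriv, hFp, hHp, deriv_add_period hFp, deriv_add_period hHp])
    (dbar_modulusWeight hF hH hY hYd) (dbar_modulusWeightDeriv hF hH hY hYd hY₁ hY₁d) t

lemma convexOn_periodMean_modulusWeight (hF : Differentiable ℂ F) (hH : Differentiable ℂ H)
    (hFp : ∀ ζ, F (ζ + 2 * Real.pi * Complex.I) = F ζ)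
    (hHp : ∀ ζ, H (ζ + 2 * Real.pi * Complex.I) = H ζ)
    (hY : ∀ x, 0 ≤ x → ContDiffAt ℝ 1 Y x) (hYd : ∀ x, 0 ≤ x → HasDerivAt Y (Y₁ x) x)
    (hY₁ : ∀ x, 0 ≤ x → ContDiffAt ℝ 1 Y₁ x) (hY₁d : ∀ x, 0 ≤ x → HasDerivAt Y₁ (Y₂ x) x)
    (hL : ∀ ζ, 0 ≤ modulusWeightLaplacian Y Y₁ Y₂ F H ζ) :
    ConvexOn ℝ Set.univ fun t : ℝ =>
      ∫ θ in (0 : ℝ)..2 * Real.pi, modulusWeight Y F H (t + θ * Complex.I) := by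
  have h := hasDerivAt_periodMean_modulusWeight hF hH hFp hHp hY hYd hY₁ hY₁d
  refine Monotone.convexOn_univ_of_deriv (fun t => (h t).1.differentiableAt) ?_
  rw [funext fun t => (h t).1.deriv]
  refine monotone_of_deriv_nonneg (fun t => (h t).2.differentiableAt) fun t => ?_
  rw [(h t).2.deriv]
  exact mul_nonneg zero_le_four
    (intervalIntegral.integral_nonneg (by positivity) fun θ _ => hL _)

end PeriodMean

section RegularizedPower

variable {ε κ x : ℝ}

lemma hasDerivAt_add_rpow (hε : 0 < ε) (hx : 0 ≤ x) :
    HasDerivAt (fun x => (x + ε) ^ κ) (κ * (x + ε) ^ (κ - 1)) x := by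
  simpa using ((hasDerivAt_id x).add_const ε).rpow_const (p := κ) (Or.inl (by simp; linarith))

lemma contDiffAt_add_rpow (hε : 0 < ε) (hx : 0 ≤ x) {n : WithTop ℕ∞} :
    ContDiffAt ℝ n (fun x => (x + ε) ^ κ) x :=
  (contDiffAt_id.add contDiffAt_const).rpow_const_of_ne (by simp; linarith)

/-- `(x φ')'` for `φ(x) = (x + ε)^κ`. -/
noncomputable def regWeight (ε κ x : ℝ) : ℝ := κ * ((x + ε) ^ (κ - 2) * (ε + κ * x))

/-- The derivative of `regWeight`. -/
noncomputable def regWeightDeriv (ε κ x : ℝ) : ℝ :=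
  κ * ((κ - 2) * (x + ε) ^ (κ - 2 - 1) * (ε + κ * x) + (x + ε) ^ (κ - 2) * κ)

/-- The second derivative of `regWeight`. -/
noncomputable def regWeightDeriv₂ (ε κ x : ℝ) : ℝ :=
  κ * (((κ - 2) * ((κ - 2 - 1) * (x + ε) ^ (κ - 2 - 1 - 1)) * (ε + κ * x) +
    (κ - 2) * (x + ε) ^ (κ - 2 - 1) * κ) + (κ - 2) * (x + ε) ^ (κ - 2 - 1) * κ)

lemma hasDerivAt_regWeight (hε : 0 < ε) (hx : 0 ≤ x) :
    HasDerivAt (regWeight ε κ) (regWeightDeriv ε κ x) x := by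
  have h : HasDerivAt (fun x => ε + κ * x) κ x := by
    simpa using ((hasDerivAt_id x).const_mul κ).const_add ε
  exact ((hasDerivAt_add_rpow hε hx).mul h).const_mul κ

lemma hasDerivAt_regWeightDeriv (hε : 0 < ε) (hx : 0 ≤ x) :
    HasDerivAt (regWeightDeriv ε κ) (regWeightDeriv₂ ε κ x) x := by
  have h : HasDerivAt (fun x => ε + κ * x) κ x := by
    simpa using ((hasDerivAt_id x).const_mul κ).const_add ε
  exact ((((hasDerivAt_add_rpow hε hx).const_mul (κ - 2)).mul h).add
    ((hasDerivAt_add_rpow hε hx).mul_const κ)).const_mul κ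

lemma contDiffAt_regWeight (hε : 0 < ε) (hx : 0 ≤ x) : ContDiffAt ℝ 1 (regWeight ε κ) x :=
  contDiffAt_const.mul ((contDiffAt_add_rpow hε hx).mul (by fun_prop))

lemma contDiffAt_regWeightDeriv (hε : 0 < ε) (hx : 0 ≤ x) :
    ContDiffAt ℝ 1 (regWeightDeriv ε κ) x :=
  contDiffAt_const.mul (((contDiffAt_const.mul (contDiffAt_add_rpow hε hx)).mul (by fun_prop)).add
    ((contDiffAt_add_rpow hε hx).mul contDiffAt_const))

lemma regWeight_pos (hε : 0 < ε) (hκ : 0 < κ) (hx : 0 ≤ x) : 0 < regWeight ε κ x := by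
  rw [regWeight]; positivity

lemma regWeight_eq (hε : 0 < ε) (hx : 0 ≤ x) :
    κ * (x + ε) ^ (κ - 1) + x * (κ * ((κ - 1) * (x + ε) ^ (κ - 1 - 1))) = regWeight ε κ x := by
  have h : 0 < x + ε := by positivity
  rw [regWeight, show κ - 1 - 1 = κ - 2 by ring, show κ - 1 = κ - 2 + 1 by ring,
    Real.rpow_add h, Real.rpow_one]
  ring

lemma regWeight_logConvex (hε : 0 < ε) (hκ : 1 ≤ κ) (hx : 0 ≤ x) :
    x * regWeightDeriv ε κ x ^ 2 ≤
      regWeight ε κ x * (regWeightDeriv ε κ x + x * regWeightDeriv₂ ε κ x) := by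
  have h : 0 < x + ε := by positivity
  rw [regWeight, regWeightDeriv, regWeightDeriv₂]
  set T := (x + ε) ^ (κ - 2 - 1 - 1) with hT
  have h1 : (x + ε) ^ (κ - 2 - 1) = T * (x + ε) := by
    rw [hT, ← Real.rpow_add_one h.ne']; ring_nf
  have h2 : (x + ε) ^ (κ - 2) = T * (x + ε) ^ 2 := by
    rw [show T * (x + ε) ^ 2 = T * (x + ε) * (x + ε) by ring, ← h1, ← Real.rpow_add_one h.ne']
    ring_nf
  rw [h1, h2, ← sub_nonneg]
  have key : κ * (T * (x + ε) ^ 2 * (ε + κ * x)) *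
      (κ * ((κ - 2) * (T * (x + ε)) * (ε + κ * x) + T * (x + ε) ^ 2 * κ) +
        x * (κ * (((κ - 2) * ((κ - 2 - 1) * T) * (ε + κ * x) + (κ - 2) * (T * (x + ε)) * κ) +
          (κ - 2) * (T * (x + ε)) * κ))) -
      x * (κ * ((κ - 2) * (T * (x + ε)) * (ε + κ * x) + T * (x + ε) ^ 2 * κ)) ^ 2 =
      (κ * T * (x + ε)) ^ 2 * ε *
        (κ * ((κ - 1) * x) ^ 2 + 2 * κ * (κ - 1) * x * ε + 2 * (κ - 1) * ε ^ 2) := by ring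
  rw [key]
  have : 0 ≤ κ - 1 := by linarith
  positivity

lemma regWeightDeriv_add_nonneg (hε : 0 < ε) (hκ : 1 ≤ κ) (hx : 0 ≤ x) :
    0 ≤ regWeightDeriv ε κ x + x * regWeightDeriv₂ ε κ x := by
  have h1 := regWeight_logConvex hε hκ hx
  have h2 := regWeight_pos hε (by linarith : 0 < κ) hx
  have h3 : 0 ≤ x * regWeightDeriv ε κ x ^ 2 := by positivity
  exact nonneg_of_mul_nonneg_right (h3.trans h1) h2

end RegularizedPower

section CircleMeans

variable {f : ℂ → ℂ} {ε κ : ℝ}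

lemma exp_add_period (ζ : ℂ) : Complex.exp (ζ + 2 * Real.pi * Complex.I) = Complex.exp ζ :=
  Complex.exp_periodic ζ

lemma norm_exp_add_mul_I (t θ : ℝ) : ‖Complex.exp (t + θ * Complex.I)‖ = Real.exp t := by
  rw [Complex.norm_exp]; simp

/-- A continuous function composed with `exp` has bounded period means on the left half-line. -/
lemma exists_norm_comp_exp_le {E : Type*} [NormedAddCommGroup E] {g : ℂ → E} (hg : Continuous g) :
    ∃ C, 0 ≤ C ∧ ∀ t ≤ (0 : ℝ), ∀ θ : ℝ, ‖g (Complex.exp (t + θ * Complex.I))‖ ≤ C := by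
  obtain ⟨C, hC⟩ := (isCompact_closedBall (0 : ℂ) 1).exists_bound_of_continuousOn hg.continuousOn
  have hb : ∀ t ≤ (0 : ℝ), ∀ θ : ℝ, ‖g (Complex.exp (t + θ * Complex.I))‖ ≤ C := fun t ht θ =>
    hC _ (by rw [mem_closedBall_zero_iff, norm_exp_add_mul_I]; exact Real.exp_le_one_iff.2 ht)
  exact ⟨C, (norm_nonneg _).trans (hb 0 le_rfl 0), hb⟩

/-- Period mean of `(|f|² + ε)^κ` along `exp`. -/
noncomputable def regMean (f : ℂ → ℂ) (ε κ t : ℝ) : ℝ :=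
  ∫ θ in (0 : ℝ)..2 * Real.pi, (‖f (Complex.exp (t + θ * Complex.I))‖ ^ 2 + ε) ^ κ

lemma regMean_eq :
    regMean f ε κ = fun t : ℝ => ∫ θ in (0 : ℝ)..2 * Real.pi,
      modulusWeight (fun x => (x + ε) ^ κ) (fun ζ => f (Complex.exp ζ)) (fun _ => 1)
        (t + θ * Complex.I) := by
  ext t
  simp [regMean, modulusWeight]

lemma deriv_comp_exp (hf : Differentiable ℂ f) (ζ : ℂ) :
    deriv (fun ζ => f (Complex.exp ζ)) ζ = deriv f (Complex.exp ζ) * Complex.exp ζ :=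
  ((hf _).hasDerivAt.comp ζ (Complex.hasDerivAt_exp ζ)).deriv

lemma regMean_laplacian (hf : Differentiable ℂ f) (hε : 0 < ε) (ζ : ℂ) :
    modulusWeightLaplacian (fun x => (x + ε) ^ κ) (fun x => κ * (x + ε) ^ (κ - 1))
      (fun x => κ * ((κ - 1) * (x + ε) ^ (κ - 1 - 1))) (fun ζ => f (Complex.exp ζ)) (fun _ => 1) ζ =
      ‖Complex.exp ζ‖ ^ 2 * modulusWeight (regWeight ε κ) f (deriv f) (Complex.exp ζ) := by
  rw [modulusWeightLaplacian, regWeight_eq hε (by positivity), deriv_comp_exp hf, modulusWeight]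
  simp
  ring

lemma hasDerivAt_regMean (hf : Differentiable ℂ f) (hε : 0 < ε) (t : ℝ) :
    HasDerivAt (regMean f ε κ) (2 * (∫ θ in (0 : ℝ)..2 * Real.pi,
      modulusWeightDeriv (fun x => (x + ε) ^ κ) (fun x => κ * (x + ε) ^ (κ - 1))
        (fun ζ => f (Complex.exp ζ)) (fun _ => 1) (t + θ * Complex.I)).re) t ∧
    HasDerivAt (fun t : ℝ => 2 * (∫ θ in (0 : ℝ)..2 * Real.pi,
      modulusWeightDeriv (fun x => (x + ε) ^ κ) (fun x => κ * (x + ε) ^ (κ - 1))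
        (fun ζ => f (Complex.exp ζ)) (fun _ => 1) (t + θ * Complex.I)).re)
      (4 * (Real.exp t ^ 2 * ∫ θ in (0 : ℝ)..2 * Real.pi,
        modulusWeight (regWeight ε κ) f (deriv f) (Complex.exp (t + θ * Complex.I)))) t := by
  have h := hasDerivAt_periodMean_modulusWeight (F := fun ζ => f (Complex.exp ζ))
    (H := fun _ => 1) (Y := fun x => (x + ε) ^ κ) (Y₁ := fun x => κ * (x + ε) ^ (κ - 1))
    (Y₂ := fun x => κ * ((κ - 1) * (x + ε) ^ (κ - 1 - 1)))
    (hf.comp Complex.differentiable_exp) (differentiable_const _)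
    (fun ζ => by rw [exp_add_period]) (fun _ => rfl)
    (fun x hx => contDiffAt_add_rpow hε hx) (fun x hx => hasDerivAt_add_rpow hε hx)
    (fun x hx => contDiffAt_const.mul (contDiffAt_add_rpow hε hx))
    (fun x hx => (hasDerivAt_add_rpow hε hx).const_mul κ) t
  rw [regMean_eq]
  refine ⟨h.1, h.2.congr_deriv ?_⟩
  simp only [regMean_laplacian hf hε, norm_exp_add_mul_I, intervalIntegral.integral_const_mul]

lemma modulusWeight_regWeight_nonneg {g : ℂ → ℂ} (hε : 0 < ε) (hκ : 0 < κ) (z : ℂ) :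
    0 ≤ modulusWeight (regWeight ε κ) f g z :=
  mul_nonneg (regWeight_pos hε hκ (by positivity)).le (by positivity)

lemma monotone_of_convexOn_of_comp_exp {g : ℂ → ℝ} (hg : Continuous g)
    (hc : ConvexOn ℝ Set.univ fun t : ℝ => ∫ θ in (0 : ℝ)..2 * Real.pi,
      g (Complex.exp (t + θ * Complex.I))) :
    Monotone fun t : ℝ => ∫ θ in (0 : ℝ)..2 * Real.pi, g (Complex.exp (t + θ * Complex.I)) := by
  obtain ⟨C, hC0, hC⟩ := exists_norm_comp_exp_le hg
  refine hc.monotone_of_bddAbove (C := C * |2 * Real.pi - 0|) fun t ht => ?_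
  exact (le_abs_self _).trans (intervalIntegral.norm_integral_le_of_norm_le_const
    fun θ _ => hC t ht θ)

lemma monotone_regMean (hf : Differentiable ℂ f) (hε : 0 < ε) (hκ : 0 < κ) :
    Monotone (regMean f ε κ) := by
  have h := hasDerivAt_regMean (κ := κ) hf hε
  have hfc := hf.continuous
  refine monotone_of_convexOn_of_comp_exp (g := fun z => (‖f z‖ ^ 2 + ε) ^ κ)
    ((by fun_prop : Continuous fun z => ‖f z‖ ^ 2 + ε).rpow_const fun _ => Or.inr hκ.le) ?_
  refine Monotone.convexOn_univ_of_deriv (f := regMean f ε κ)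
    (fun t => (h t).1.differentiableAt) ?_
  rw [funext fun t => (h t).1.deriv]
  refine monotone_of_deriv_nonneg (fun t => (h t).2.differentiableAt) fun t => ?_
  rw [(h t).2.deriv]
  have := intervalIntegral.integral_nonneg (μ := volume) (a := 0) (b := 2 * Real.pi)
    (by positivity) fun θ _ => modulusWeight_regWeight_nonneg (f := f) (g := deriv f) hε hκ
      (Complex.exp (t + θ * Complex.I))
  positivity

lemma monotone_regWeightMean (hf : Differentiable ℂ f) (hε : 0 < ε) (hκ : 1 ≤ κ) :
    Monotone fun t : ℝ => ∫ θ in (0 : ℝ)..2 * Real.pi,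
      modulusWeight (regWeight ε κ) f (deriv f) (Complex.exp (t + θ * Complex.I)) := by
  refine monotone_of_convexOn_of_comp_exp (contDiff_modulusWeight hf hf.deriv
    fun x hx => contDiffAt_regWeight hε hx).continuous ?_
  exact convexOn_periodMean_modulusWeight (F := fun ζ => f (Complex.exp ζ))
    (H := fun ζ => deriv f (Complex.exp ζ)) (Y := regWeight ε κ)
    (hf.comp Complex.differentiable_exp) (hf.deriv.comp Complex.differentiable_exp)
    (fun ζ => by rw [exp_add_period]) (fun ζ => by rw [exp_add_period])
    (fun x hx => contDiffAt_regWeight hε hx) (fun x hx => hasDerivAt_regWeight hε hx)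
    (fun x hx => contDiffAt_regWeightDeriv hε hx) (fun x hx => hasDerivAt_regWeightDeriv hε hx)
    (modulusWeightLaplacian_nonneg (fun x hx => (regWeight_pos hε (by linarith) hx).le)
      (fun x hx => regWeightDeriv_add_nonneg hε hκ hx)
      (fun x hx => regWeight_logConvex hε hκ hx))

end CircleMeans

/-- If `n'' = 4 e^{2t} k` with `k` nondecreasing and `n' → 0` at `-∞`, then `n` is a convex function
of `e^{2t}`. -/
lemma convexOn_comp_log_of_monotone {n n' k : ℝ → ℝ} (hn : ∀ t, HasDerivAt n (n' t) t)
    (hn' : ∀ t, HasDerivAt n' (4 * (Real.exp t ^ 2 * k t)) t) (hk : Monotone k)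
    (hlim : Filter.Tendsto n' Filter.atBot (nhds 0)) :
    ConvexOn ℝ (Set.Ioi 0) fun x => n (Real.log x / 2) := by
  have hexp : ∀ t, HasDerivAt (fun t => Real.exp t ^ 2) (2 * Real.exp t ^ 2) t := fun t => by
    refine ((Real.hasDerivAt_exp t).pow 2).congr_deriv ?_
    norm_num; ring
  have hle : ∀ t, n' t ≤ 2 * k t * Real.exp t ^ 2 := by
    intro t
    have hD : AntitoneOn (fun s => n' s - 2 * k t * Real.exp s ^ 2) (Set.Iic t) := by
      have hd : ∀ s, HasDerivAt (fun s => n' s - 2 * k t * Real.exp s ^ 2)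
          (4 * (Real.exp s ^ 2 * k s) - 2 * k t * (2 * Real.exp s ^ 2)) s := fun s =>
        (hn' s).sub ((hexp s).const_mul _)
      refine antitoneOn_of_deriv_nonpos (convex_Iic t)
        (fun s _ => (hd s).continuousAt.continuousWithinAt)
        (fun s _ => (hd s).differentiableAt.differentiableWithinAt) fun s hs => ?_
      rw [interior_Iic] at hs
      rw [(hd s).deriv]
      have h1 : k s ≤ k t := hk (le_of_lt hs)
      have h2 : 0 ≤ Real.exp s ^ 2 := by positivity
      nlinarith
    have hl : Filter.Tendsto (fun s => n' s - 2 * k t * Real.exp s ^ 2) Filter.atBot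
        (nhds (0 - 2 * k t * 0 ^ 2)) :=
      hlim.sub ((Real.tendsto_exp_atBot.pow 2).const_mul _)
    have := ge_of_tendsto hl (b := n' t - 2 * k t * Real.exp t ^ 2) (by
      filter_upwards [Filter.eventually_le_atBot t] with s hs
      exact hD hs (Set.self_mem_Iic) hs)
    linarith
  have hg : Monotone fun t => n' t * (Real.exp t ^ 2)⁻¹ := by
    have hd : ∀ t, HasDerivAt (fun t => n' t * (Real.exp t ^ 2)⁻¹)
        (4 * (Real.exp t ^ 2 * k t) * (Real.exp t ^ 2)⁻¹ +
          n' t * (-(2 * Real.exp t ^ 2) / (Real.exp t ^ 2) ^ 2)) t := fun t =>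
      (hn' t).mul ((hexp t).inv (by positivity))
    refine monotone_of_deriv_nonneg (fun t => (hd t).differentiableAt) fun t => ?_
    rw [(hd t).deriv]
    have h0 : 0 < Real.exp t ^ 2 := by positivity
    have : 4 * (Real.exp t ^ 2 * k t) * (Real.exp t ^ 2)⁻¹ +
        n' t * (-(2 * Real.exp t ^ 2) / (Real.exp t ^ 2) ^ 2) =
        2 * (Real.exp t ^ 2)⁻¹ * (2 * k t * Real.exp t ^ 2 - n' t) := by
      field_simp
      ring
    rw [this]
    exact mul_nonneg (by positivity) (sub_nonneg.2 (hle t))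
  have hd : ∀ x ∈ Set.Ioi (0 : ℝ), HasDerivAt (fun x => n (Real.log x / 2))
      (n' (Real.log x / 2) * (x⁻¹ / 2)) x := fun x hx =>
    (hn _).comp x ((Real.hasDerivAt_log (ne_of_gt hx)).div_const 2)
  refine MonotoneOn.convexOn_of_deriv (convex_Ioi 0)
    (fun x hx => (hd x hx).continuousAt.continuousWithinAt)
    (fun x hx => (hd x (interior_subset hx)).differentiableAt.differentiableWithinAt) ?_
  rw [interior_Ioi]
  intro x hx y hy hxy
  rw [(hd x hx).deriv, (hd y hy).deriv]
  have he : ∀ x ∈ Set.Ioi (0 : ℝ), Real.exp (Real.log x / 2) ^ 2 = x := fun x hx => by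
    rw [← Real.exp_nat_mul]
    push_cast
    rw [mul_div_cancel₀ _ two_ne_zero, Real.exp_log hx]
  have h1 := hg (show Real.log x / 2 ≤ Real.log y / 2 by
    have := Real.log_le_log hx hxy; linarith)
  simp only [he x hx, he y hy] at h1
  linarith

section CircleMeans

variable {f : ℂ → ℂ} {ε κ : ℝ}

lemma convexOn_regMean (hf : Differentiable ℂ f) (hε : 0 < ε) (hκ : 1 ≤ κ) :
    ConvexOn ℝ (Set.Ioi 0) fun x => regMean f ε κ (Real.log x / 2) := by
  have h := hasDerivAt_regMean (κ := κ) hf hε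
  refine convexOn_comp_log_of_monotone (fun t => (h t).1) (fun t => (h t).2)
    (monotone_regWeightMean hf hε hκ) ?_
  have hfc := hf.continuous
  have hfd := hf.deriv.continuous
  set g : ℂ → ℂ := fun z => ((κ * (‖f z‖ ^ 2 + ε) ^ (κ - 1) : ℝ) : ℂ) *
    (starRingEnd ℂ (f z) * deriv f z) with hg
  have hgc : Continuous g := by
    have h1 : Continuous fun z => (‖f z‖ ^ 2 + ε) ^ (κ - 1) :=
      (by fun_prop : Continuous fun z => ‖f z‖ ^ 2 + ε).rpow_const fun _ => Or.inr (by linarith)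
    have h2 : Continuous fun z => starRingEnd ℂ (f z) := Complex.continuous_conj.comp hfc
    fun_prop
  obtain ⟨C, hC0, hC⟩ := exists_norm_comp_exp_le hgc
  have hE : ∀ ζ, modulusWeightDeriv (fun x => (x + ε) ^ κ) (fun x => κ * (x + ε) ^ (κ - 1))
      (fun ζ => f (Complex.exp ζ)) (fun _ => 1) ζ = g (Complex.exp ζ) * Complex.exp ζ := by
    intro ζ
    rw [modulusWeightDeriv, deriv_comp_exp hf]
    simp [hg]
    ring
  simp only [hE]
  refine squeeze_zero_norm' (a := fun t => 2 * (C * |2 * Real.pi - 0|) * Real.exp t) ?_ ?_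
  · filter_upwards [Filter.eventually_le_atBot 0] with t ht
    rw [norm_mul, Real.norm_two, mul_assoc]
    gcongr
    refine (Complex.abs_re_le_norm _).trans ?_
    rw [mul_right_comm]
    refine intervalIntegral.norm_integral_le_of_norm_le_const fun θ _ => ?_
    rw [norm_mul, norm_exp_add_mul_I]
    gcongr
    exact hC t ht θ
  · simpa using Real.tendsto_exp_atBot.const_mul (2 * (C * |2 * Real.pi - 0|))

/-- The integral of `|f|^p` over the circle of radius `ρ`. -/
noncomputable def circleMean (f : ℂ → ℂ) (p ρ : ℝ) : ℝ :=
  ∫ θ in (0 : ℝ)..2 * Real.pi, ‖f (ρ * Complex.exp (θ * Complex.I))‖ ^ p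

lemma tendsto_regMean (hf : Continuous f) {p ρ : ℝ} (hp : 0 < p) (hρ : 0 < ρ) :
    Filter.Tendsto (fun ε => regMean f ε (p / 2) (Real.log ρ)) (nhdsWithin 0 (Set.Ioi 0))
      (nhds (circleMean f p ρ)) := by
  have hc : Continuous fun ε => regMean f ε (p / 2) (Real.log ρ) := by
    refine intervalIntegral.continuous_parametric_intervalIntegral_of_continuous' ?_ _ _
    unfold Function.uncurry
    exact Continuous.rpow_const (by fun_prop) fun _ => Or.inr (by positivity)
  have h0 : regMean f 0 (p / 2) (Real.log ρ) = circleMean f p ρ := by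
    rw [regMean, circleMean]
    congr 1
    ext θ
    rw [add_zero, Complex.exp_add, ← Complex.ofReal_exp, Real.exp_log hρ, ← Real.rpow_natCast,
      ← Real.rpow_mul (norm_nonneg _)]
    congr 1
    push_cast
    ring
  rw [← h0]
  exact (hc.tendsto 0).mono_left nhdsWithin_le_nhds

lemma circleMean_mono (hf : Differentiable ℂ f) {p ρ₁ ρ₂ : ℝ} (hp : 0 < p) (hρ : 0 < ρ₁)
    (h : ρ₁ ≤ ρ₂) : circleMean f p ρ₁ ≤ circleMean f p ρ₂ := by
  refine le_of_tendsto_of_tendsto (tendsto_regMean hf.continuous hp hρ)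
    (tendsto_regMean hf.continuous hp (hρ.trans_le h)) ?_
  filter_upwards [self_mem_nhdsWithin] with ε hε
  exact monotone_regMean hf hε (by positivity) (Real.log_le_log hρ h)

lemma convexOn_circleMean_sqrt (hf : Differentiable ℂ f) {q : ℝ} (hq : 2 ≤ q) :
    ConvexOn ℝ (Set.Ioi 0) fun x => circleMean f q (Real.sqrt x) := by
  have hlim : ∀ x ∈ Set.Ioi (0 : ℝ), Filter.Tendsto (fun ε => regMean f ε (q / 2) (Real.log x / 2))
      (nhdsWithin 0 (Set.Ioi 0)) (nhds (circleMean f q (Real.sqrt x))) := fun x hx => by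
    rw [← Real.log_sqrt (le_of_lt hx)]
    exact tendsto_regMean hf.continuous (by linarith) (Real.sqrt_pos.2 hx)
  refine ⟨convex_Ioi 0, fun x hx y hy a b ha hb hab => ?_⟩
  refine le_of_tendsto_of_tendsto (hlim _ ((convex_Ioi 0) hx hy ha hb hab))
    (((hlim x hx).const_smul a).add ((hlim y hy).const_smul b)) ?_
  filter_upwards [self_mem_nhdsWithin] with ε hε
  exact (convexOn_regMean hf hε (by linarith)).2 hx hy ha hb hab

end CircleMeans

section BetaDistribution

open ProbabilityTheory

lemma beta_succ_left {a b : ℝ} (ha : 0 < a) (hb : 0 < b) :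
    beta (a + 1) b = a / (a + b) * beta a b := by
  have h : a + 1 + b = (a + b) + 1 := by ring
  have h1 := (Real.Gamma_pos_of_pos (add_pos ha hb)).ne'
  have h2 : a + b ≠ 0 := by positivity
  rw [beta, beta, h, Real.Gamma_add_one ha.ne', Real.Gamma_add_one h2]
  field_simp

lemma lintegral_rpow_mul_one_sub_rpow {a b : ℝ} (ha : 0 < a) (hb : 0 < b) :
    ∫⁻ u in Set.Ioo (0 : ℝ) 1, ENNReal.ofReal (u ^ (a - 1) * (1 - u) ^ (b - 1)) =
      ENNReal.ofReal (beta a b) := by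
  have hB := beta_pos ha hb
  have h := lintegral_betaPDF_eq_one ha hb
  rw [lintegral_betaPDF] at h
  simp_rw [mul_assoc, ENNReal.ofReal_mul (one_div_nonneg.2 hB.le)] at h
  rw [lintegral_const_mul _ (by fun_prop)] at h
  have h2 := congrArg (fun t => ENNReal.ofReal (beta a b) * t) h
  simp only [← mul_assoc, ← ENNReal.ofReal_mul hB.le, mul_one_div_cancel hB.ne',
    ENNReal.ofReal_one, one_mul, mul_one] at h2
  exact h2

lemma lintegral_betaMeasure {a b : ℝ} (ha : 0 < a) (hb : 0 < b) {g : ℝ → ENNReal}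
    (hg : Measurable g) :
    ∫⁻ u, g u ∂(betaMeasure a b) = ENNReal.ofReal (beta a b)⁻¹ *
      ∫⁻ u in Set.Ioo (0 : ℝ) 1, ENNReal.ofReal (u ^ (a - 1) * (1 - u) ^ (b - 1)) * g u := by
  have hB := beta_pos ha hb
  have hm : Measurable (betaPDF a b) := (measurable_betaPDFReal a b).ennreal_ofReal
  rw [betaMeasure, lintegral_withDensity_eq_lintegral_mul _ hm hg,
    ← lintegral_const_mul _ (by fun_prop), ← lintegral_indicator measurableSet_Ioo]
  congr 1
  ext u
  by_cases hu : u ∈ Set.Ioo (0 : ℝ) 1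
  · rw [Set.indicator_of_mem hu, Pi.mul_apply, betaPDF_of_pos_lt_one hu.1 hu.2, ← mul_assoc,
      ← ENNReal.ofReal_mul (inv_nonneg.2 hB.le), one_div, mul_assoc]
  · rw [Set.indicator_of_notMem hu, Pi.mul_apply, betaPDF, betaPDFReal, if_neg (Set.mem_Ioo.not.1 hu)]
    simp

lemma ae_betaMeasure_mem_Ioo (a b : ℝ) : ∀ᵐ u ∂(betaMeasure a b), u ∈ Set.Ioo (0 : ℝ) 1 := by
  have hm : Measurable (betaPDF a b) := (measurable_betaPDFReal a b).ennreal_ofReal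
  rw [betaMeasure, ae_withDensity_iff hm]
  refine Filter.Eventually.of_forall fun u hu => ?_
  by_contra h
  refine hu ?_
  rw [betaPDF, betaPDFReal, if_neg (Set.mem_Ioo.not.1 h), ENNReal.ofReal_zero]

lemma integral_id_betaMeasure {a b : ℝ} (ha : 0 < a) (hb : 0 < b) :
    ∫ u, u ∂(betaMeasure a b) = a / (a + b) := by
  have hB := beta_pos ha hb
  rw [integral_eq_lintegral_of_nonneg_ae
    ((ae_betaMeasure_mem_Ioo a b).mono fun u hu => hu.1.le) (by fun_prop),
    lintegral_betaMeasure ha hb (by fun_prop)]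
  have : ∫⁻ u in Set.Ioo (0 : ℝ) 1,
      ENNReal.ofReal (u ^ (a - 1) * (1 - u) ^ (b - 1)) * ENNReal.ofReal u =
      ENNReal.ofReal (beta (a + 1) b) := by
    rw [← lintegral_rpow_mul_one_sub_rpow (by linarith) hb]
    refine setLIntegral_congr_fun measurableSet_Ioo fun u hu => ?_
    have h1 : 0 < 1 - u := by linarith [hu.2]
    have h0 := hu.1
    rw [← ENNReal.ofReal_mul (by positivity), add_sub_cancel_right]
    congr 1
    have h2 : u ^ a = u ^ (a - 1) * u := by
      rw [← Real.rpow_add_one h0.ne']; ring_nf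
    rw [h2]; ring
  rw [this, beta_succ_left ha hb, ← ENNReal.ofReal_mul (by positivity),
    ENNReal.toReal_ofReal (by positivity)]
  field_simp

lemma ofReal_map_mean_le_lintegral_betaMeasure {a b : ℝ} (ha : 0 < a) (hb : 0 < b) {M : ℝ → ℝ}
    (hM : Continuous M) (hM0 : ∀ x, 0 ≤ M x) (hconv : ConvexOn ℝ (Set.Ici 0) M) {x : ℝ}
    (hx : 0 ≤ x) :
    ENNReal.ofReal (M (a / (a + b) * x)) ≤
      ∫⁻ u, ENNReal.ofReal (M (u * x)) ∂(betaMeasure a b) := by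
  have := isProbabilityMeasureBeta ha hb
  have hbd : ∀ g : ℝ → ℝ, Continuous g → Integrable g (betaMeasure a b) := fun g hg => by
    obtain ⟨C, hC⟩ := (isCompact_Icc (a := (0 : ℝ)) (b := 1)).exists_bound_of_continuousOn
      hg.continuousOn
    exact Integrable.of_bound hg.aestronglyMeasurable C
      ((ae_betaMeasure_mem_Ioo a b).mono fun u hu => hC u (Set.Ioo_subset_Icc_self hu))
  have h := hconv.map_integral_le (μ := betaMeasure a b) (f := fun u => u * x) hM.continuousOn
    isClosed_Ici
    ((ae_betaMeasure_mem_Ioo a b).mono fun u hu => mul_nonneg hu.1.le hx)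
    (hbd _ (by fun_prop)) (hbd _ (by fun_prop))
  rw [integral_mul_const, integral_id_betaMeasure ha hb] at h
  rw [← ofReal_integral_eq_lintegral_ofReal (hbd _ (by fun_prop))
    (Filter.Eventually.of_forall fun u => hM0 _)]
  exact ENNReal.ofReal_le_ofReal h

lemma setLIntegral_Ioo_comp_mul {c : ℝ} (hc : 0 < c) (g : ℝ → ENNReal) :
    ∫⁻ y in Set.Ioo 0 c, g y = ENNReal.ofReal c * ∫⁻ x in Set.Ioo (0 : ℝ) 1, g (c * x) := by
  have himg : (fun x => c * x) '' Set.Ioo 0 1 = Set.Ioo 0 c := by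
    rw [Set.image_mul_left_Ioo hc]; simp
  rw [← himg, lintegral_image_eq_lintegral_abs_deriv_mul measurableSet_Ioo (f' := fun _ => c)
    (fun x _ => by simpa using ((hasDerivAt_id x).const_mul c).hasDerivWithinAt)
    (fun x _ y _ h => mul_left_cancel₀ hc.ne' h), abs_of_pos hc,
    lintegral_const_mul' _ _ ENNReal.ofReal_ne_top]

lemma setLIntegral_Ioo_affine {y : ℝ} (hy : y < 1) (g : ℝ → ENNReal) :
    ∫⁻ b in Set.Ioo y 1, g b =
      ENNReal.ofReal (1 - y) * ∫⁻ u in Set.Ioo (0 : ℝ) 1, g ((1 - y) * u + y) := by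
  have hc : 0 < 1 - y := by linarith
  have himg : (fun x => (1 - y) * x + y) '' Set.Ioo 0 1 = Set.Ioo y 1 := by
    rw [Set.image_affine_Ioo hc]; simp
  rw [← himg, lintegral_image_eq_lintegral_abs_deriv_mul measurableSet_Ioo
    (f' := fun _ => 1 - y)
    (fun x _ => by simpa using (((hasDerivAt_id x).const_mul (1 - y)).add_const y).hasDerivWithinAt)
    (fun x _ z _ h => mul_left_cancel₀ hc.ne' (add_right_cancel h)), abs_of_pos hc,
    lintegral_const_mul' _ _ ENNReal.ofReal_ne_top]

lemma lintegral_sub_rpow_mul_one_sub_rpow {a b y : ℝ} (ha : 0 < a) (hb : 0 < b) (hy : y < 1) :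
    ∫⁻ t in Set.Ioo y 1, ENNReal.ofReal ((t - y) ^ (a - 1) * (1 - t) ^ (b - 1)) =
      ENNReal.ofReal ((1 - y) ^ (a + b - 1) * beta a b) := by
  have hc : 0 < 1 - y := by linarith
  rw [setLIntegral_Ioo_affine hy, ENNReal.ofReal_mul (by positivity),
    ← lintegral_rpow_mul_one_sub_rpow ha hb, ← lintegral_const_mul' _ _ ENNReal.ofReal_ne_top,
    ← lintegral_const_mul' _ _ ENNReal.ofReal_ne_top]
  refine setLIntegral_congr_fun measurableSet_Ioo fun u hu => ?_
  have h1 : 0 < 1 - u := by linarith [hu.2]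
  have h0 := hu.1
  have e1 : (1 - y) * u + y - y = (1 - y) * u := by ring
  have e2 : 1 - ((1 - y) * u + y) = (1 - y) * (1 - u) := by ring
  simp only [e1, e2]
  rw [← ENNReal.ofReal_mul hc.le, ← ENNReal.ofReal_mul (by positivity),
    Real.mul_rpow hc.le h0.le, Real.mul_rpow hc.le h1.le]
  congr 1
  have : (1 - y) ^ (a + b - 1) = (1 - y) * (1 - y) ^ (a - 1) * (1 - y) ^ (b - 1) := by
    rw [mul_comm (1 - y), ← Real.rpow_add_one hc.ne', ← Real.rpow_add hc]
    ring_nf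
  rw [this]
  ring

/-- The product of independent `Beta(1, β - 1)` and `Beta(β, γ - β)` variables is
`Beta(1, γ - 1)` distributed. -/
lemma lintegral_lintegral_betaMeasure {β γ : ℝ} (hβ : 1 < β) (hβγ : β < γ) {N : ℝ → ENNReal}
    (hN : Measurable N) :
    ∫⁻ x in Set.Ioo (0 : ℝ) 1, ENNReal.ofReal ((β - 1) * (1 - x) ^ (β - 2)) *
        ∫⁻ b, N (b * x) ∂(betaMeasure β (γ - β)) =
      ∫⁻ y in Set.Ioo (0 : ℝ) 1, ENNReal.ofReal ((γ - 1) * (1 - y) ^ (γ - 2)) * N y := by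
  have hβ0 : 0 < β := by linarith
  have hd : 0 < γ - β := by linarith
  have hB := beta_pos hβ0 hd
  have hβ1 : 0 < β - 1 := by linarith
  have hγ1 : 0 < γ - 1 := by linarith
  have hrec : (β - 1) * (beta β (γ - β))⁻¹ * beta (β - 1) (γ - β) = γ - 1 := by
    have := beta_succ_left hβ1 hd
    rw [show β - 1 + 1 = β by ring, show β - 1 + (γ - β) = γ - 1 by ring] at this
    have hB' := beta_pos hβ1 hd
    rw [this]
    field_simp
  have hswap : ∫⁻ x in Set.Ioo (0 : ℝ) 1, ENNReal.ofReal ((β - 1) * (1 - x) ^ (β - 2)) *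
        ∫⁻ b, N (b * x) ∂(betaMeasure β (γ - β)) =
      ∫⁻ b in Set.Ioo (0 : ℝ) 1, ∫⁻ y in Set.Ioo 0 b,
        ENNReal.ofReal ((β - 1) * (beta β (γ - β))⁻¹) *
          ENNReal.ofReal ((b - y) ^ (β - 1 - 1) * (1 - b) ^ (γ - β - 1)) * N y := by
    have h1 : ∀ x, ENNReal.ofReal ((β - 1) * (1 - x) ^ (β - 2)) *
        ∫⁻ b, N (b * x) ∂(betaMeasure β (γ - β)) =
        ∫⁻ b in Set.Ioo (0 : ℝ) 1, ENNReal.ofReal ((β - 1) * (1 - x) ^ (β - 2)) *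
          (ENNReal.ofReal (beta β (γ - β))⁻¹ *
          (ENNReal.ofReal (b ^ (β - 1) * (1 - b) ^ (γ - β - 1)) * N (b * x))) := fun x => by
      rw [lintegral_betaMeasure hβ0 hd (by fun_prop),
        ← lintegral_const_mul' _ _ ENNReal.ofReal_ne_top,
        ← lintegral_const_mul' _ _ ENNReal.ofReal_ne_top]
    simp_rw [h1]
    rw [lintegral_lintegral_swap (by fun_prop)]
    refine setLIntegral_congr_fun measurableSet_Ioo fun b hb => ?_
    have hb0 := hb.1
    have hb1 : 0 < 1 - b := by linarith [hb.2]
    rw [setLIntegral_Ioo_comp_mul hb0, ← lintegral_const_mul' _ _ ENNReal.ofReal_ne_top]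
    refine setLIntegral_congr_fun measurableSet_Ioo fun x hx => ?_
    have hx1 : 0 < 1 - x := by linarith [hx.2]
    simp only [← mul_assoc]
    congr 1
    have e : b - b * x = b * (1 - x) := by ring
    rw [← ENNReal.ofReal_mul (by positivity), ← ENNReal.ofReal_mul (by positivity),
      ← ENNReal.ofReal_mul (by positivity), ← ENNReal.ofReal_mul (by positivity), e,
      Real.mul_rpow hb0.le hx1.le]
    congr 1
    have e2 : b ^ (β - 1) = b ^ (β - 1 - 1) * b := by
      rw [← Real.rpow_add_one hb0.ne']; ring_nf
    rw [e2, show β - 1 - 1 = β - 2 by ring]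
    ring
  rw [hswap]
  have hind : ∫⁻ b in Set.Ioo (0 : ℝ) 1, ∫⁻ y in Set.Ioo 0 b,
        ENNReal.ofReal ((β - 1) * (beta β (γ - β))⁻¹) *
          ENNReal.ofReal ((b - y) ^ (β - 1 - 1) * (1 - b) ^ (γ - β - 1)) * N y =
      ∫⁻ b in Set.Ioo (0 : ℝ) 1, ∫⁻ y in Set.Ioo (0 : ℝ) 1,
        {v : ℝ × ℝ | v.2 < v.1}.indicator (fun v : ℝ × ℝ =>
        ENNReal.ofReal ((β - 1) * (beta β (γ - β))⁻¹) *
          ENNReal.ofReal ((v.1 - v.2) ^ (β - 1 - 1) * (1 - v.1) ^ (γ - β - 1)) * N v.2) (b, y) := by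
    refine setLIntegral_congr_fun measurableSet_Ioo fun b hb => ?_
    rw [← lintegral_indicator measurableSet_Ioo, ← lintegral_indicator measurableSet_Ioo]
    congr 1
    ext y
    by_cases h1 : y ∈ Set.Ioo (0 : ℝ) b
    · have h2 : y ∈ Set.Ioo (0 : ℝ) 1 := ⟨h1.1, h1.2.trans hb.2⟩
      rw [Set.indicator_of_mem h1, Set.indicator_of_mem h2,
        Set.indicator_of_mem (by exact h1.2)]
    · rw [Set.indicator_of_notMem h1]
      by_cases h2 : y ∈ Set.Ioo (0 : ℝ) 1
      · rw [Set.indicator_of_mem h2, Set.indicator_of_notMem (by exact fun h => h1 ⟨h2.1, h⟩)]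
      · rw [Set.indicator_of_notMem h2]
  have hmeas : Measurable ({v : ℝ × ℝ | v.2 < v.1}.indicator (fun v : ℝ × ℝ =>
        ENNReal.ofReal ((β - 1) * (beta β (γ - β))⁻¹) *
          ENNReal.ofReal ((v.1 - v.2) ^ (β - 1 - 1) * (1 - v.1) ^ (γ - β - 1)) * N v.2)) :=
    Measurable.indicator (by fun_prop) (measurableSet_lt measurable_snd measurable_fst)
  rw [hind, lintegral_lintegral_swap (by exact hmeas.aemeasurable)]
  refine setLIntegral_congr_fun measurableSet_Ioo fun y hy => ?_
  have hy1 : 0 < 1 - y := by linarith [hy.2]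
  have hint : ∫⁻ b in Set.Ioo (0 : ℝ) 1, {v : ℝ × ℝ | v.2 < v.1}.indicator (fun v : ℝ × ℝ =>
        ENNReal.ofReal ((β - 1) * (beta β (γ - β))⁻¹) *
          ENNReal.ofReal ((v.1 - v.2) ^ (β - 1 - 1) * (1 - v.1) ^ (γ - β - 1)) * N v.2) (b, y) =
      ∫⁻ b in Set.Ioo y 1, ENNReal.ofReal ((β - 1) * (beta β (γ - β))⁻¹) *
          ENNReal.ofReal ((b - y) ^ (β - 1 - 1) * (1 - b) ^ (γ - β - 1)) * N y := by
    rw [← lintegral_indicator measurableSet_Ioo, ← lintegral_indicator measurableSet_Ioo]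
    congr 1
    ext b
    by_cases h1 : b ∈ Set.Ioo y 1
    · have h2 : b ∈ Set.Ioo (0 : ℝ) 1 := ⟨hy.1.trans h1.1, h1.2⟩
      rw [Set.indicator_of_mem h1, Set.indicator_of_mem h2,
        Set.indicator_of_mem (by exact h1.1)]
    · rw [Set.indicator_of_notMem h1]
      by_cases h2 : b ∈ Set.Ioo (0 : ℝ) 1
      · rw [Set.indicator_of_mem h2, Set.indicator_of_notMem (by exact fun h => h1 ⟨h, h2.2⟩)]
      · rw [Set.indicator_of_notMem h2]
  rw [hint, lintegral_mul_const _ (by fun_prop), lintegral_const_mul' _ _ ENNReal.ofReal_ne_top,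
    lintegral_sub_rpow_mul_one_sub_rpow hβ1 hd hy.2, ← ENNReal.ofReal_mul (by positivity), mul_left_comm,
    hrec, show β - 1 + (γ - β) - 1 = γ - 2 by ring, mul_comm (γ - 1)]

/-- Dilation by `β / γ` takes `Beta(1, β - 1)` below `Beta(1, γ - 1)` in the convex order. -/
lemma lintegral_map_mul_le_of_convexOn {β γ : ℝ} (hβ : 1 < β) (hβγ : β ≤ γ) {M : ℝ → ℝ}
    (hM : Continuous M) (hM0 : ∀ x, 0 ≤ M x) (hconv : ConvexOn ℝ (Set.Ici 0) M) :
    ∫⁻ x in Set.Ioo (0 : ℝ) 1, ENNReal.ofReal ((β - 1) * (1 - x) ^ (β - 2)) *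
        ENNReal.ofReal (M (β / γ * x)) ≤
      ∫⁻ x in Set.Ioo (0 : ℝ) 1, ENNReal.ofReal ((γ - 1) * (1 - x) ^ (γ - 2)) *
        ENNReal.ofReal (M x) := by
  have hβ0 : 0 < β := by linarith
  rcases hβγ.eq_or_lt with rfl | hlt
  · simp [div_self hβ0.ne']
  · rw [← lintegral_lintegral_betaMeasure hβ hlt (N := fun x => ENNReal.ofReal (M x))
      (by fun_prop)]
    refine setLIntegral_mono_ae' measurableSet_Ioo (Filter.Eventually.of_forall fun x hx => ?_)
    gcongr
    have := ofReal_map_mean_le_lintegral_betaMeasure hβ0 (sub_pos.2 hlt) hM hM0 hconv hx.1.le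
    rwa [add_sub_cancel] at this

end BetaDistribution

section DilatedMeans

lemma circleMean_dilation (f : ℂ → ℂ) (p c ρ : ℝ) :
    circleMean (fun z => f (c * z)) p ρ = circleMean f p (c * ρ) := by
  simp only [circleMean, Complex.ofReal_mul, mul_assoc]

lemma circleMean_nonneg (f : ℂ → ℂ) (p ρ : ℝ) : 0 ≤ circleMean f p ρ :=
  intervalIntegral.integral_nonneg (by positivity) fun _ _ => by positivity

lemma continuous_circleMean {f : ℂ → ℂ} (hf : Continuous f) {p : ℝ} (hp : 0 < p) :
    Continuous (circleMean f p) := by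
  refine intervalIntegral.continuous_parametric_intervalIntegral_of_continuous' ?_ _ _
  unfold Function.uncurry
  exact Continuous.rpow_const (by fun_prop) fun _ => Or.inr hp.le

lemma circleMean_mono_of_nonneg {f : ℂ → ℂ} (hf : Differentiable ℂ f) {p ρ₁ ρ₂ : ℝ} (hp : 0 < p)
    (hρ : 0 ≤ ρ₁) (h : ρ₁ ≤ ρ₂) : circleMean f p ρ₁ ≤ circleMean f p ρ₂ := by
  have hc := continuous_circleMean hf.continuous hp
  have h1 : ∀ ρ, Filter.Tendsto (fun δ => circleMean f p (ρ + δ)) (nhdsWithin 0 (Set.Ioi 0))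
      (nhds (circleMean f p ρ)) := fun ρ => by
    have : Continuous fun δ => circleMean f p (ρ + δ) := by fun_prop
    simpa using (this.tendsto 0).mono_left nhdsWithin_le_nhds
  refine le_of_tendsto_of_tendsto (h1 ρ₁) (h1 ρ₂) ?_
  filter_upwards [self_mem_nhdsWithin] with δ hδ
  exact circleMean_mono hf hp (add_pos_of_nonneg_of_pos hρ hδ) (by linarith)

lemma convexOn_Ici_circleMean_sqrt {f : ℂ → ℂ} (hf : Differentiable ℂ f) {q : ℝ} (hq : 2 ≤ q) :
    ConvexOn ℝ (Set.Ici 0) fun x => circleMean f q (Real.sqrt x) := by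
  have hc := continuous_circleMean hf.continuous (p := q) (by linarith)
  have h1 : ∀ x, Filter.Tendsto (fun δ => circleMean f q (Real.sqrt (x + δ)))
      (nhdsWithin 0 (Set.Ioi 0)) (nhds (circleMean f q (Real.sqrt x))) := fun x => by
    have : Continuous fun δ => circleMean f q (Real.sqrt (x + δ)) := by fun_prop
    simpa using (this.tendsto 0).mono_left nhdsWithin_le_nhds
  refine ⟨convex_Ici 0, fun x hx y hy a b ha hb hab => ?_⟩
  refine le_of_tendsto_of_tendsto (h1 _) (((h1 x).const_smul a).add ((h1 y).const_smul b)) ?_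
  filter_upwards [self_mem_nhdsWithin] with δ hδ
  have h := (convexOn_circleMean_sqrt hf hq).2 (x := x + δ)
    (Set.mem_Ioi.2 (add_pos_of_nonneg_of_pos hx (Set.mem_Ioi.1 hδ)))
    (y := y + δ) (Set.mem_Ioi.2 (add_pos_of_nonneg_of_pos hy (Set.mem_Ioi.1 hδ))) ha hb hab
  have e : a • (x + δ) + b • (y + δ) = a • x + b • y + δ := by
    simp only [smul_eq_mul]
    linear_combination δ * hab
  rwa [e] at h

lemma setLIntegral_Ioo_norm_rpow {f : ℂ → ℂ} (hf : ContinuousOn f (ball 0 1)) {p t : ℝ}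
    (hp : 0 < p) (ht : t ∈ Set.Ioo (0 : ℝ) 1) :
    ∫⁻ θ in Set.Ioo (-Real.pi) Real.pi,
        ENNReal.ofReal (‖f (t * Complex.exp (θ * Complex.I))‖ ^ p) =
      ENNReal.ofReal (circleMean f p t) := by
  have hmem : ∀ θ : ℝ, (t : ℂ) * Complex.exp (θ * Complex.I) ∈ ball (0 : ℂ) 1 := fun θ => by
    rw [mem_ball_zero_iff, norm_mul, Complex.norm_exp_ofReal_mul_I, mul_one, Complex.norm_real,
      Real.norm_of_nonneg ht.1.le]
    exact ht.2
  have hcont : Continuous fun θ : ℝ => ‖f (t * Complex.exp (θ * Complex.I))‖ ^ p :=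
    (hf.comp_continuous (by fun_prop) hmem).norm.rpow_const fun _ => Or.inr hp.le
  have hper : Function.Periodic (fun θ : ℝ => ‖f (t * Complex.exp (θ * Complex.I))‖ ^ p)
      (2 * Real.pi) := fun θ => by
    have : Complex.exp (((θ + 2 * Real.pi : ℝ) : ℂ) * Complex.I) =
        Complex.exp (θ * Complex.I) := by
      push_cast
      rw [add_mul, Complex.exp_add, Complex.exp_two_pi_mul_I, mul_one]
    simp only [this]
  have h2 := hper.intervalIntegral_add_eq (-Real.pi) 0
  rw [zero_add, show -Real.pi + 2 * Real.pi = Real.pi by ring] at h2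
  rw [circleMean, ← h2, intervalIntegral.integral_of_le (by linarith [Real.pi_pos]),
    integral_Ioc_eq_integral_Ioo, ofReal_integral_eq_lintegral_ofReal
      ((hcont.integrableOn_Icc (a := -Real.pi) (b := Real.pi)).mono_set Set.Ioo_subset_Icc_self)
      (Filter.Eventually.of_forall fun _ => by positivity)]

lemma lintegral_bergmanMeasure_eq_circleMean {f : ℂ → ℂ} (hm : Measurable f)
    (hf : ContinuousOn f (ball 0 1)) {p : ℝ} (hp : 0 < p) (α : ℝ) :
    ∫⁻ z, ENNReal.ofReal (‖f z‖ ^ p) ∂(bergmanMeasure α) =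
      ∫⁻ t in Set.Ioo (0 : ℝ) 1, ENNReal.ofReal t *
        (ENNReal.ofReal ((α - 1) * (1 - t ^ 2) ^ (α - 2) / Real.pi) *
          ENNReal.ofReal (circleMean f p t)) := by
  rw [bergmanMeasure, lintegral_radial_withDensity
    (w := fun t => (α - 1) * (1 - t ^ 2) ^ (α - 2) / Real.pi) (by fun_prop) (by fun_prop)]
  refine setLIntegral_congr_fun measurableSet_Ioo fun t ht => ?_
  simp only [setLIntegral_Ioo_norm_rpow hf hp ht]

lemma setLIntegral_Ioo_comp_sq (g : ℝ → ENNReal) :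
    ∫⁻ x in Set.Ioo (0 : ℝ) 1, g x =
      ∫⁻ t in Set.Ioo (0 : ℝ) 1, ENNReal.ofReal (2 * t) * g (t ^ 2) := by
  have himg : (fun t : ℝ => t ^ 2) '' Set.Ioo 0 1 = Set.Ioo 0 1 := by
    ext x
    constructor
    · rintro ⟨t, ht, rfl⟩
      exact ⟨pow_pos ht.1 2, pow_lt_one₀ ht.1.le ht.2 two_ne_zero⟩
    · intro hx
      exact ⟨Real.sqrt x, ⟨Real.sqrt_pos.2 hx.1, by
        rw [Real.sqrt_lt' one_pos]; simpa using hx.2⟩, Real.sq_sqrt hx.1.le⟩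
  conv_lhs => rw [← himg]
  rw [lintegral_image_eq_lintegral_abs_deriv_mul measurableSet_Ioo (f' := fun t => 2 * t)
    (fun x _ => by simpa using (hasDerivAt_pow 2 x).hasDerivWithinAt)
    (fun x hx y hy h => by
      have := (sq_eq_sq₀ hx.1.le hy.1.le).1 h
      exact this)]
  refine setLIntegral_congr_fun measurableSet_Ioo fun t ht => ?_
  have := ht.1
  simp only [abs_of_pos (show 0 < 2 * t by positivity)]

lemma lintegral_bergmanMeasure_eq_circleMean_sqrt {f : ℂ → ℂ} (hf : Continuous f) {p : ℝ}
    (hp : 0 < p) {α : ℝ} (hα : 1 < α) :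
    ∫⁻ z, ENNReal.ofReal (‖f z‖ ^ p) ∂(bergmanMeasure α) =
      ENNReal.ofReal (1 / (2 * Real.pi)) *
      ∫⁻ x in Set.Ioo (0 : ℝ) 1, ENNReal.ofReal ((α - 1) * (1 - x) ^ (α - 2)) *
          ENNReal.ofReal (circleMean f p (Real.sqrt x)) := by
  rw [lintegral_bergmanMeasure_eq_circleMean hf.measurable hf.continuousOn hp,
    setLIntegral_Ioo_comp_sq fun x => ENNReal.ofReal ((α - 1) * (1 - x) ^ (α - 2)) *
      ENNReal.ofReal (circleMean f p (Real.sqrt x)), ← lintegral_const_mul' _ _ ENNReal.ofReal_ne_top]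
  refine setLIntegral_congr_fun measurableSet_Ioo fun t ht => ?_
  have h0 := ht.1
  have h1 : 0 < 1 - t ^ 2 := by nlinarith [ht.2]
  have h2 : 0 < α - 1 := by linarith
  have hpi := Real.pi_pos
  simp only [Real.sqrt_sq h0.le, ← mul_assoc]
  congr 1
  rw [← ENNReal.ofReal_mul h0.le, ← ENNReal.ofReal_mul (by positivity),
    ← ENNReal.ofReal_mul (by positivity)]
  congr 1
  field_simp

/-- Dilation by at most `√(β / γ)` contracts `A_γ^q` into `A_β^q`, for entire functions. -/
theorem lintegral_dilation_le {f : ℂ → ℂ} (hf : Differentiable ℂ f) {β γ q r : ℝ} (hβ : 1 < β)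
    (hβγ : β ≤ γ) (hq : 2 ≤ q) (hr0 : 0 ≤ r) (hr : r ^ 2 ≤ β / γ) :
    ∫⁻ z, ENNReal.ofReal (‖f (r * z)‖ ^ q) ∂(bergmanMeasure β) ≤
      ∫⁻ z, ENNReal.ofReal (‖f z‖ ^ q) ∂(bergmanMeasure γ) := by
  have hq0 : 0 < q := by linarith
  have hfc := hf.continuous
  rw [lintegral_bergmanMeasure_eq_circleMean_sqrt (f := fun z => f (r * z)) (by fun_prop) hq0 hβ,
    lintegral_bergmanMeasure_eq_circleMean_sqrt hf.continuous hq0 (hβ.trans_le hβγ)]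
  gcongr _ * ?_
  have hc := continuous_circleMean hfc hq0
  refine le_trans ?_ (lintegral_map_mul_le_of_convexOn hβ hβγ
    (M := fun x => circleMean f q (Real.sqrt x)) (by fun_prop) (fun _ => circleMean_nonneg _ _ _)
    (convexOn_Ici_circleMean_sqrt hf hq))
  refine lintegral_mono fun x => ?_
  gcongr _ * ENNReal.ofReal ?_
  rw [circleMean_dilation]
  refine circleMean_mono_of_nonneg hf hq0 (by positivity) ?_
  rw [Real.sqrt_mul (le_trans (sq_nonneg r) hr)]
  gcongr
  exact Real.le_sqrt_of_sq_le hr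

end DilatedMeans

section Approximation

lemma isFiniteMeasure_bergmanMeasure {α : ℝ} (hα : 1 < α) :
    IsFiniteMeasure (bergmanMeasure α) := by
  have h := lintegral_bergmanMeasure_eq_circleMean_sqrt (f := fun _ => 1) continuous_const
    one_pos hα
  have hc : ∀ ρ : ℝ, circleMean (fun _ => 1) 1 ρ = 2 * Real.pi := fun ρ => by simp [circleMean]
  simp only [hc, norm_one, Real.one_rpow, ENNReal.ofReal_one, lintegral_one] at h
  refine ⟨?_⟩
  rw [h, lintegral_mul_const' _ _ ENNReal.ofReal_ne_top]
  refine ENNReal.mul_lt_top ENNReal.ofReal_lt_top (ENNReal.mul_lt_top ?_ ENNReal.ofReal_lt_top)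
  have hα1 : 0 < α - 1 := by linarith
  have h2 := lintegral_rpow_mul_one_sub_rpow one_pos hα1
  simp only [sub_self, Real.rpow_zero, one_mul, show α - 1 - 1 = α - 2 by ring] at h2
  simp only [ENNReal.ofReal_mul hα1.le]
  rw [lintegral_const_mul' _ _ ENNReal.ofReal_ne_top, h2]
  exact ENNReal.mul_lt_top ENNReal.ofReal_lt_top ENNReal.ofReal_lt_top

lemma ae_bergmanMeasure_mem_ball (α : ℝ) : ∀ᵐ z ∂(bergmanMeasure α), z ∈ ball (0 : ℂ) 1 :=
  (withDensity_absolutelyContinuous _ _).ae_le (ae_restrict_mem measurableSet_ball)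

/-- Dilations of a function analytic on the disk are boundedly approximated by polynomials. -/
lemma exists_entire_approx {f : ℂ → ℂ} (hf : AnalyticOnNhd ℂ f (ball 0 1)) {t : ℝ} (ht0 : 0 < t)
    (ht1 : t < 1) :
    ∃ (P : ℕ → ℂ → ℂ) (C : ℝ), (∀ n, Differentiable ℂ (P n)) ∧
      (∀ n, ∀ z ∈ closedBall (0 : ℂ) 1, ‖P n z‖ ≤ C) ∧
      ∀ z ∈ closedBall (0 : ℂ) 1,
        Filter.Tendsto (fun n => P n z) Filter.atTop (nhds (f (t * z))) := by
  obtain ⟨a, hta, ha1⟩ := exists_between ht1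
  obtain ⟨b, hab, hb1⟩ := exists_between ha1
  have ha0 : 0 < a := ht0.trans hta
  have hb0 : 0 < b := ha0.trans hab
  lift a to NNReal using ha0.le
  lift b to NNReal using hb0.le
  have hd : DifferentiableOn ℂ f (closedBall 0 b) :=
    hf.differentiableOn.mono (closedBall_subset_ball hb1)
  have hs := hd.hasFPowerSeriesOnBall (by exact_mod_cast hb0)
  have hu := hs.tendstoUniformlyOn' (r' := a) (by exact_mod_cast hab)
  set S := cauchyPowerSeries f 0 b
  have hmem : ∀ z ∈ closedBall (0 : ℂ) 1, (t : ℂ) * z ∈ ball (0 : ℂ) a := fun z hz => by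
    rw [mem_closedBall_zero_iff] at hz
    rw [mem_ball_zero_iff, norm_mul, Complex.norm_real, Real.norm_of_nonneg ht0.le]
    nlinarith
  have hfc : ContinuousOn (fun z => f (t * z)) (closedBall (0 : ℂ) 1) :=
    hf.continuousOn.comp (by fun_prop) fun z hz => ball_subset_ball ha1.le (hmem z hz)
  obtain ⟨C, hC⟩ := (isCompact_closedBall (0 : ℂ) 1).exists_bound_of_continuousOn hfc
  obtain ⟨N, hN⟩ := Filter.eventually_atTop.1 (Metric.tendstoUniformlyOn_iff.1 hu 1 one_pos)
  refine ⟨fun n z => S.partialSum (n + N) (t * z - 0), C + 1, fun n => ?_, fun n z hz => ?_,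
    fun z hz => ?_⟩
  · simp only [FormalMultilinearSeries.partialSum,
      FormalMultilinearSeries.apply_eq_pow_smul_coeff]
    fun_prop
  · have h1 := hN (n + N) (by omega) _ (hmem z hz)
    rw [dist_comm, dist_eq_norm] at h1
    have h2 := hC z hz
    have h3 := norm_le_norm_add_norm_sub' (S.partialSum (n + N) (t * z - 0)) (f (t * z))
    linarith
  · exact (hu.tendsto_at (hmem z hz)).comp (Filter.tendsto_add_atTop_nat N)

lemma tendsto_lintegral_norm_rpow {g : ℂ → ℂ} {P : ℕ → ℂ → ℂ} {C : ℝ}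
    (hP : ∀ n, Continuous (P n)) (hC : ∀ n, ∀ z ∈ closedBall (0 : ℂ) 1, ‖P n z‖ ≤ C)
    (hlim : ∀ z ∈ closedBall (0 : ℂ) 1, Filter.Tendsto (fun n => P n z) Filter.atTop (nhds (g z)))
    {p α : ℝ} (hp : 0 < p) (hα : 1 < α) :
    Filter.Tendsto (fun n => ∫⁻ z, ENNReal.ofReal (‖P n z‖ ^ p) ∂(bergmanMeasure α)) Filter.atTop
      (nhds (∫⁻ z, ENNReal.ofReal (‖g z‖ ^ p) ∂(bergmanMeasure α))) := by
  have := isFiniteMeasure_bergmanMeasure hα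
  refine tendsto_lintegral_of_dominated_convergence (fun _ => ENNReal.ofReal (C ^ p))
    (fun n => ?_) (fun n => ?_) ?_ ?_
  · have := (hP n).measurable
    fun_prop
  · filter_upwards [ae_bergmanMeasure_mem_ball α] with z hz
    exact ENNReal.ofReal_le_ofReal
      (Real.rpow_le_rpow (norm_nonneg _) (hC n z (ball_subset_closedBall hz)) hp.le)
  · rw [lintegral_const]
    exact ENNReal.mul_ne_top ENNReal.ofReal_ne_top (measure_ne_top _ _)
  · filter_upwards [ae_bergmanMeasure_mem_ball α] with z hz
    exact ENNReal.tendsto_ofReal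
      ((hlim z (ball_subset_closedBall hz)).norm.rpow_const (Or.inr hp.le))

lemma circleMean_le_of_analyticOnNhd {f : ℂ → ℂ} (hf : AnalyticOnNhd ℂ f (ball 0 1)) {p t ρ : ℝ}
    (hp : 0 < p) (ht0 : 0 ≤ t) (ht1 : t ≤ 1) (hρ0 : 0 < ρ) (hρ1 : ρ < 1) :
    circleMean f p (ρ * t) ≤ circleMean f p ρ := by
  obtain ⟨P, C, hP, hC, hlim⟩ := exists_entire_approx hf hρ0 hρ1
  have key : ∀ s : ℝ, 0 ≤ s → s ≤ 1 → Filter.Tendsto (fun n => circleMean (P n) p s) Filter.atTop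
      (nhds (circleMean f p (ρ * s))) := fun s hs0 hs1 => by
    have hmem : ∀ θ : ℝ, (s : ℂ) * Complex.exp (θ * Complex.I) ∈ closedBall (0 : ℂ) 1 :=
      fun θ => by
        rw [mem_closedBall_zero_iff, norm_mul, Complex.norm_exp_ofReal_mul_I, mul_one,
          Complex.norm_real, Real.norm_of_nonneg hs0]
        exact hs1
    rw [← circleMean_dilation]
    refine intervalIntegral.tendsto_integral_filter_of_dominated_convergence (fun _ => C ^ p)
      (Filter.Eventually.of_forall fun n => ?_) (Filter.Eventually.of_forall fun n => ?_)
      (by simp) ?_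
    · have := (hP n).continuous
      exact (Continuous.rpow_const (by fun_prop) fun _ => Or.inr hp.le).aestronglyMeasurable
    · refine Filter.Eventually.of_forall fun θ _ => ?_
      rw [Real.norm_of_nonneg (by positivity)]
      exact Real.rpow_le_rpow (norm_nonneg _) (hC n _ (hmem θ)) hp.le
    · refine Filter.Eventually.of_forall fun θ _ => ?_
      exact (hlim _ (hmem θ)).norm.rpow_const (Or.inr hp.le)
  have h1 := key 1 zero_le_one le_rfl
  rw [mul_one] at h1
  exact le_of_tendsto_of_tendsto' (key t ht0 ht1) h1
    fun n => circleMean_mono_of_nonneg (hP n) hp ht0 ht1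

lemma lintegral_dilation_le_self {f : ℂ → ℂ} (hm : Measurable f)
    (hf : AnalyticOnNhd ℂ f (ball 0 1)) {p t α : ℝ} (hp : 0 < p) (ht0 : 0 < t) (ht1 : t < 1) :
    ∫⁻ z, ENNReal.ofReal (‖f (t * z)‖ ^ p) ∂(bergmanMeasure α) ≤
      ∫⁻ z, ENNReal.ofReal (‖f z‖ ^ p) ∂(bergmanMeasure α) := by
  have hmaps : Set.MapsTo (fun z : ℂ => (t : ℂ) * z) (ball 0 1) (ball 0 1) := fun z hz => by
    rw [mem_ball_zero_iff] at hz ⊢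
    rw [norm_mul, Complex.norm_real, Real.norm_of_nonneg ht0.le]
    nlinarith [norm_nonneg z]
  rw [lintegral_bergmanMeasure_eq_circleMean (f := fun z => f (t * z)) (by fun_prop)
    (hf.continuousOn.comp (by fun_prop) hmaps) hp,
    lintegral_bergmanMeasure_eq_circleMean hm hf.continuousOn hp]
  refine setLIntegral_mono_ae' measurableSet_Ioo (Filter.Eventually.of_forall fun ρ hρ => ?_)
  gcongr _ * (_ * ENNReal.ofReal ?_)
  rw [circleMean_dilation, mul_comm]
  exact circleMean_le_of_analyticOnNhd hf hp ht0.le ht1.le hρ.1 hρ.2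

/-- The hypercontractive inequality in integral form, for functions measurable on the plane. -/
lemma lintegral_hypercontractive {f : ℂ → ℂ} (hm : Measurable f)
    (hf : AnalyticOnNhd ℂ f (ball 0 1)) {α β p q r : ℝ} (hα : 1 < α) (hβ : 1 < β) (hp : 0 < p)
    (hpq : p ≤ q) (hq2 : 2 ≤ q) (hβpαq : β * p ≤ α * q) (hr0 : 0 ≤ r) (hr1 : r < 1)
    (hr : r ^ 2 ≤ β * p / (α * q)) :
    ∫⁻ z, ENNReal.ofReal (‖f (r * z)‖ ^ q) ∂(bergmanMeasure β) ≤
      (∫⁻ z, ENNReal.ofReal (‖f z‖ ^ p) ∂(bergmanMeasure α)) ^ (q / p) := by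
  have hq0 : 0 < q := by linarith
  have hs : 1 ≤ q / p := (one_le_div hp).2 hpq
  have hγ : β ≤ α * (q / p) := by
    rw [← mul_div_assoc, le_div_iff₀ hp]
    exact hβpαq
  have hr' : r ^ 2 ≤ β / (α * (q / p)) := by
    convert hr using 1
    field_simp
  have hdil : ∀ t : ℝ, 0 < t → t < 1 →
      ∫⁻ z, ENNReal.ofReal (‖f (t * (r * z))‖ ^ q) ∂(bergmanMeasure β) ≤
        (∫⁻ z, ENNReal.ofReal (‖f z‖ ^ p) ∂(bergmanMeasure α)) ^ (q / p) := fun t ht0 ht1 => by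
    obtain ⟨P, C, hP, hC, hlim⟩ := exists_entire_approx hf ht0 ht1
    have hPc := fun n => (hP n).continuous
    have hmem : ∀ z ∈ closedBall (0 : ℂ) 1, (r : ℂ) * z ∈ closedBall (0 : ℂ) 1 := fun z hz => by
      rw [mem_closedBall_zero_iff] at hz ⊢
      rw [norm_mul, Complex.norm_real, Real.norm_of_nonneg hr0]
      exact mul_le_one₀ hr1.le (norm_nonneg z) hz
    have h1 := tendsto_lintegral_norm_rpow (g := fun z => f (t * (r * z)))
      (P := fun n z => P n (r * z)) (fun n => (hPc n).comp (by fun_prop))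
      (fun n z hz => hC n _ (hmem z hz)) (fun z hz => hlim _ (hmem z hz)) hq0 hβ
    have h2 := tendsto_lintegral_norm_rpow hPc hC hlim hp hα
    refine (le_of_tendsto_of_tendsto' h1 (h2.ennrpow_const (q / p)) fun n => ?_).trans ?_
    · refine (lintegral_dilation_le (hP n) hβ hγ hq2 hr0 hr').trans ?_
      have := lintegral_bergmanMeasure_mul_le (hP n) hp hα hs
      rwa [mul_div_cancel₀ _ hp.ne'] at this
    · exact ENNReal.rpow_le_rpow (lintegral_dilation_le_self hm hf hp ht0 ht1) (by positivity)
  let t : ℕ → ℝ := fun n => 1 - 1 / ((n : ℝ) + 2)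
  have htlim : Filter.Tendsto t Filter.atTop (nhds 1) := by
    have h := tendsto_one_div_add_atTop_nhds_zero_nat (𝕜 := ℝ)
    have h2 := (Filter.tendsto_add_atTop_iff_nat 1).2 h
    have h3 := h2.const_sub 1
    simp only [sub_zero] at h3
    refine h3.congr fun n => ?_
    simp only [t]
    push_cast
    ring_nf
  have hlim : ∀ z ∈ ball (0 : ℂ) 1, Filter.Tendsto
      (fun n => ENNReal.ofReal (‖f ((t n : ℂ) * (r * z))‖ ^ q)) Filter.atTop
      (nhds (ENNReal.ofReal (‖f (r * z)‖ ^ q))) := fun z hz => by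
    rw [mem_ball_zero_iff] at hz
    have hz' : (r : ℂ) * z ∈ ball (0 : ℂ) 1 := by
      rw [mem_ball_zero_iff, norm_mul, Complex.norm_real, Real.norm_of_nonneg hr0]
      nlinarith [norm_nonneg z]
    have ht : Filter.Tendsto (fun n => (t n : ℂ) * (r * z)) Filter.atTop (nhds (r * z)) := by
      simpa using ((Complex.continuous_ofReal.tendsto 1).comp htlim).mul_const ((r : ℂ) * z)
    exact ENNReal.tendsto_ofReal
      ((((hf _ hz').continuousAt.tendsto).comp ht).norm.rpow_const (Or.inr hq0.le))
  calc ∫⁻ z, ENNReal.ofReal (‖f (r * z)‖ ^ q) ∂(bergmanMeasure β)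
      = ∫⁻ z, Filter.liminf (fun n => ENNReal.ofReal (‖f ((t n : ℂ) * (r * z))‖ ^ q))
          Filter.atTop ∂(bergmanMeasure β) := by
        refine lintegral_congr_ae ?_
        filter_upwards [ae_bergmanMeasure_mem_ball β] with z hz
        exact (hlim z hz).liminf_eq.symm
    _ ≤ Filter.liminf (fun n => ∫⁻ z, ENNReal.ofReal (‖f ((t n : ℂ) * (r * z))‖ ^ q)
          ∂(bergmanMeasure β)) Filter.atTop := lintegral_liminf_le fun n => by fun_prop
    _ ≤ _ := by
        refine Filter.liminf_le_of_frequently_le' (Filter.Frequently.of_forall fun n => ?_)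
        have hn : (0 : ℝ) < (n : ℝ) + 2 := by positivity
        refine hdil (t n) ?_ ?_
        · have : 1 / ((n : ℝ) + 2) < 1 := by
            rw [div_lt_one hn]
            linarith [(Nat.cast_nonneg n : (0 : ℝ) ≤ n)]
          simpa only [t, sub_pos] using this
        · have : 0 < 1 / ((n : ℝ) + 2) := by positivity
          simp only [t]
          linarith

end Approximation

/-- Sufficiency in Theorem 1.1: for `1 < α, β < ∞`, `0 < p ≤ q < ∞`, `q ≥ 2`,
`βp ≤ αq` and `0 ≤ r < 1` with `r² ≤ βp/(αq)`, the dilation `T_r f(z) = f(rz)`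
satisfies `‖T_r f‖_{A_β^q} ≤ ‖f‖_{A_α^p}` for every analytic `f` on the disk. -/
theorem hypercontractive_sufficiency
    (α β p q : ℝ) (hα : 1 < α) (hβ : 1 < β) (hp : 0 < p) (hpq : p ≤ q)
    (hq2 : 2 ≤ q) (hβpαq : β * p ≤ α * q)
    (r : ℝ) (hr0 : 0 ≤ r) (hr1 : r < 1) (hr : r ^ 2 ≤ β * p / (α * q))
    (f : ℂ → ℂ) (hf : AnalyticOnNhd ℂ f (ball (0 : ℂ) 1)) :
    (∫⁻ z, ENNReal.ofReal (‖f ((r : ℂ) * z)‖ ^ q) ∂(bergmanMeasure β)) ^ (1 / q) ≤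
      (∫⁻ z, ENNReal.ofReal (‖f z‖ ^ p) ∂(bergmanMeasure α)) ^ (1 / p) := by
  have hq0 : 0 < q := by linarith
  set g : ℂ → ℂ := (ball (0 : ℂ) 1).indicator f with hg
  have hgf : ∀ z ∈ ball (0 : ℂ) 1, g z = f z := fun z hz => Set.indicator_of_mem hz f
  have hgm : Measurable g := by
    classical
    rw [hg, ← Set.piecewise_eq_indicator]
    exact hf.continuousOn.measurable_piecewise continuousOn_const measurableSet_ball
  have hga : AnalyticOnNhd ℂ g (ball 0 1) := hf.congr isOpen_ball fun z hz => (hgf z hz).symm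
  have e1 : ∫⁻ z, ENNReal.ofReal (‖f ((r : ℂ) * z)‖ ^ q) ∂(bergmanMeasure β) =
      ∫⁻ z, ENNReal.ofReal (‖g ((r : ℂ) * z)‖ ^ q) ∂(bergmanMeasure β) := by
    refine lintegral_congr_ae ?_
    filter_upwards [ae_bergmanMeasure_mem_ball β] with z hz
    rw [mem_ball_zero_iff] at hz
    rw [hgf]
    rw [mem_ball_zero_iff, norm_mul, Complex.norm_real, Real.norm_of_nonneg hr0]
    nlinarith [norm_nonneg z]
  have e2 : ∫⁻ z, ENNReal.ofReal (‖f z‖ ^ p) ∂(bergmanMeasure α) =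
      ∫⁻ z, ENNReal.ofReal (‖g z‖ ^ p) ∂(bergmanMeasure α) := by
    refine lintegral_congr_ae ?_
    filter_upwards [ae_bergmanMeasure_mem_ball α] with z hz
    rw [hgf z hz]
  rw [e1, e2]
  refine (ENNReal.rpow_le_rpow (lintegral_hypercontractive hgm hga hα hβ hp hpq hq2 hβpαq hr0 hr1
    hr) (by positivity)).trans_eq ?_
  rw [← ENNReal.rpow_mul]
  congr 1
  field_simp
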